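/- Let θ0 ∈ Θ_M°. There exist a neighborhood U ⊂ Θ_M° of θ0 and a measurable function η̇ : ℝ → [0,∞) with ∫_ℝ η̇(x)² f(x;θ0) dx < ∞, such that for all θ', θ'' ∈ U and all x ∈ ℝ, |log f(x;θ') − log f(x;θ'')| ≤ η̇(x)·‖θ' − θ''‖, where ‖·‖ is the Euclidean norm on ℝ⁴. -/

import Mathlib

open MeasureTheory Filter

noncomputable section

def ThetaInt : Set (Fin 4 → ℝ) :=
  {θ | 0 < θ 1 ∧ θ 2 ∈ Set.Ioo (0:ℝ) 2 ∧ θ 3 ∈ Set.Ioo (-1:ℝ) 1}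

/-- Cumulant (log characteristic function) of the continuous (M₀) parameterization,
with `θ = (μ, σ, α, β)`. -/
def psiM (θ : Fin 4 → ℝ) (t : ℝ) : ℂ :=
  if θ 2 = 1 then
    ((-(|θ 1 * t|) : ℝ) : ℂ)
      - Complex.I * (((2 * θ 3 / Real.pi) * (θ 1 * t) * Real.log |θ 1 * t| : ℝ) : ℂ)
      + Complex.I * ((θ 0 * t : ℝ) : ℂ)
  else
    ((-(|θ 1 * t| ^ (θ 2)) : ℝ) : ℂ) *
        (1 + Complex.I * ((θ 3 * Real.sign t * Real.tan (Real.pi * θ 2 / 2)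
            * (|θ 1 * t| ^ (1 - θ 2) - 1) : ℝ) : ℂ))
      + Complex.I * ((θ 0 * t : ℝ) : ℂ)

/-- Characteristic function of the (M₀) parameterization. -/
def phiM (θ : Fin 4 → ℝ) (t : ℝ) : ℂ := Complex.exp (psiM θ t)

/-- Stable density in the (M₀) parameterization, via Fourier inversion. -/
def fM (θ : Fin 4 → ℝ) (x : ℝ) : ℝ :=
  (1 / (2 * Real.pi)) *
    (∫ t : ℝ, Complex.exp (-Complex.I * (t : ℂ) * (x : ℂ)) * phiM θ t).re

/-- Partial derivative of the density in parameter `i`. -/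
def fP (i : Fin 4) (θ : Fin 4 → ℝ) (x : ℝ) : ℝ :=
  deriv (fun s => fM (Function.update θ i s) x) (θ i)

/-- Second partial derivative of the density in parameters `i`, `j`. -/
def fPP (i j : Fin 4) (θ : Fin 4 → ℝ) (x : ℝ) : ℝ :=
  deriv (fun s => fP i (Function.update θ j s) x) (θ j)

/-- Derivative of the density in `x`. -/
def fX (θ : Fin 4 → ℝ) (x : ℝ) : ℝ := deriv (fun y => fM θ y) x

/-- Mixed derivative `∂²f/∂x∂θᵢ`. -/
def fPX (i : Fin 4) (θ : Fin 4 → ℝ) (x : ℝ) : ℝ := deriv (fun y => fP i θ y) x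

/-- Score functions. -/
def ellP (i : Fin 4) (θ : Fin 4 → ℝ) (x : ℝ) : ℝ := fP i θ x / fM θ x

/-- Derivative of the score in `x`. -/
def ellPX (i : Fin 4) (θ : Fin 4 → ℝ) (x : ℝ) : ℝ := deriv (fun y => ellP i θ y) x

/-- Derivative of the score `ℓ_{θᵢ}` in the parameter `θⱼ`. -/
def ellPP (i j : Fin 4) (θ : Fin 4 → ℝ) (x : ℝ) : ℝ :=
  deriv (fun s => ellP i (Function.update θ j s) x) (θ j)

/-- `h = O(r)` as `|x| → ∞`. -/
def IsBigOAtInfty (h r : ℝ → ℝ) : Prop :=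
  ∃ c > 0, ∃ M > 0, ∀ x : ℝ, M ≤ |x| → |h x| ≤ c * r x


end

noncomputable section
open MeasureTheory Filter

def KK (k : ℝ → ℂ) : Prop :=
  Integrable k ∧ ∀ x : ℝ, 0 ≤ (∫ t : ℝ, Complex.exp (-Complex.I * (t : ℂ) * (x : ℂ)) * k t).re

lemma norm_kern (t x : ℝ) : ‖Complex.exp (-Complex.I * (t : ℂ) * (x : ℂ))‖ = 1 := by
  rw [Complex.norm_exp]; simp

lemma kern_cont (x : ℝ) : Continuous fun t : ℝ => Complex.exp (-Complex.I * (t : ℂ) * (x : ℂ)) := by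
  fun_prop

lemma kern_int {k : ℝ → ℂ} (hk : Integrable k) (x : ℝ) :
    Integrable fun t : ℝ => Complex.exp (-Complex.I * (t : ℂ) * (x : ℂ)) * k t := by
  refine hk.bdd_mul (c := 1) (kern_cont x).aestronglyMeasurable ?_
  exact Eventually.of_forall fun t => (norm_kern t x).le

def AA (ψ : ℝ → ℂ) : Prop :=
  Measurable ψ ∧ (ψ 0).im = 0 ∧ (∀ t, ‖ψ t‖ ≤ (ψ 0).re) ∧ ∀ k, KK k → KK (fun t => ψ t * k t)

lemma AA_exp (y : ℝ) : AA fun t : ℝ => Complex.exp (Complex.I * (y : ℂ) * (t : ℂ)) := by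
  have hn : ∀ t : ℝ, ‖Complex.exp (Complex.I * (y : ℂ) * (t : ℂ))‖ = 1 := by
    intro t; rw [Complex.norm_exp]; simp
  refine ⟨by fun_prop, by simp, ?_, ?_⟩
  · intro t; rw [hn]; simp
  · intro k hk
    refine ⟨hk.1.bdd_mul (c := 1) (by fun_prop) (Eventually.of_forall fun t => (hn t).le), ?_⟩
    intro x
    have := hk.2 (x - y)
    convert this using 4
    rw [← mul_assoc, ← Complex.exp_add]
    congr 2
    push_cast; ring

lemma AA_const {c : ℝ} (hc : 0 ≤ c) : AA fun _ => (c : ℂ) := by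
  refine ⟨by fun_prop, by simp, ?_, ?_⟩
  · intro t; simp [abs_of_nonneg hc]
  · intro k hk
    refine ⟨hk.1.const_mul _, fun x => ?_⟩
    have : ∀ t : ℝ, Complex.exp (-Complex.I * (t : ℂ) * (x : ℂ)) * ((c : ℂ) * k t)
      = (c : ℂ) * (Complex.exp (-Complex.I * (t : ℂ) * (x : ℂ)) * k t) := fun t => by ring
    simp_rw [this]
    rw [integral_const_mul, Complex.re_ofReal_mul]
    exact mul_nonneg hc (hk.2 x)

lemma AA_add {f g : ℝ → ℂ} (hf : AA f) (hg : AA g) : AA fun t => f t + g t := by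
  refine ⟨hf.1.add hg.1, by simp [hf.2.1, hg.2.1], ?_, ?_⟩
  · intro t
    refine (norm_add_le _ _).trans ?_
    simpa using add_le_add (hf.2.2.1 t) (hg.2.2.1 t)
  · intro k hk
    have h1 := hf.2.2.2 k hk
    have h2 := hg.2.2.2 k hk
    simp_rw [add_mul]
    refine ⟨h1.1.add h2.1, fun x => ?_⟩
    simp_rw [mul_add]
    rw [integral_add (kern_int h1.1 x) (kern_int h2.1 x), Complex.add_re]
    exact add_nonneg (h1.2 x) (h2.2 x)

lemma AA_mul {f g : ℝ → ℂ} (hf : AA f) (hg : AA g) : AA fun t => f t * g t := by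
  refine ⟨hf.1.mul hg.1, by simp [hf.2.1, hg.2.1], ?_, ?_⟩
  · intro t
    rw [norm_mul, Complex.mul_re, hf.2.1]
    simp only [zero_mul, sub_zero]
    exact mul_le_mul (hf.2.2.1 t) (hg.2.2.1 t) (norm_nonneg _) ((norm_nonneg _).trans (hf.2.2.1 t))
  · intro k hk
    simp_rw [mul_assoc]
    exact hf.2.2.2 _ (hg.2.2.2 k hk)

lemma KK_lim {k : ℕ → ℝ → ℂ} {k' : ℝ → ℂ} (bd : ℝ → ℝ) (hbd : Integrable bd)
    (hk : ∀ n, KK (k n)) (hb : ∀ n t, ‖k n t‖ ≤ bd t)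
    (hl : ∀ t, Tendsto (fun n => k n t) atTop (nhds (k' t))) : KK k' := by
  have hm : AEStronglyMeasurable k' :=
    aestronglyMeasurable_of_tendsto_ae atTop (fun n => (hk n).1.aestronglyMeasurable)
      (Eventually.of_forall hl)
  have hb' : ∀ t, ‖k' t‖ ≤ bd t := fun t =>
    le_of_tendsto (hl t).norm (Eventually.of_forall fun n => hb n t)
  refine ⟨hbd.mono' hm (Eventually.of_forall hb'), fun x => ?_⟩
  have : Tendsto (fun n => ∫ t : ℝ, Complex.exp (-Complex.I * (t : ℂ) * (x : ℂ)) * k n t) atTop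
      (nhds (∫ t : ℝ, Complex.exp (-Complex.I * (t : ℂ) * (x : ℂ)) * k' t)) := by
    refine tendsto_integral_of_dominated_convergence bd
      (fun n => (kern_int (hk n).1 x).aestronglyMeasurable) hbd ?_ ?_
    · intro n; refine Eventually.of_forall fun t => ?_
      rw [norm_mul, norm_kern, one_mul]; exact hb n t
    · exact Eventually.of_forall fun t => (hl t).const_mul _
  exact ge_of_tendsto ((Complex.continuous_re.tendsto _).comp this)
    (Eventually.of_forall fun n => (hk n).2 x)

lemma AA_lim {f : ℕ → ℝ → ℂ} {g : ℝ → ℂ} (hf : ∀ n, AA (f n))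
    (hl : ∀ t, Tendsto (fun n => f n t) atTop (nhds (g t))) : AA g := by
  have hre : Tendsto (fun n => (f n 0).re) atTop (nhds (g 0).re) :=
    (Complex.continuous_re.tendsto _).comp (hl 0)
  refine ⟨measurable_of_tendsto_metrizable (fun n => (hf n).1) (tendsto_pi_nhds.2 hl), ?_, ?_, ?_⟩
  · have h2 : Tendsto (fun n => (f n 0).im) atTop (nhds (g 0).im) :=
      (Complex.continuous_im.tendsto _).comp (hl 0)
    simp_rw [(hf _).2.1] at h2
    exact (tendsto_nhds_unique h2 tendsto_const_nhds)
  · intro t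
    exact le_of_tendsto_of_tendsto (hl t).norm hre (Eventually.of_forall fun n => (hf n).2.2.1 t)
  · intro k hk
    obtain ⟨C, hC⟩ := hre.bddAbove_range
    refine KK_lim (k := fun n t => f n t * k t) (fun t => C * ‖k t‖) (hk.1.norm.const_mul _)
      (fun n => (hf n).2.2.2 k hk) ?_ (fun t => (hl t).mul_const _)
    intro n t
    rw [norm_mul]
    exact mul_le_mul_of_nonneg_right (((hf n).2.2.1 t).trans (hC ⟨n, rfl⟩)) (norm_nonneg _)

lemma AA_pow {f : ℝ → ℂ} (hf : AA f) (n : ℕ) : AA fun t => f t ^ n := by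
  induction n with
  | zero => simpa using AA_const (c := 1) zero_le_one
  | succ n ih => simp_rw [pow_succ]; exact AA_mul ih hf

lemma AA_sum {f : ℕ → ℝ → ℂ} (s : Finset ℕ) (hf : ∀ n ∈ s, AA (f n)) :
    AA fun t => ∑ n ∈ s, f n t := by
  classical
  induction s using Finset.induction_on with
  | empty => simpa using AA_const (c := 0) le_rfl
  | insert a s ha ih =>
    simp_rw [Finset.sum_insert ha]
    exact AA_add (hf a (by simp)) (ih fun n hn => hf n (by simp [hn]))

lemma AA_cexp {f : ℝ → ℂ} (hf : AA f) : AA fun t => Complex.exp (f t) := by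
  refine AA_lim (f := fun N t => ∑ n ∈ Finset.range N, (((n.factorial : ℝ)⁻¹ : ℝ) : ℂ) * f t ^ n) ?_ ?_
  · intro N
    exact AA_sum _ fun n _ => AA_mul (AA_const (by positivity)) (AA_pow hf n)
  · intro t
    have := (NormedSpace.expSeries_div_hasSum_exp (f t)).tendsto_sum_nat
    rw [← Complex.exp_eq_exp_ℂ] at this
    convert this using 4
    push_cast; field_simp

lemma AA_cexp_sub {f : ℝ → ℂ} (hf : AA f) : AA fun t => Complex.exp (f t) - f t := by
  refine AA_lim (f := fun N t => ∑ n ∈ (Finset.range (N+2)).erase 1,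
    (((n.factorial : ℝ)⁻¹ : ℝ) : ℂ) * f t ^ n) ?_ ?_
  · intro N
    exact AA_sum _ fun n _ => AA_mul (AA_const (by positivity)) (AA_pow hf n)
  · intro t
    have := (NormedSpace.expSeries_div_hasSum_exp (f t)).tendsto_sum_nat
    rw [← Complex.exp_eq_exp_ℂ] at this
    have h2 := ((tendsto_add_atTop_iff_nat 2).2 this).sub_const (f t)
    refine h2.congr fun N => ?_
    rw [← Finset.add_sum_erase (Finset.range (N+2)) _ (a := 1) (by simp)]
    simp only [pow_one, Nat.factorial_one, Nat.cast_one, div_one, add_sub_cancel_left]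
    refine Finset.sum_congr rfl fun n _ => ?_
    push_cast; field_simp

lemma AA_refl {f : ℝ → ℂ} (hf : AA f) : AA fun t => f (-t) := by
  have key : ∀ k, KK k → KK fun t => k (-t) := by
    intro k hk
    refine ⟨hk.1.comp_neg, fun x => ?_⟩
    have := hk.2 (-x)
    rw [← integral_neg_eq_self] at this
    convert this using 4
    push_cast; ring_nf
  refine ⟨hf.1.comp measurable_neg, by simp [hf.2.1], fun t => by simpa using hf.2.2.1 (-t), ?_⟩
  intro k hk
  simpa using key _ (hf.2.2.2 _ (key k hk))

lemma KK_gauss {b : ℝ} (hb : 0 < b) : KK fun t : ℝ => Complex.exp (-(b : ℂ) * (t : ℂ) ^ 2) := by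
  refine ⟨integrable_cexp_neg_mul_sq (by simpa using hb), fun x => ?_⟩
  have := fourierIntegral_gaussian (b := (b : ℂ)) (by simpa using hb) (-(x : ℂ))
  have h2 : (∫ t : ℝ, Complex.exp (-Complex.I * (t : ℂ) * (x : ℂ)) * Complex.exp (-(b : ℂ) * (t : ℂ) ^ 2))
    = ((((Real.pi / b) ^ (1/2 : ℝ)) * Real.exp (-x^2 / (4*b)) : ℝ) : ℂ) := by
    rw [Complex.ofReal_mul, Complex.ofReal_cpow (by positivity)]
    convert this using 5
    · ring
    · push_cast; ring
    · push_cast; ring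
    · push_cast; ring
  rw [h2, Complex.ofReal_re]; positivity

lemma KK_of_AA {f : ℝ → ℂ} (hf : AA f) (hi : Integrable f) : KK f := by
  refine KK_lim (k := fun n t => f t * Complex.exp (-(((1 / ((n : ℝ) + 1)) : ℝ) : ℂ) * (t : ℂ) ^ 2))
    (fun t => ‖f t‖) hi.norm (fun n => hf.2.2.2 _ (KK_gauss (by positivity))) ?_ ?_
  · intro n t
    rw [norm_mul]
    refine mul_le_of_le_one_right (norm_nonneg _) ?_
    rw [Complex.norm_exp, Real.exp_le_one_iff]
    have : (-(((1 / ((n : ℝ) + 1)) : ℝ) : ℂ) * (t : ℂ) ^ 2) = ((-(1 / ((n : ℝ) + 1)) * t^2 : ℝ) : ℂ) := by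
      push_cast; ring
    rw [this, Complex.ofReal_re]
    have : 0 ≤ (1 / ((n : ℝ) + 1)) * t^2 := by positivity
    linarith
  · intro t
    have h : Tendsto (fun n : ℕ => (((1 / ((n : ℝ) + 1)) : ℝ) : ℂ)) atTop (nhds ((0:ℝ):ℂ)) :=
      (Complex.continuous_ofReal.tendsto _).comp tendsto_one_div_add_atTop_nhds_zero_nat
    have h2 := ((Complex.continuous_exp.tendsto _).comp ((h.neg).mul_const ((t:ℂ)^2))).const_mul (f t)
    simpa using h2

def FT (p : ℝ → ℝ) (t : ℝ) : ℂ := ∫ y : ℝ, (p y : ℂ) * Complex.exp (Complex.I * (y : ℂ) * (t : ℂ))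

lemma norm_kern2 (t x : ℝ) : ‖Complex.exp (Complex.I * (t : ℂ) * (x : ℂ))‖ = 1 := by
  rw [Complex.norm_exp]; simp

lemma FT_int {p : ℝ → ℝ} (hp : Integrable p) (t : ℝ) :
    Integrable fun y : ℝ => (p y : ℂ) * Complex.exp (Complex.I * (y : ℂ) * (t : ℂ)) := by
  refine hp.ofReal.mul_bdd (c := 1) (by fun_prop) (Eventually.of_forall fun y => (norm_kern2 _ _).le)

lemma FT_norm {p : ℝ → ℝ} (t : ℝ) : ‖FT p t‖ ≤ ∫ y, |p y| := by
  refine (norm_integral_le_integral_norm _).trans (le_of_eq ?_)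
  congr 1; ext y
  rw [norm_mul, norm_kern2]; simp

lemma FT_cont {p : ℝ → ℝ} (hp : Integrable p) : Continuous (FT p) := by
  unfold FT
  refine continuous_of_dominated (bound := fun y => |p y|) (fun t => (FT_int hp t).aestronglyMeasurable) ?_ hp.abs ?_
  · intro t; refine Eventually.of_forall fun y => ?_
    rw [norm_mul, norm_kern2]; simp
  · exact Eventually.of_forall fun y => by fun_prop

lemma FT_conv {p : ℝ → ℝ} (hp : Integrable p) {k : ℝ → ℂ} (hk : Integrable k) (x : ℝ) :
    ∫ t : ℝ, Complex.exp (-Complex.I * (t : ℂ) * (x : ℂ)) * (FT p t * k t)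
     = ∫ y : ℝ, (p y : ℂ) * ∫ t : ℝ, Complex.exp (-Complex.I * (t : ℂ) * ((x - y : ℝ) : ℂ)) * k t := by
  have h1 : ∀ t : ℝ, Complex.exp (-Complex.I * (t : ℂ) * (x : ℂ)) * (FT p t * k t)
    = ∫ y : ℝ, (p y : ℂ) * (Complex.exp (-Complex.I * (t : ℂ) * ((x - y : ℝ) : ℂ)) * k t) := by
    intro t
    unfold FT
    rw [← integral_mul_const, ← integral_const_mul]
    congr 1; ext y
    have : Complex.exp (-Complex.I * (t : ℂ) * ((x - y : ℝ) : ℂ)) =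
      Complex.exp (-Complex.I * (t : ℂ) * (x : ℂ)) * Complex.exp (Complex.I * (y : ℂ) * (t : ℂ)) := by
      rw [← Complex.exp_add]; congr 1; push_cast; ring
    rw [this]; ring
  simp_rw [h1, ← integral_const_mul]
  rw [integral_integral_swap]
  have := (hk.mul_prod (hp.ofReal (𝕜 := ℂ)))
  have h3 := this.bdd_mul (c := 1) (f := fun z : ℝ × ℝ => Complex.exp (-Complex.I * (z.1 : ℂ) * ((x - z.2 : ℝ) : ℂ)))
    (by apply Continuous.aestronglyMeasurable; fun_prop) (Eventually.of_forall fun z => (norm_kern _ _).le)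
  refine h3.congr (Eventually.of_forall fun z => ?_)
  simp only [Function.uncurry]
  simp; ring

lemma AA_FT {p : ℝ → ℝ} (hp : Integrable p) (h0 : ∀ y, 0 ≤ p y) : AA (FT p) := by
  have hz : FT p 0 = ((∫ y, p y : ℝ) : ℂ) := by
    unfold FT; simp [integral_complex_ofReal]
  refine ⟨(FT_cont hp).measurable, by simp [hz], ?_, ?_⟩
  · intro t; rw [hz, Complex.ofReal_re]
    refine (FT_norm t).trans (le_of_eq ?_)
    congr 1; ext y; exact abs_of_nonneg (h0 y)
  · intro k hk
    refine ⟨hk.1.bdd_mul (c := ∫ y, |p y|) (FT_cont hp).aestronglyMeasurable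
      (Eventually.of_forall fun t => FT_norm t), fun x => ?_⟩
    rw [FT_conv hp hk.1]
    rw [← RCLike.re_eq_complex_re, ← integral_re]
    · refine integral_nonneg fun y => ?_
      simp only [RCLike.re_eq_complex_re, Complex.re_ofReal_mul]
      exact mul_nonneg (h0 y) (hk.2 _)
    · refine hp.ofReal.mul_bdd (c := ∫ t, ‖k t‖) ?_ ?_
      · apply Continuous.aestronglyMeasurable
        refine continuous_of_dominated (bound := fun t => ‖k t‖) (fun y => (kern_int hk.1 _).aestronglyMeasurable) ?_ hk.1.norm ?_
        · intro y; refine Eventually.of_forall fun t => ?_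
          rw [norm_mul, norm_kern, one_mul]
        · exact Eventually.of_forall fun y => by fun_prop
      · refine Eventually.of_forall fun y => (norm_integral_le_integral_norm _).trans (le_of_eq ?_)
        congr 1; ext t
        rw [norm_mul, norm_kern, one_mul]
end

noncomputable section
open MeasureTheory Filter Set

lemma taylor2 {H H1 H2 : ℝ → ℂ} (h1 : ∀ u ∈ Icc (0:ℝ) 1, HasDerivAt H (H1 u) u)
    (h2 : ∀ u ∈ Icc (0:ℝ) 1, HasDerivAt H1 (H2 u) u) (hc : ContinuousOn H2 (Icc 0 1)) :
    ∫ u in (0:ℝ)..1, ((1 - u : ℝ) : ℂ) * H2 u = H 1 - H 0 - H1 0 := by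
  have := intervalIntegral.integral_eq_sub_of_hasDerivAt (a := 0) (b := 1)
    (f := fun u : ℝ => ((1 - u : ℝ) : ℂ) * H1 u + H u) (f' := fun u : ℝ => ((1 - u : ℝ) : ℂ) * H2 u) ?_ ?_
  · rw [this]; simp; ring
  · intro u hu
    rw [uIcc_of_le zero_le_one] at hu
    have ha : HasDerivAt (fun u : ℝ => ((1 - u : ℝ) : ℂ)) (-1) u := by
      have := ((hasDerivAt_id u).const_sub 1).ofReal_comp
      simpa using this
    exact ((ha.fun_mul (h2 u hu)).fun_add (h1 u hu)).congr_deriv (by ring)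
  · apply ContinuousOn.intervalIntegrable
    rw [uIcc_of_le zero_le_one]
    exact ContinuousOn.mul (by fun_prop) hc

lemma rpow_exp_int {s b : ℝ} (hs : -1 < s) (hb : 0 < b) :
    IntegrableOn (fun y : ℝ => y ^ s * Real.exp (-(b * y))) (Ioi 0) := by
  have := integrableOn_rpow_mul_exp_neg_mul_rpow hs (p := 1) (by norm_num) hb
  refine this.congr_fun (fun y hy => ?_) measurableSet_Ioi
  simp

lemma norm_cexp_neg_mul (r : ℂ) (y : ℝ) : ‖Complex.exp (-(r * y))‖ = Real.exp (-(r.re * y)) := by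
  rw [Complex.norm_exp]; simp

lemma rpow_cexp_int {s : ℝ} (hs : -1 < s) {r : ℂ} (hr : 0 < r.re) :
    IntegrableOn (fun y : ℝ => ((y ^ s : ℝ) : ℂ) * Complex.exp (-(r * y))) (Ioi 0) := by
  refine (rpow_exp_int hs hr).mono' ?_ ?_
  · apply Measurable.aestronglyMeasurable; fun_prop
  · refine (ae_restrict_iff' measurableSet_Ioi).2 (Eventually.of_forall fun y hy => ?_)
    rw [norm_mul, norm_cexp_neg_mul, Complex.norm_real, Real.norm_eq_abs,
      abs_of_nonneg (Real.rpow_nonneg (le_of_lt hy) _)]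

lemma gamma_int {a : ℝ} (ha : 0 < a) {r : ℂ} (hr : 0 < r.re) :
    ∫ y in Ioi (0:ℝ), ((y ^ (a - 1) : ℝ) : ℂ) * Complex.exp (-(r * y)) =
      r ^ (-(a : ℂ)) * (Real.Gamma a : ℂ) := by
  set V : Set ℂ := {z | 0 < z.re} with hV
  have hVo : IsOpen V := isOpen_lt continuous_const Complex.continuous_re
  have hd : DifferentiableOn ℂ (fun r : ℂ => ∫ y in Ioi (0:ℝ), ((y ^ (a - 1) : ℝ) : ℂ) * Complex.exp (-(r * y))) V := by
    intro z hz
    have hz' : 0 < z.re := hz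
    have := hasDerivAt_integral_of_dominated_loc_of_deriv_le (𝕜 := ℂ) (μ := volume.restrict (Ioi (0:ℝ)))
      (F := fun (r : ℂ) (y : ℝ) => ((y ^ (a - 1) : ℝ) : ℂ) * Complex.exp (-(r * y)))
      (F' := fun (r : ℂ) (y : ℝ) => ((y ^ (a - 1) : ℝ) : ℂ) * (Complex.exp (-(r * y)) * (-y)))
      (x₀ := z) (s := {w | z.re / 2 < w.re}) (bound := fun y => y ^ a * Real.exp (-(z.re/2 * y)))
      ?_ ?_ ?_ ?_ ?_ ?_ ?_
    · exact this.2.differentiableAt.differentiableWithinAt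
    · exact (isOpen_lt continuous_const Complex.continuous_re).mem_nhds (by simp; linarith)
    · refine Eventually.of_forall fun w => ?_
      apply Measurable.aestronglyMeasurable; fun_prop
    · exact rpow_cexp_int (by linarith) hz'
    · apply Measurable.aestronglyMeasurable; fun_prop
    · refine (ae_restrict_iff' measurableSet_Ioi).2 (Eventually.of_forall fun y hy w hw => ?_)
      have hy' : 0 < y := hy
      have hw' : z.re / 2 < w.re := hw
      rw [norm_mul, norm_mul, norm_cexp_neg_mul, Complex.norm_real, Real.norm_eq_abs,
        abs_of_nonneg (Real.rpow_nonneg (le_of_lt hy) _), norm_neg, Complex.norm_real, Real.norm_eq_abs,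
        abs_of_pos hy']
      have : y ^ a = y ^ (a - 1) * y := by
        rw [← Real.rpow_add_one hy'.ne']; ring_nf
      rw [this]
      have h2 : Real.exp (-(w.re * y)) ≤ Real.exp (-(z.re / 2 * y)) := by
        apply Real.exp_le_exp.2
        nlinarith
      have h3 : 0 ≤ y ^ (a-1) * y := by positivity
      nlinarith [mul_le_mul_of_nonneg_left h2 h3]
    · exact rpow_exp_int (by linarith) (by linarith)
    · refine (ae_restrict_iff' measurableSet_Ioi).2 (Eventually.of_forall fun y hy w hw => ?_)
      have h1 : HasDerivAt (fun w : ℂ => -(w * y)) (-(y : ℂ)) w := by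
        exact (((hasDerivAt_id w).mul_const (y : ℂ)).fun_neg).congr_deriv (by simp)
      exact (h1.cexp).const_mul _
  have hd2 : DifferentiableOn ℂ (fun r : ℂ => r ^ (-(a : ℂ)) * (Real.Gamma a : ℂ)) V := by
    intro z hz
    have hz' : 0 < z.re := hz
    refine DifferentiableAt.differentiableWithinAt ?_
    refine DifferentiableAt.mul_const ?_ _
    exact DifferentiableAt.cpow_const (differentiableAt_id) (Or.inl hz')
  have hpre : IsPreconnected V := (convex_halfSpace_re_gt 0).isPreconnected
  have := AnalyticOnNhd.eqOn_of_preconnected_of_frequently_eq (hd.analyticOnNhd hVo)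
    (hd2.analyticOnNhd hVo) hpre (z₀ := 1) (by simp [hV]) ?_
  · exact this hr
  · have hreal : ∀ s : ℝ, 0 < s → (∫ y in Ioi (0:ℝ), ((y ^ (a - 1) : ℝ) : ℂ) * Complex.exp (-((s:ℂ) * y)))
        = (s:ℂ) ^ (-(a : ℂ)) * (Real.Gamma a : ℂ) := by
      intro s hs
      have := Complex.integral_cpow_mul_exp_neg_mul_Ioi (a := (a:ℂ)) (by simpa using ha) hs
      rw [Complex.Gamma_ofReal] at this
      rw [Complex.cpow_neg, ← Complex.inv_cpow, ← one_div]
      · rw [← this]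
        refine setIntegral_congr_fun measurableSet_Ioi fun y hy => ?_
        rw [Complex.ofReal_cpow (le_of_lt hy)]
        push_cast; rfl
      · rw [Complex.arg_ofReal_of_nonneg hs.le]; exact Real.pi_ne_zero.symm
    have ht : Tendsto (fun n : ℕ => ((1 + 1 / ((n : ℝ) + 1) : ℝ) : ℂ)) atTop (nhdsWithin 1 {1}ᶜ) := by
      rw [tendsto_nhdsWithin_iff]
      constructor
      · have := (tendsto_one_div_add_atTop_nhds_zero_nat (𝕜 := ℝ)).const_add 1
        rw [add_zero] at this
        have := (Complex.continuous_ofReal.tendsto _).comp this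
        rw [Complex.ofReal_one] at this
        exact this
      · refine Eventually.of_forall fun n => ?_
        simp only [mem_compl_iff, mem_singleton_iff]
        have : (0:ℝ) < 1 / ((n : ℝ) + 1) := by positivity
        intro h
        have h' : (1 + 1 / ((n : ℝ) + 1) : ℝ) = 1 := by exact_mod_cast h
        linarith
    refine ht.frequently (Frequently.of_forall fun n => ?_)
    exact hreal _ (by positivity)

lemma re_interp {r : ℂ} {u : ℝ} (h0 : 0 ≤ u) (h1 : u ≤ 1) :
    min 1 r.re ≤ (1 + u * (r - 1)).re := by
  have : (1 + u * (r - 1)).re = (1 - u) * 1 + u * r.re := by simp; ring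
  rw [this]
  have a1 := min_le_left 1 r.re
  have a2 := min_le_right 1 r.re
  nlinarith

lemma levy_int {α : ℝ} (h0 : 0 < α) (h2 : α < 2) (hne : α ≠ 1) {r : ℂ} (hr : 0 < r.re) :
    IntegrableOn (fun y : ℝ => ((y ^ (-1 - α) : ℝ) : ℂ) *
      (Complex.exp (-(r * y)) - Complex.exp (-y) + (r - 1) * y * Complex.exp (-y))) (Ioi 0) ∧
    ∫ y in Ioi (0:ℝ), ((y ^ (-1 - α) : ℝ) : ℂ) *
      (Complex.exp (-(r * y)) - Complex.exp (-y) + (r - 1) * y * Complex.exp (-y)) =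
      (Real.Gamma (2 - α) / (α * (α - 1)) : ℝ) * (r ^ (α : ℂ) - 1 - α * (r - 1)) := by
  set H : ℝ → ℝ → ℂ := fun y u => (r - 1)^2 * (((1 - u : ℝ) : ℂ) * (((y ^ (1 - α) : ℝ) : ℂ) *
    Complex.exp (-((1 + u * (r - 1)) * y)))) with hH
  have hm : 0 < min 1 r.re := lt_min one_pos hr
  have hin : ∀ y ∈ Ioi (0:ℝ), ((y ^ (-1 - α) : ℝ) : ℂ) *
      (Complex.exp (-(r * y)) - Complex.exp (-y) + (r - 1) * y * Complex.exp (-y)) = ∫ u in Ioc (0:ℝ) 1, H y u := by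
    intro y hy
    have hy' : 0 < y := hy
    have e1 : ∀ u : ℝ, HasDerivAt (fun u : ℝ => -((1 + u * (r - 1)) * y)) (-((r - 1) * y)) u := by
      intro u
      have := ((((hasDerivAt_id u).ofReal_comp).mul_const (r - 1)).const_add 1).mul_const (y : ℂ) |>.fun_neg
      exact this.congr_deriv (by simp)
    have := taylor2 (H := fun u : ℝ => Complex.exp (-((1 + u * (r - 1)) * y)))
      (H1 := fun u : ℝ => Complex.exp (-((1 + u * (r - 1)) * y)) * (-((r - 1) * y)))
      (H2 := fun u : ℝ => Complex.exp (-((1 + u * (r - 1)) * y)) * (-((r - 1) * y)) * (-((r - 1) * y)))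
      (fun u _ => (e1 u).cexp) (fun u _ => (e1 u).cexp.mul_const _) (by fun_prop)
    rw [intervalIntegral.integral_of_le zero_le_one] at this
    have hy2 : y ^ (1 - α) = y ^ (-1 - α) * y ^ 2 := by
      rw [← Real.rpow_natCast y 2, ← Real.rpow_add hy']; norm_num; ring_nf
    have h3 : ∀ u : ℝ, H y u = ((y ^ (-1 - α) : ℝ) : ℂ) * (((1 - u : ℝ) : ℂ) * (Complex.exp (-((1 + u * (r - 1)) * y)) * (-((r - 1) * y)) * (-((r - 1) * y)))) := by
      intro u; rw [hH]; simp only; rw [hy2]; push_cast; ring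
    simp_rw [h3]
    rw [integral_const_mul, this]
    congr 1
    simp
    ring
  have hprod : Integrable (Function.uncurry H) ((volume.restrict (Ioi (0:ℝ))).prod (volume.restrict (Ioc (0:ℝ) 1))) := by
    have hb := (rpow_exp_int (s := 1 - α) (by linarith) hm).mul_prod (integrable_const (μ := volume.restrict (Ioc (0:ℝ) 1)) (‖r-1‖^2))
    refine hb.mono' ?_ ?_
    · apply Measurable.aestronglyMeasurable
      simp only [hH, Function.uncurry_def]; fun_prop
    · rw [Measure.prod_restrict]
      refine (ae_restrict_iff' (measurableSet_Ioi.prod measurableSet_Ioc)).2 (Eventually.of_forall ?_)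
      rintro ⟨y, u⟩ ⟨hy, hu⟩
      have hy' : 0 < y := hy
      have hu' : 0 < u ∧ u ≤ 1 := hu
      simp only [hH, Function.uncurry_apply_pair]
      rw [norm_mul, norm_mul, norm_mul, norm_cexp_neg_mul, norm_pow, Complex.norm_real, Complex.norm_real, Real.norm_eq_abs,
        Real.norm_eq_abs, abs_of_nonneg (Real.rpow_nonneg hy'.le _), abs_of_nonneg (by linarith [hu'.2])]
      have := re_interp (r := r) hu'.1.le hu'.2
      have h4 : Real.exp (-((1 + (u:ℂ) * (r - 1)).re * y)) ≤ Real.exp (-(min 1 r.re * y)) := by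
        apply Real.exp_le_exp.2; nlinarith
      have h5 : 0 ≤ y ^ (1 - α) := Real.rpow_nonneg hy'.le _
      calc ‖r - 1‖ ^ 2 * ((1 - u) * (y ^ (1 - α) * Real.exp (-((1 + (u:ℂ) * (r - 1)).re * y))))
          ≤ ‖r - 1‖ ^ 2 * (1 * (y ^ (1 - α) * Real.exp (-(min 1 r.re * y)))) := by
            gcongr
            linarith
        _ = _ := by ring
  constructor
  · exact IntegrableOn.congr_fun (hprod.integral_prod_left) (fun y hy => (hin y hy).symm) measurableSet_Ioi
  · rw [setIntegral_congr_fun measurableSet_Ioi hin, integral_integral_swap hprod]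
    have hs : ∀ u ∈ Icc (0:ℝ) 1, (∫ y in Ioi (0:ℝ), H y u) = (Real.Gamma (2 - α) / (α * (α - 1)) : ℝ) * (((1 - u : ℝ) : ℂ) *
        ((α : ℂ) * ((α:ℂ) - 1) * (1 + u * (r - 1)) ^ ((α : ℂ) - 2) * (r-1)^2)) := by
      intro u hu
      simp only [hH]
      rw [integral_const_mul, integral_const_mul]
      have hre : 0 < (1 + (u:ℂ) * (r - 1)).re := hm.trans_le (re_interp hu.1 hu.2)
      have := gamma_int (a := 2 - α) (by linarith) hre
      have e : 2 - α - 1 = 1 - α := by ring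
      rw [e] at this
      rw [this]
      have e2 : -(((2 - α : ℝ)) : ℂ) = (α:ℂ) - 2 := by push_cast; ring
      rw [e2]
      have h1 : (α : ℂ) ≠ 0 := by exact_mod_cast h0.ne'
      have h2 : (α : ℂ) - 1 ≠ 0 := by
        rw [sub_ne_zero]; exact_mod_cast hne
      push_cast
      field_simp
    have hs' : ∀ u ∈ Ioc (0:ℝ) 1, _ := fun u hu => hs u (Ioc_subset_Icc_self hu)
    rw [setIntegral_congr_fun measurableSet_Ioc hs', integral_const_mul]
    congr 1
    rw [← intervalIntegral.integral_of_le zero_le_one]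
    have e1 : ∀ u : ℝ, HasDerivAt (fun u : ℝ => (1 + u * (r - 1))) (r - 1) u := by
      intro u
      have := ((((hasDerivAt_id u).ofReal_comp).mul_const (r - 1)).const_add 1)
      simpa using this
    have hsl : ∀ u ∈ Icc (0:ℝ) 1, (1 + u * (r - 1)) ∈ Complex.slitPlane := fun u hu =>
      Or.inl (hm.trans_le (re_interp hu.1 hu.2))
    have key : ∀ c : ℂ, ∀ u ∈ Icc (0:ℝ) 1, HasDerivAt (fun u : ℝ => ((1:ℂ) + u * (r - 1)) ^ c)
        (c * (1 + u * (r - 1)) ^ (c - 1) * (r - 1)) u := by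
      intro c u hu
      have h := ((hasDerivAt_id ((1:ℂ) + u * (r - 1))).cpow_const (c := c) (hsl u hu))
      have h3 := HasDerivAt.comp u h (e1 u)
      rw [mul_one] at h3
      exact h3
    rw [taylor2 (H := fun u : ℝ => ((1:ℂ) + u * (r - 1)) ^ (α:ℂ))
      (H1 := fun u : ℝ => (α:ℂ) * (1 + u * (r - 1)) ^ ((α:ℂ) - 1) * (r - 1))]
    · simp
    · exact key α
    · intro u hu
      have := ((key (α - 1) u hu).const_mul (α:ℂ)).mul_const (r-1)
      refine this.congr_deriv ?_
      have : (α:ℂ) - 1 - 1 = α - 2 := by ring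
      rw [this]; ring
    · refine ContinuousOn.mul (ContinuousOn.mul continuousOn_const ?_) continuousOn_const
      refine ContinuousOn.cpow_const ?_ hsl
      fun_prop
end

noncomputable section
open MeasureTheory Filter Set

lemma lim_trunc {f : ℝ → ℂ} (hf : IntegrableOn f (Ioi 0)) :
    Tendsto (fun n : ℕ => ∫ y in Ioi (1 / ((n:ℝ) + 1)), f y) atTop (nhds (∫ y in Ioi 0, f y)) := by
  have hU : (⋃ n : ℕ, Ioi (1 / ((n:ℝ) + 1))) = Ioi (0:ℝ) := by
    ext y
    simp only [mem_iUnion, mem_Ioi]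
    constructor
    · rintro ⟨n, hn⟩; exact lt_trans (by positivity) hn
    · intro hy; exact exists_nat_one_div_lt hy
  have := tendsto_setIntegral_of_monotone (μ := volume) (f := f) (s := fun n : ℕ => Ioi (1 / ((n:ℝ) + 1)))
    (fun n => measurableSet_Ioi) ?_ (by rw [hU]; exact hf)
  · rwa [hU] at this
  · intro m n hmn
    apply Ioi_subset_Ioi
    have : (m:ℝ) ≤ n := by exact_mod_cast hmn
    exact one_div_le_one_div_of_le (by positivity) (by linarith)

lemma trunc_int {α : ℝ} (h0 : 0 < α) {δ : ℝ} (hδ : 0 < δ) {g : ℝ → ℂ} (hg : Measurable g) {C : ℝ}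
    (hb : ∀ y, 0 < y → ‖g y‖ ≤ C) :
    IntegrableOn (fun y : ℝ => ((y ^ (-1 - α) : ℝ) : ℂ) * g y) (Ioi δ) := by
  have h1 : IntegrableOn (fun y : ℝ => y ^ (-1 - α)) (Ioi δ) :=
    integrableOn_Ioi_rpow_of_lt (by linarith) hδ
  refine Integrable.mul_bdd (c := C) h1.ofReal hg.aestronglyMeasurable ?_
  refine (ae_restrict_iff' measurableSet_Ioi).2 (Eventually.of_forall fun y hy => ?_)
  exact hb y (hδ.trans hy)

lemma exp_split (ρ t y : ℝ) : Complex.exp (-(((ρ:ℂ) - Complex.I * t) * y)) =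
    ((Real.exp (-(ρ * y)) : ℝ) : ℂ) * Complex.exp (Complex.I * y * t) := by
  rw [Complex.ofReal_exp, ← Complex.exp_add]; congr 1; push_cast; ring

lemma os1 {α : ℝ} (h0 : 0 < α) (h2 : α < 2) (hne : α ≠ 1) {A : ℝ} (hA : 0 ≤ A) {g : ℝ → ℝ}
    (hgm : Measurable g) (hgi : Integrable g) (hg0 : ∀ y, 0 ≤ g y) (hgA : ∀ y, 0 < y → g y ≤ A * y ^ (-1 - α))
    {ρ : ℝ} (hρ : 0 < ρ) :
    AA fun t : ℝ => Complex.exp ((A * (Real.Gamma (2 - α) / (α * (α - 1))) : ℝ) * ((ρ:ℂ) - Complex.I * t) ^ (α : ℂ)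
      - FT (indicator (Ioi 0) fun y => g y * Real.exp (-(ρ * y))) t) := by
  set C : ℝ := Real.Gamma (2 - α) / (α * (α - 1)) with hC
  set δ : ℕ → ℝ := fun n => 1 / ((n:ℝ) + 1) with hδ
  have hδ0 : ∀ n, 0 < δ n := fun n => by simp only [hδ]; positivity
  set c1 : ℕ → ℝ := fun n => ∫ y in Ioi (δ n), A * (y ^ (-1 - α) * Real.exp (-y)) with hc1
  set c2 : ℕ → ℝ := fun n => ∫ y in Ioi (δ n), A * (y ^ (-1 - α) * (y * Real.exp (-y))) with hc2
  set p : ℕ → ℝ → ℝ := fun n => indicator (Ioi (δ n)) fun y => (A * y ^ (-1 - α) - g y) * Real.exp (-(ρ * y)) with hp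
  have hpi : ∀ n, Integrable (p n) := by
    intro n
    rw [hp]; simp only
    rw [integrable_indicator_iff measurableSet_Ioi]
    have h1 : IntegrableOn (fun y : ℝ => A * y ^ (-1 - α) - g y) (Ioi (δ n)) :=
      (Integrable.const_mul (integrableOn_Ioi_rpow_of_lt (by linarith) (hδ0 n)) _).sub hgi.integrableOn
    refine Integrable.mul_bdd (c := 1) h1 (by fun_prop) ?_
    refine (ae_restrict_iff' measurableSet_Ioi).2 (Eventually.of_forall fun y hy => ?_)
    have : 0 < y := (hδ0 n).trans hy
    rw [Real.norm_eq_abs, abs_of_pos (Real.exp_pos _), Real.exp_le_one_iff]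
    nlinarith
  have hp0 : ∀ n y, 0 ≤ p n y := by
    intro n y
    apply indicator_nonneg
    intro y hy
    have := hgA y ((hδ0 n).trans hy)
    exact mul_nonneg (by linarith) (Real.exp_pos _).le
  have hmem : ∀ n, AA fun t : ℝ => Complex.exp (FT (p n) t) * (((Real.exp (-c1 n + (ρ - 1) * c2 n)) : ℝ) : ℂ)
      * Complex.exp (Complex.I * ((-c2 n : ℝ) : ℂ) * t) := fun n =>
    AA_mul (AA_mul (AA_cexp (AA_FT (hpi n) (hp0 n))) (AA_const (Real.exp_pos _).le)) (AA_exp _)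
  set G : ℝ → ℝ → ℂ := fun t y => (g y : ℂ) * ((Real.exp (-(ρ * y)) : ℝ) : ℂ) * Complex.exp (Complex.I * y * t) with hG
  set Lv : ℝ → ℝ → ℂ := fun t y => ((y ^ (-1 - α) : ℝ) : ℂ) *
      (Complex.exp (-(((ρ:ℂ) - Complex.I * t) * y)) - Complex.exp (-y) + (((ρ:ℂ) - Complex.I * t) - 1) * y * Complex.exp (-y)) with hLv
  have hGi : ∀ t, IntegrableOn (G t) (Ioi 0) := by
    intro t
    refine Integrable.mul_bdd (c := 1) (f := fun y : ℝ => (g y : ℂ) * ((Real.exp (-(ρ * y)) : ℝ) : ℂ)) ?_ (by fun_prop) (Eventually.of_forall fun y => (norm_kern2 _ _).le)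
    refine Integrable.mul_bdd (c := 1) hgi.ofReal.integrableOn (by fun_prop) ?_
    refine (ae_restrict_iff' measurableSet_Ioi).2 (Eventually.of_forall fun y hy => ?_)
    have : 0 < y := hy
    rw [Complex.norm_real, Real.norm_eq_abs, abs_of_pos (Real.exp_pos _), Real.exp_le_one_iff]
    nlinarith
  have hL := fun t : ℝ => levy_int h0 h2 hne (r := (ρ:ℂ) - Complex.I * t) (by simpa using hρ)
  have heq : ∀ n t, Complex.exp (FT (p n) t) * (((Real.exp (-c1 n + (ρ - 1) * c2 n)) : ℝ) : ℂ)
      * Complex.exp (Complex.I * ((-c2 n : ℝ) : ℂ) * t) =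
      Complex.exp (A * (∫ y in Ioi (δ n), Lv t y) - ∫ y in Ioi (δ n), G t y) := by
    intro n t
    rw [Complex.ofReal_exp, ← Complex.exp_add, ← Complex.exp_add]
    congr 1
    have i1 : IntegrableOn (fun y : ℝ => ((y ^ (-1 - α) : ℝ) : ℂ) * Complex.exp (-(((ρ:ℂ) - Complex.I * t) * y))) (Ioi (δ n)) := by
      refine trunc_int h0 (hδ0 n) (by fun_prop) (C := 1) fun y hy => ?_
      rw [norm_cexp_neg_mul, Real.exp_le_one_iff]
      simp; positivity
    have i2 : IntegrableOn (fun y : ℝ => ((y ^ (-1 - α) : ℝ) : ℂ) * Complex.exp (-y)) (Ioi (δ n)) := by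
      refine trunc_int h0 (hδ0 n) (by fun_prop) (C := 1) fun y hy => ?_
      rw [Complex.norm_exp, Real.exp_le_one_iff]
      simp; positivity
    have i3 : IntegrableOn (fun y : ℝ => ((y ^ (-1 - α) : ℝ) : ℂ) * (y * Complex.exp (-y))) (Ioi (δ n)) := by
      refine trunc_int h0 (hδ0 n) (by fun_prop) (C := 1) fun y hy => ?_
      rw [norm_mul, Complex.norm_exp, Complex.norm_real, Real.norm_eq_abs, abs_of_pos hy]
      have := Real.add_one_le_exp y
      simp only [Complex.neg_re, Complex.ofReal_re, Real.exp_neg]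
      rw [← div_eq_mul_inv, div_le_one (Real.exp_pos _)]
      linarith
    have e1 : FT (p n) t = A * (∫ y in Ioi (δ n), ((y ^ (-1 - α) : ℝ) : ℂ) * Complex.exp (-(((ρ:ℂ) - Complex.I * t) * y)))
        - ∫ y in Ioi (δ n), G t y := by
      rw [← integral_const_mul, ← integral_sub (i1.const_mul _) ((hGi t).mono_set (Ioi_subset_Ioi (hδ0 n).le)),
        ← integral_indicator measurableSet_Ioi]
      unfold FT
      congr 1; ext y
      rw [hp]; simp only
      by_cases hy : y ∈ Ioi (δ n)
      · rw [indicator_of_mem hy, indicator_of_mem hy, exp_split, hG]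
        push_cast; ring
      · rw [indicator_of_notMem hy, indicator_of_notMem hy]; simp
    have e2 : (∫ y in Ioi (δ n), Lv t y) = (∫ y in Ioi (δ n), ((y ^ (-1 - α) : ℝ) : ℂ) * Complex.exp (-(((ρ:ℂ) - Complex.I * t) * y)))
       - (∫ y in Ioi (δ n), ((y ^ (-1 - α) : ℝ) : ℂ) * Complex.exp (-y)) + (((ρ:ℂ) - Complex.I * t) - 1) *
         ∫ y in Ioi (δ n), ((y ^ (-1 - α) : ℝ) : ℂ) * (y * Complex.exp (-y)) := by
      rw [← integral_const_mul, ← integral_sub i1 i2]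
      have i12 : IntegrableOn (fun y : ℝ => ((y ^ (-1 - α) : ℝ) : ℂ) * Complex.exp (-(((ρ:ℂ) - Complex.I * t) * y))
        - ((y ^ (-1 - α) : ℝ) : ℂ) * Complex.exp (-y)) (Ioi (δ n)) := i1.sub i2
      rw [← integral_add i12 (i3.const_mul _)]
      congr 1; ext y; simp only [hLv]; ring
    have e3 : ((c1 n : ℝ) : ℂ) = A * (∫ y in Ioi (δ n), ((y ^ (-1 - α) : ℝ) : ℂ) * Complex.exp (-y)) := by
      rw [hc1]; simp only
      rw [← integral_complex_ofReal, ← integral_const_mul]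
      congr 1; ext y; push_cast; ring
    have e4 : ((c2 n : ℝ) : ℂ) = A * (∫ y in Ioi (δ n), ((y ^ (-1 - α) : ℝ) : ℂ) * (y * Complex.exp (-y))) := by
      rw [hc2]; simp only
      rw [← integral_complex_ofReal, ← integral_const_mul]
      congr 1; ext y; push_cast; ring
    rw [e1, e2]
    push_cast
    rw [e3, e4]
    ring
  have hlim : AA fun t : ℝ => Complex.exp (A * (∫ y in Ioi 0, Lv t y) - ∫ y in Ioi 0, G t y) := by
    refine AA_lim hmem fun t => ?_
    simp_rw [heq]
    exact (Complex.continuous_exp.tendsto _).comp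
      (((lim_trunc (hL t).1).const_mul _).sub (lim_trunc (hGi t)))
  have hfin := AA_mul (AA_mul hlim (AA_const (c := Real.exp (A * C * (1 + α * (ρ - 1)))) (Real.exp_pos _).le))
    (AA_exp (-(A * C * α)))
  convert hfin using 2 with t
  simp only [hLv]
  rw [(hL t).2, Complex.ofReal_exp, ← Complex.exp_add, ← Complex.exp_add]
  congr 1
  have : FT (indicator (Ioi 0) fun y => g y * Real.exp (-(ρ * y))) t = ∫ y in Ioi 0, G t y := by
    rw [← integral_indicator measurableSet_Ioi]
    unfold FT
    congr 1; ext y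
    by_cases hy : y ∈ Ioi (0:ℝ)
    · rw [indicator_of_mem hy, indicator_of_mem hy, hG]
      push_cast; ring
    · rw [indicator_of_notMem hy, indicator_of_notMem hy]; simp
  rw [this, ← hC]
  push_cast
  ring

lemma os2 {α : ℝ} (h0 : 0 < α) (h2 : α < 2) (hne : α ≠ 1) {A : ℝ} (hA : 0 ≤ A) {g : ℝ → ℝ}
    (hgm : Measurable g) (hgi : Integrable g) (hg0 : ∀ y, 0 ≤ g y) (hgA : ∀ y, 0 < y → g y ≤ A * y ^ (-1 - α)) :
    AA fun t : ℝ => Complex.exp ((A * (Real.Gamma (2 - α) / (α * (α - 1))) : ℝ) * (- Complex.I * t) ^ (α : ℂ)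
      - FT (indicator (Ioi 0) g) t) := by
  have hρ : Tendsto (fun n : ℕ => 1 / ((n:ℝ) + 1)) atTop (nhds 0) := tendsto_one_div_add_atTop_nhds_zero_nat
  refine AA_lim (fun n : ℕ => os1 h0 h2 hne hA hgm hgi hg0 hgA (ρ := 1 / ((n:ℝ) + 1)) (by positivity)) fun t => ?_
  refine (Complex.continuous_exp.tendsto _).comp (Tendsto.sub (Tendsto.const_mul _ ?_) ?_)
  · have hc : ContinuousAt (fun z : ℂ => z ^ (α : ℂ)) (- Complex.I * t) := by
      by_cases ht : t = 0
      · subst ht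
        simp only [Complex.ofReal_zero, mul_zero]
        exact Complex.continuousAt_cpow_const_of_re_pos (by simp) (by simpa using h0)
      · refine continuousAt_cpow_const (Or.inr ?_)
        simpa using ht
    refine hc.tendsto.comp ?_
    have h3 : Tendsto (fun n : ℕ => (((1 / ((n:ℝ) + 1) : ℝ)) : ℂ) - Complex.I * t) atTop (nhds (((0:ℝ):ℂ) - Complex.I * t)) :=
      ((Complex.continuous_ofReal.tendsto _).comp hρ).sub_const _
    simpa using h3
  · unfold FT
    refine tendsto_integral_of_dominated_convergence (fun y => g y) (fun n => ?_) hgi ?_ ?_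
    · apply Measurable.aestronglyMeasurable
      have : Measurable (indicator (Ioi 0) fun y => g y * Real.exp (-(1 / ((n:ℝ) + 1) * y))) :=
        Measurable.indicator (by fun_prop) measurableSet_Ioi
      fun_prop
    · intro n
      refine Eventually.of_forall fun y => ?_
      rw [norm_mul, norm_kern2, mul_one, Complex.norm_real]
      by_cases hy : y ∈ Ioi (0:ℝ)
      · have : 0 < y := hy
        rw [indicator_of_mem hy, Real.norm_eq_abs, abs_of_nonneg (mul_nonneg (hg0 y) (Real.exp_pos _).le)]
        refine mul_le_of_le_one_right (hg0 y) ?_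
        rw [Real.exp_le_one_iff]
        have : 0 ≤ 1 / ((n:ℝ) + 1) * y := by positivity
        linarith
      · rw [indicator_of_notMem hy]; simpa using hg0 y
    · refine Eventually.of_forall fun y => ?_
      refine Tendsto.mul_const _ ((Complex.continuous_ofReal.tendsto _).comp ?_)
      by_cases hy : y ∈ Ioi (0:ℝ)
      · simp_rw [indicator_of_mem hy]
        have := ((Real.continuous_exp.tendsto _).comp ((hρ.mul_const y).neg)).const_mul (g y)
        simpa [Function.comp_def] using this
      · simp_rw [indicator_of_notMem hy]; exact tendsto_const_nhds
end

noncomputable section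
open MeasureTheory Filter Set

lemma exp_diff {z w : ℂ} {W : ℝ} (hz : ‖Complex.exp z‖ ≤ W) (hw : ‖Complex.exp w‖ ≤ W) :
    ‖Complex.exp z - Complex.exp w‖ ≤ W * ‖z - w‖ := by
  have hW : 0 < W := lt_of_lt_of_le (norm_pos_iff.2 (Complex.exp_ne_zero _)) hz
  have hconv : Convex ℝ {x : ℂ | x.re ≤ Real.log W} := convex_halfSpace_re_le _
  have key : ∀ x : ℂ, ‖Complex.exp x‖ ≤ W ↔ x.re ≤ Real.log W := fun x => by
    rw [Complex.norm_exp, Real.le_log_iff_exp_le hW]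
  exact hconv.norm_image_sub_le_of_norm_hasDerivWithin_le (f := Complex.exp) (f' := Complex.exp)
    (fun x _ => (Complex.hasDerivAt_exp x).hasDerivWithinAt) (fun x hx => (key x).2 hx) ((key w).1 hw) ((key z).1 hz)

lemma sinc_int (u : ℝ) : Real.sinc u = ∫ v in (0:ℝ)..1, Real.cos (u * v) := by
  by_cases hu : u = 0
  · subst hu; simp
  · rw [Real.sinc_of_ne_zero hu, intervalIntegral.integral_comp_mul_left _ hu, integral_cos]
    simp; field_simp

lemma sinc_lip (u v : ℝ) : |Real.sinc u - Real.sinc v| ≤ |u - v| := by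
  have hi : ∀ u : ℝ, IntervalIntegrable (fun w => Real.cos (u * w)) volume 0 1 := fun u =>
    Continuous.intervalIntegrable (by fun_prop) _ _
  rw [sinc_int, sinc_int, ← intervalIntegral.integral_sub (hi u) (hi v)]
  have := intervalIntegral.norm_integral_le_of_norm_le_const (a := (0:ℝ)) (b := 1)
    (f := fun w => Real.cos (u * w) - Real.cos (v * w)) (C := |u - v|) ?_
  · simpa using this
  · intro w hw
    rw [uIoc_of_le zero_le_one] at hw
    have h1 := Real.lipschitzWith_cos.dist_le_mul (u * w) (v * w)
    rw [Real.dist_eq, Real.dist_eq, ← sub_mul, abs_mul] at h1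
    rw [Real.norm_eq_abs]
    have : |w| ≤ 1 := by rw [abs_of_pos hw.1]; exact hw.2
    simp at h1
    nlinarith [abs_nonneg (u - v)]

lemma sinc_lower {u : ℝ} (hu : |u| ≤ Real.pi / 2) : 1 / 2 ≤ Real.sinc u := by
  have hpi := Real.pi_le_four
  have hp := Real.pi_pos
  have key : ∀ u : ℝ, 0 ≤ u → u ≤ Real.pi / 2 → 1 / 2 ≤ Real.sinc u := by
    intro u h0 h1
    rcases h0.eq_or_lt with h | h
    · subst h; simp; norm_num
    · rw [Real.sinc_of_ne_zero h.ne', le_div_iff₀ h]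
      have := Real.mul_le_sin h0 h1
      have h3 : 1 / 2 ≤ 2 / Real.pi := by rw [div_le_div_iff₀ (by norm_num) hp]; linarith
      nlinarith
  rcases le_total 0 u with h | h
  · exact key u h (by rwa [abs_of_nonneg h] at hu)
  · rw [← Real.sinc_neg]; exact key (-u) (by linarith) (by rwa [abs_of_nonpos h] at hu)

def qf (a : ℝ) : ℝ := (2 / Real.pi) * (Real.cos (Real.pi * (a - 1) / 2) / Real.sinc (Real.pi * (a - 1) / 2))

lemma qf_one : qf 1 = 2 / Real.pi := by simp [qf]

lemma qf_ne {a : ℝ} (h : a ≠ 1) : qf a = -((a - 1) * Real.tan (Real.pi * a / 2)) := by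
  have hp := Real.pi_pos
  have ha : a - 1 ≠ 0 := sub_ne_zero.2 h
  have hu : Real.pi * (a - 1) / 2 ≠ 0 := by positivity
  rw [qf, Real.sinc_of_ne_zero hu, Real.tan_eq_sin_div_cos]
  have e : Real.pi * a / 2 = Real.pi * (a - 1) / 2 + Real.pi / 2 := by ring
  rw [e, Real.sin_add_pi_div_two, Real.cos_add_pi_div_two]
  by_cases hs : Real.sin (Real.pi * (a - 1) / 2) = 0
  · rw [hs]; simp
  · field_simp

lemma qf_bd {a : ℝ} (h0 : 0 ≤ a) (h2 : a ≤ 2) : |qf a| ≤ 2 := by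
  have hp := Real.pi_gt_three
  have hu : |Real.pi * (a - 1) / 2| ≤ Real.pi / 2 := by
    rw [abs_le]; constructor <;> nlinarith
  have hs := sinc_lower hu
  rw [qf, abs_mul, abs_of_pos (show 0 < 2 / Real.pi by positivity), abs_div, abs_of_pos (show 0 < Real.sinc _ by linarith)]
  have h1 : 2 / Real.pi ≤ 1 := by rw [div_le_one (by linarith)]; linarith
  have h3 : |Real.cos (Real.pi * (a - 1) / 2)| / Real.sinc (Real.pi * (a - 1) / 2) ≤ 2 := by
    rw [div_le_iff₀ (by linarith)]
    have := Real.abs_cos_le_one (Real.pi * (a - 1) / 2)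
    linarith
  have h4 : 0 ≤ |Real.cos (Real.pi * (a - 1) / 2)| / Real.sinc (Real.pi * (a - 1) / 2) := by positivity
  nlinarith

lemma qf_lip {a b : ℝ} (ha0 : 0 ≤ a) (ha2 : a ≤ 2) (hb0 : 0 ≤ b) (hb2 : b ≤ 2) : |qf a - qf b| ≤ 8 * |a - b| := by
  have hp := Real.pi_gt_three
  have hu : |Real.pi * (a - 1) / 2| ≤ Real.pi / 2 := by
    rw [abs_le]; constructor <;> nlinarith
  have hv : |Real.pi * (b - 1) / 2| ≤ Real.pi / 2 := by
    rw [abs_le]; constructor <;> nlinarith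
  have hs := sinc_lower hu
  have ht := sinc_lower hv
  have e : |Real.pi * (a - 1) / 2 - Real.pi * (b - 1) / 2| = Real.pi / 2 * |a - b| := by
    rw [show Real.pi * (a - 1) / 2 - Real.pi * (b - 1) / 2 = Real.pi / 2 * (a - b) by ring, abs_mul,
      abs_of_pos (by positivity)]
  have hl := sinc_lip (Real.pi * (a - 1) / 2) (Real.pi * (b - 1) / 2)
  have hc := Real.lipschitzWith_cos.dist_le_mul (Real.pi * (a - 1) / 2) (Real.pi * (b - 1) / 2)
  rw [Real.dist_eq, Real.dist_eq, NNReal.coe_one, one_mul] at hc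
  rw [e] at hl hc
  have hs1 := Real.sinc_le_one (Real.pi * (b - 1) / 2)
  have hc1 := Real.abs_cos_le_one (Real.pi * (b - 1) / 2)
  unfold qf
  set s := Real.sinc (Real.pi * (a - 1) / 2)
  set t := Real.sinc (Real.pi * (b - 1) / 2)
  set c := Real.cos (Real.pi * (a - 1) / 2)
  set d := Real.cos (Real.pi * (b - 1) / 2)
  rw [← mul_sub, abs_mul, abs_of_pos (show 0 < 2 / Real.pi by positivity)]
  have h1 : c / s - d / t = ((c - d) * t + d * (t - s)) / (s * t) := by
    field_simp; ring
  have h2 : |(c - d) * t + d * (t - s)| ≤ Real.pi * |a - b| := by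
    refine (abs_add_le _ _).trans ?_
    rw [abs_mul, abs_mul, abs_of_pos (show 0 < t by linarith), abs_sub_comm t s]
    have := abs_nonneg (c - d)
    have := abs_nonneg (s - t)
    nlinarith [mul_nonneg this (abs_nonneg d)]
  have h3 : |c / s - d / t| ≤ 4 * (Real.pi * |a - b|) := by
    rw [h1, abs_div, abs_of_pos (show 0 < s * t by positivity), div_le_iff₀ (by positivity)]
    have : 1 / 4 ≤ s * t := by nlinarith
    have : 0 ≤ Real.pi * |a - b| := by positivity
    nlinarith
  calc 2 / Real.pi * |c / s - d / t| ≤ 2 / Real.pi * (4 * (Real.pi * |a - b|)) := by gcongr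
    _ = 8 * |a - b| := by field_simp; ring

def EE (a : ℝ) (L : ℂ) : ℂ := ∫ u in (0:ℝ)..1, L * Complex.exp ((1 + u * (a - 1) : ℝ) * L)

lemma EE_one (L : ℂ) : EE 1 L = L * Complex.exp L := by simp [EE]

lemma EE_ne {a : ℝ} (h : a ≠ 1) (L : ℂ) : (a - 1) * EE a L = Complex.exp (a * L) - Complex.exp L := by
  by_cases hL : L = 0
  · subst hL; simp [EE]
  have ha : (a : ℂ) - 1 ≠ 0 := by
    rw [sub_ne_zero]; exact_mod_cast h
  have h1 : EE a L = L * Complex.exp L * ∫ u in (0:ℝ)..1, Complex.exp ((a - 1) * L * u) := by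
    rw [EE, ← intervalIntegral.integral_const_mul]
    congr 1; ext u
    rw [mul_assoc, ← Complex.exp_add]; congr 2; push_cast; ring
  rw [h1, integral_exp_mul_complex (mul_ne_zero ha hL)]
  have : Complex.exp (a * L) = Complex.exp L * Complex.exp ((a - 1) * L) := by
    rw [← Complex.exp_add]; congr 1; ring
  rw [this]
  simp
  field_simp

def PsiL (a b : ℝ) (L : ℂ) : ℂ := -Complex.exp (a * L) - Complex.I * b * (qf a * EE a L)

lemma vmem {a u : ℝ} (hu : u ∈ Set.uIoc (0:ℝ) 1) {lo hi : ℝ} (h1 : lo ≤ 1) (h2 : 1 ≤ hi) (h3 : lo ≤ a) (h4 : a ≤ hi) :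
    1 + u * (a - 1) ∈ Icc lo hi := by
  rw [uIoc_of_le zero_le_one] at hu
  obtain ⟨h5, h6⟩ := hu
  constructor <;> nlinarith

lemma EE_bd {a lo hi : ℝ} {L : ℂ} {W : ℝ} (h1 : lo ≤ 1) (h2 : 1 ≤ hi) (h3 : lo ≤ a) (h4 : a ≤ hi)
    (hW : ∀ v ∈ Icc lo hi, ‖Complex.exp ((v : ℝ) * L)‖ ≤ W) : ‖EE a L‖ ≤ ‖L‖ * W := by
  have := intervalIntegral.norm_integral_le_of_norm_le_const (a := (0:ℝ)) (b := 1)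
    (f := fun u : ℝ => L * Complex.exp ((1 + u * (a - 1) : ℝ) * L)) (C := ‖L‖ * W) ?_
  · simpa [EE] using this
  · intro u hu
    rw [norm_mul]
    exact mul_le_mul_of_nonneg_left (hW _ (vmem hu h1 h2 h3 h4)) (norm_nonneg _)

lemma PsiL_bd {a b lo hi : ℝ} {L : ℂ} {W K : ℝ} (h0 : 0 ≤ lo) (h1 : lo ≤ 1) (h2 : 1 ≤ hi) (h22 : hi ≤ 2) (h3 : lo ≤ a) (h4 : a ≤ hi)
    (hb : |b| ≤ 1) (hK1 : 1 ≤ K) (hK : ‖L‖ ≤ K)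
    (hW : ∀ v ∈ Icc lo hi, ‖Complex.exp ((v : ℝ) * L)‖ ≤ W) : ‖PsiL a b L‖ ≤ 3 * K * W := by
  have hE := EE_bd h1 h2 h3 h4 hW
  have hA := hW a ⟨h3, h4⟩
  have hq := qf_bd (h0.trans h3) (h4.trans h22)
  have hW0 : 0 ≤ W := (norm_nonneg _).trans hA
  unfold PsiL
  refine (norm_sub_le _ _).trans ?_
  rw [norm_neg, norm_mul, norm_mul, norm_mul, Complex.norm_I, Complex.norm_real, Complex.norm_real, Real.norm_eq_abs, Real.norm_eq_abs]
  have h5 : 1 * |b| * (|qf a| * ‖EE a L‖) ≤ 1 * 1 * (2 * (K * W)) := by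
    gcongr
    exact hE.trans (by gcongr)
  nlinarith

lemma EE_diff {a a' lo hi : ℝ} {L L' : ℂ} {W K : ℝ} (h0 : 0 ≤ lo) (h1 : lo ≤ 1) (h2 : 1 ≤ hi) (h22 : hi ≤ 2) (h3 : lo ≤ a) (h4 : a ≤ hi)
    (h3' : lo ≤ a') (h4' : a' ≤ hi) (hK1 : 1 ≤ K) (hK : ‖L‖ ≤ K) (hK' : ‖L'‖ ≤ K)
    (hW : ∀ v ∈ Icc lo hi, ‖Complex.exp ((v : ℝ) * L)‖ ≤ W) (hW' : ∀ v ∈ Icc lo hi, ‖Complex.exp ((v : ℝ) * L')‖ ≤ W) :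
    ‖EE a L - EE a' L'‖ ≤ 3 * K ^ 2 * W * (|a - a'| + ‖L - L'‖) := by
  have hi' : ∀ (a : ℝ) (L : ℂ), IntervalIntegrable (fun u : ℝ => L * Complex.exp ((1 + u * (a - 1) : ℝ) * L)) volume 0 1 := fun a L =>
    Continuous.intervalIntegrable (by fun_prop) _ _
  unfold EE
  rw [← intervalIntegral.integral_sub (hi' _ _) (hi' _ _)]
  have := intervalIntegral.norm_integral_le_of_norm_le_const (a := (0:ℝ)) (b := 1)
    (f := fun u : ℝ => L * Complex.exp ((1 + u * (a - 1) : ℝ) * L) - L' * Complex.exp ((1 + u * (a' - 1) : ℝ) * L')) (C := 3 * K ^ 2 * W * (|a - a'| + ‖L - L'‖)) ?_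
  · simpa using this
  intro u hu
  have m1 := vmem hu h1 h2 h3 h4
  have m2 := vmem hu h1 h2 h3' h4'
  have w1 := hW _ m1
  have w2 := hW' _ m2
  have hd := exp_diff w1 w2
  have hu1 : |u| ≤ 1 := by
    rw [uIoc_of_le zero_le_one] at hu
    rw [abs_of_pos hu.1]; exact hu.2
  have hW0 : 0 ≤ W := (norm_nonneg _).trans w1
  have hexp : ‖((1 + u * (a - 1) : ℝ) : ℂ) * L - ((1 + u * (a' - 1) : ℝ) : ℂ) * L'‖ ≤ |a - a'| * K + 2 * ‖L - L'‖ := by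
    have e : ((1 + u * (a - 1) : ℝ) : ℂ) * L - ((1 + u * (a' - 1) : ℝ) : ℂ) * L' =
      ((u * (a - a') : ℝ) : ℂ) * L + ((1 + u * (a' - 1) : ℝ) : ℂ) * (L - L') := by push_cast; ring
    rw [e]
    refine (norm_add_le _ _).trans ?_
    rw [norm_mul, norm_mul, Complex.norm_real, Complex.norm_real, Real.norm_eq_abs, Real.norm_eq_abs, abs_mul]
    have m3 : |1 + u * (a' - 1)| ≤ 2 := by
      rw [abs_of_nonneg (h0.trans m2.1)]; exact m2.2.trans h22
    have : |u| * |a - a'| ≤ 1 * |a - a'| := by gcongr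
    gcongr
    linarith
  have e2 : L * Complex.exp ((1 + u * (a - 1) : ℝ) * L) - L' * Complex.exp ((1 + u * (a' - 1) : ℝ) * L') =
    L * (Complex.exp ((1 + u * (a - 1) : ℝ) * L) - Complex.exp ((1 + u * (a' - 1) : ℝ) * L')) + (L - L') * Complex.exp ((1 + u * (a' - 1) : ℝ) * L') := by ring
  rw [e2]
  refine (norm_add_le _ _).trans ?_
  rw [norm_mul, norm_mul]
  have b1 : ‖L‖ * ‖Complex.exp ((1 + u * (a - 1) : ℝ) * L) - Complex.exp ((1 + u * (a' - 1) : ℝ) * L')‖ ≤ K * (W * (|a - a'| * K + 2 * ‖L - L'‖)) := by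
    gcongr
    exact hd.trans (by gcongr)
  have b2 : ‖L - L'‖ * ‖Complex.exp ((1 + u * (a' - 1) : ℝ) * L')‖ ≤ ‖L - L'‖ * W := by gcongr
  have hx := norm_nonneg (L - L')
  have hy := abs_nonneg (a - a')
  have p1 : 0 ≤ W * ‖L - L'‖ := by positivity
  have p2 : 0 ≤ W * |a - a'| := by positivity
  nlinarith [mul_nonneg p1 (show 0 ≤ K - 1 by linarith), mul_nonneg p1 (show 0 ≤ K ^ 2 - K by nlinarith), mul_nonneg p2 (sq_nonneg K)]

lemma PsiL_diff {a a' b b' lo hi : ℝ} {L L' : ℂ} {W K : ℝ} (h0 : 0 ≤ lo) (h1 : lo ≤ 1) (h2 : 1 ≤ hi) (h22 : hi ≤ 2) (h3 : lo ≤ a) (h4 : a ≤ hi)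
    (h3' : lo ≤ a') (h4' : a' ≤ hi) (hb : |b| ≤ 1) (hb' : |b'| ≤ 1) (hK1 : 1 ≤ K) (hK : ‖L‖ ≤ K) (hK' : ‖L'‖ ≤ K)
    (hW : ∀ v ∈ Icc lo hi, ‖Complex.exp ((v : ℝ) * L)‖ ≤ W) (hW' : ∀ v ∈ Icc lo hi, ‖Complex.exp ((v : ℝ) * L')‖ ≤ W) :
    ‖PsiL a b L - PsiL a' b' L'‖ ≤ 16 * K ^ 2 * W * (|a - a'| + |b - b'| + ‖L - L'‖) := by
  have hE := EE_bd h1 h2 h3 h4 hW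
  have hD := EE_diff h0 h1 h2 h22 h3 h4 h3' h4' hK1 hK hK' hW hW'
  have hA := hW a ⟨h3, h4⟩
  have hA' := hW' a' ⟨h3', h4'⟩
  have hd := exp_diff hA hA'
  have hq := qf_bd (h0.trans h3) (h4.trans h22)
  have hq' := qf_bd (h0.trans h3') (h4'.trans h22)
  have hql := qf_lip (h0.trans h3) (h4.trans h22) (h0.trans h3') (h4'.trans h22)
  have hW0 : 0 ≤ W := (norm_nonneg _).trans hA
  have hexp : ‖(a : ℂ) * L - (a' : ℂ) * L'‖ ≤ |a - a'| * K + 2 * ‖L - L'‖ := by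
    have e : (a : ℂ) * L - (a' : ℂ) * L' =
      ((a - a' : ℝ) : ℂ) * L + (a' : ℂ) * (L - L') := by push_cast; ring
    rw [e]
    refine (norm_add_le _ _).trans ?_
    rw [norm_mul, norm_mul, Complex.norm_real, Complex.norm_real, Real.norm_eq_abs, Real.norm_eq_abs]
    have m3 : |a'| ≤ 2 := by
      rw [abs_of_nonneg (h0.trans h3')]; exact h4'.trans h22
    gcongr
  have e : PsiL a b L - PsiL a' b' L' = -(Complex.exp (a * L) - Complex.exp (a' * L')) -
    (Complex.I * ((b * qf a - b' * qf a' : ℝ) : ℂ) * EE a L + Complex.I * ((b' * qf a' : ℝ) : ℂ) * (EE a L - EE a' L')) := by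
    unfold PsiL; push_cast; ring
  have hbq : |b * qf a - b' * qf a'| ≤ 8 * |a - a'| + 2 * |b - b'| := by
    rw [show b * qf a - b' * qf a' = b * (qf a - qf a') + (b - b') * qf a' by ring]
    refine (abs_add_le _ _).trans ?_
    rw [abs_mul, abs_mul]
    have : |b| * |qf a - qf a'| ≤ 1 * (8 * |a - a'|) := by gcongr
    have : |b - b'| * |qf a'| ≤ |b - b'| * 2 := by gcongr
    linarith
  have hbq2 : |b' * qf a'| ≤ 2 := by
    rw [abs_mul]
    have := mul_le_mul hb' hq' (abs_nonneg _) zero_le_one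
    linarith
  rw [e]
  refine (norm_sub_le _ _).trans ?_
  rw [norm_neg]
  have n1 : ‖Complex.I * ((b * qf a - b' * qf a' : ℝ) : ℂ) * EE a L + Complex.I * ((b' * qf a' : ℝ) : ℂ) * (EE a L - EE a' L')‖
      ≤ (8 * |a - a'| + 2 * |b - b'|) * (K * W) + 2 * (3 * K ^ 2 * W * (|a - a'| + ‖L - L'‖)) := by
    refine (norm_add_le _ _).trans ?_
    rw [norm_mul, norm_mul, norm_mul, norm_mul, Complex.norm_I, Complex.norm_real, Complex.norm_real, Real.norm_eq_abs, Real.norm_eq_abs, one_mul, one_mul]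
    gcongr
    exact hE.trans (by gcongr)
  have n2 : ‖Complex.exp (a * L) - Complex.exp (a' * L')‖ ≤ W * (|a - a'| * K + 2 * ‖L - L'‖) := hd.trans (by gcongr)
  have p1 : 0 ≤ W * ‖L - L'‖ := by positivity
  have p2 : 0 ≤ W * |a - a'| := by positivity
  have p3 : 0 ≤ W * |b - b'| := by positivity
  have k1 : 0 ≤ K ^ 2 - K := by nlinarith
  nlinarith [mul_nonneg p1 k1, mul_nonneg p2 k1, mul_nonneg p3 k1, mul_nonneg p1 (show 0 ≤ K - 1 by linarith), mul_nonneg p3 (sq_nonneg K), mul_nonneg p1 (sq_nonneg K), mul_nonneg p2 (sq_nonneg K)]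
end

noncomputable section
open MeasureTheory Filter Set

def psiC (θ : Fin 4 → ℝ) (t : ℂ) : ℂ :=
  Complex.I * θ 0 * t + PsiL (θ 2) (θ 3) ((Real.log (θ 1) : ℂ) + Complex.log t)

lemma psiC_real {θ : Fin 4 → ℝ} (hσ : 0 < θ 1) {t : ℝ} (ht : 0 < t) : psiM θ t = psiC θ t := by
  have hst : 0 < θ 1 * t := by positivity
  have hL : ((Real.log (θ 1) : ℝ) : ℂ) + Complex.log t = ((Real.log (θ 1 * t) : ℝ) : ℂ) := by
    rw [Real.log_mul hσ.ne' ht.ne', ← Complex.ofReal_log ht.le]; push_cast; ring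
  have he : ∀ a : ℝ, Complex.exp (a * ((Real.log (θ 1 * t) : ℝ) : ℂ)) = (((θ 1 * t) ^ a : ℝ) : ℂ) := by
    intro a
    rw [Real.rpow_def_of_pos hst]; push_cast; congr 1; ring
  have he1 : Complex.exp ((Real.log (θ 1 * t) : ℝ) : ℂ) = ((θ 1 * t : ℝ) : ℂ) := by
    have := he 1; simpa using this
  unfold psiM psiC PsiL
  rw [hL, he, abs_of_pos hst, Real.sign_of_pos ht]
  by_cases h : θ 2 = 1
  · rw [if_pos h, h, qf_one, EE_one, he1, Real.rpow_one]; push_cast; ring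
  · rw [if_neg h]
    have h1 := EE_ne h ((Real.log (θ 1 * t) : ℝ) : ℂ)
    rw [he, he1] at h1
    have h2 := qf_ne h
    have h3 : (qf (θ 2) : ℂ) * EE (θ 2) ((Real.log (θ 1 * t) : ℝ) : ℂ) = -(Real.tan (Real.pi * θ 2 / 2) : ℂ) * ((((θ 1 * t) ^ (θ 2) : ℝ) : ℂ) - ((θ 1 * t : ℝ) : ℂ)) := by
      rw [← h1, h2]; push_cast; ring
    rw [h3]
    have h4 : (θ 1 * t) ^ (θ 2) * (θ 1 * t) ^ (1 - θ 2) = θ 1 * t := by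
      rw [← Real.rpow_add hst]; simp
    have h5 : (((θ 1 * t) ^ (θ 2) : ℝ) : ℂ) * (((θ 1 * t) ^ (1 - θ 2) : ℝ) : ℂ) = ((θ 1 * t : ℝ) : ℂ) := by
      exact_mod_cast h4
    rw [← h5]
    push_cast; ring

lemma psiC_im {θ : Fin 4 → ℝ} (hσ : 0 < θ 1) (h0 : 0 < θ 2) (h2 : θ 2 < 2) {y : ℝ} (hy : 0 < y) :
    (psiC θ (-(Complex.I * y))).im = (1 + θ 3) * Real.sin (Real.pi * θ 2 / 2) * (θ 1 * y) ^ (θ 2) := by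
  have hst : 0 < θ 1 * y := by positivity
  have hlog : Complex.log (-(Complex.I * y)) = (Real.log y : ℂ) - Complex.I * (Real.pi / 2) := by
    rw [show -(Complex.I * (y:ℂ)) = (y : ℂ) * (-Complex.I) by ring, Complex.log_ofReal_mul hy (by simp), Complex.log_neg_I]
    ring
  have hL : ((Real.log (θ 1) : ℝ) : ℂ) + Complex.log (-(Complex.I * y)) = ((Real.log (θ 1 * y) : ℝ) : ℂ) - Complex.I * (Real.pi / 2) := by
    rw [Real.log_mul hσ.ne' hy.ne', hlog]; push_cast; ring
  have he : ∀ a : ℝ, Complex.exp (a * (((Real.log (θ 1 * y) : ℝ) : ℂ) - Complex.I * (Real.pi / 2))) = (((θ 1 * y) ^ a : ℝ) : ℂ) *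
      ((Real.cos (Real.pi * a / 2) : ℂ) - Complex.I * (Real.sin (Real.pi * a / 2) : ℂ)) := by
    intro a
    rw [Real.rpow_def_of_pos hst]
    rw [show (a : ℂ) * (((Real.log (θ 1 * y) : ℝ) : ℂ) - Complex.I * (Real.pi / 2)) = ((Real.log (θ 1 * y) * a : ℝ) : ℂ) + ((-(Real.pi * a / 2) : ℝ) : ℂ) * Complex.I by push_cast; ring]
    rw [Complex.exp_add, Complex.exp_mul_I, ← Complex.ofReal_exp, ← Complex.ofReal_cos, ← Complex.ofReal_sin, Real.cos_neg, Real.sin_neg]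
    push_cast; ring
  have he1 : Complex.exp (((Real.log (θ 1 * y) : ℝ) : ℂ) - Complex.I * (Real.pi / 2)) = -Complex.I * ((θ 1 * y : ℝ) : ℂ) := by
    have := he 1; simp at this; rw [this]; push_cast; ring
  unfold psiC PsiL
  rw [hL, he]
  by_cases h : θ 2 = 1
  · rw [h, qf_one, EE_one, he1]
    have : Real.pi ≠ 0 := Real.pi_ne_zero
    simp
    field_simp
  · have h1 := EE_ne h (((Real.log (θ 1 * y) : ℝ) : ℂ) - Complex.I * (Real.pi / 2))
    rw [he, he1] at h1
    have h2' := qf_ne h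
    have h3 : (qf (θ 2) : ℂ) * EE (θ 2) (((Real.log (θ 1 * y) : ℝ) : ℂ) - Complex.I * (Real.pi / 2)) = -(Real.tan (Real.pi * θ 2 / 2) : ℂ) *
       ((((θ 1 * y) ^ (θ 2) : ℝ) : ℂ) *
      ((Real.cos (Real.pi * θ 2 / 2) : ℂ) - Complex.I * (Real.sin (Real.pi * θ 2 / 2) : ℂ)) - -Complex.I * ((θ 1 * y : ℝ) : ℂ)) := by
      rw [← h1, h2']; push_cast; ring
    rw [h3]
    have hc : Real.cos (Real.pi * θ 2 / 2) ≠ 0 := by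
      intro hc
      rcases lt_or_gt_of_ne h with hlt | hgt
      · exact absurd hc (Real.cos_pos_of_mem_Ioo ⟨by nlinarith [Real.pi_pos], by nlinarith [Real.pi_pos]⟩).ne'
      · exact absurd hc (Real.cos_neg_of_pi_div_two_lt_of_lt (by nlinarith [Real.pi_pos]) (by nlinarith [Real.pi_pos])).ne
    have ht : Real.tan (Real.pi * θ 2 / 2) * Real.cos (Real.pi * θ 2 / 2) = Real.sin (Real.pi * θ 2 / 2) := Real.tan_mul_cos hc
    simp only [Complex.add_im, Complex.sub_im, Complex.mul_im, Complex.mul_re, Complex.neg_re, Complex.neg_im, Complex.I_re, Complex.I_im,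
      Complex.ofReal_re, Complex.ofReal_im, Complex.sub_re]
    ring_nf
    ring_nf at ht
    rw [← ht]
    ring

lemma psiC_cont_diff {θ : Fin 4 → ℝ} {t : ℂ} (ht : t ∈ Complex.slitPlane) : DifferentiableAt ℂ (psiC θ) t := by
  have hl : DifferentiableAt ℂ (fun t : ℂ => (Real.log (θ 1) : ℂ) + Complex.log t) t :=
    (Complex.differentiableAt_log ht).const_add _
  have hE : Differentiable ℂ (EE (θ 2)) := by
    by_cases h : θ 2 = 1
    · rw [h]
      have : EE 1 = fun L => L * Complex.exp L := funext EE_one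
      rw [this]; fun_prop
    · have hc : ((θ 2 : ℝ) : ℂ) - 1 ≠ 0 := by rw [sub_ne_zero]; exact_mod_cast h
      have : EE (θ 2) = fun L => (Complex.exp (θ 2 * L) - Complex.exp L) / ((θ 2 : ℂ) - 1) := by
        funext L; rw [← EE_ne h L]; field_simp
      rw [this]; fun_prop
  have hP : Differentiable ℂ (PsiL (θ 2) (θ 3)) := by
    unfold PsiL; fun_prop
  unfold psiC
  exact (by fun_prop : DifferentiableAt ℂ (fun t : ℂ => Complex.I * θ 0 * t) t).add ((hP _).comp t hl)
end

noncomputable section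
open MeasureTheory Filter Set

structure PB (M Λ a1 a2 : ℝ) (θ : Fin 4 → ℝ) : Prop where
  mu : |θ 0| ≤ M
  sg : 0 < θ 1
  ls : |Real.log (θ 1)| ≤ Λ
  al : a1 ≤ θ 2
  au : θ 2 ≤ a2
  be : |θ 3| ≤ 1

def dd (θ θ' : Fin 4 → ℝ) : ℝ := Real.sqrt (∑ i : Fin 4, (θ i - θ' i) ^ 2)

lemma dd_nonneg (θ θ' : Fin 4 → ℝ) : 0 ≤ dd θ θ' := Real.sqrt_nonneg _

lemma le_dd (θ θ' : Fin 4 → ℝ) (i : Fin 4) : |θ i - θ' i| ≤ dd θ θ' := by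
  unfold dd
  rw [← Real.sqrt_sq_eq_abs]
  apply Real.sqrt_le_sqrt
  exact Finset.single_le_sum (f := fun i => (θ i - θ' i) ^ 2) (fun i _ => sq_nonneg _) (Finset.mem_univ i)

lemma log_lip {Λ x y : ℝ} (hx : 0 < x) (hy : 0 < y) (hxl : |Real.log x| ≤ Λ) (hyl : |Real.log y| ≤ Λ) :
    |Real.log x - Real.log y| ≤ Real.exp Λ * |x - y| := by
  have key : ∀ x y : ℝ, 0 < x → 0 < y → |Real.log y| ≤ Λ → Real.log x - Real.log y ≤ Real.exp Λ * |x - y| := by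
    intro x y hx hy hyl
    rw [← Real.log_div hx.ne' hy.ne']
    have h1 := Real.log_le_sub_one_of_pos (div_pos hx hy)
    have h2 : x / y - 1 = (Real.exp (-Real.log y)) * (x - y) := by
      rw [Real.exp_neg, Real.exp_log hy]; field_simp
    rw [h2] at h1
    refine h1.trans ?_
    have h3 : Real.exp (-Real.log y) ≤ Real.exp Λ := Real.exp_le_exp.2 (by linarith [neg_le_abs (Real.log y)])
    calc _ ≤ Real.exp (-Real.log y) * |x - y| := by gcongr; exact le_abs_self _
      _ ≤ _ := by gcongr
  rw [abs_le]
  constructor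
  · have := key y x hy hx hxl
    rw [abs_sub_comm] at this; linarith
  · exact key x y hx hy hyl

lemma L_bd {M Λ a1 a2 : ℝ} {θ : Fin 4 → ℝ} (h : PB M Λ a1 a2 θ) {t : ℂ} (hre : 0 ≤ t.re) :
    ‖(Real.log (θ 1) : ℂ) + Complex.log t‖ ≤ Λ + 2 + |Real.log ‖t‖| := by
  refine (norm_add_le _ _).trans ?_
  have h1 : ‖Complex.log t‖ ≤ |Real.log ‖t‖| + 2 := by
    refine (Complex.norm_le_abs_re_add_abs_im _).trans ?_
    rw [Complex.log_re, Complex.log_im]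
    have : |t.arg| ≤ Real.pi / 2 := Complex.abs_arg_le_pi_div_two_iff.2 hre
    linarith [Real.pi_le_four]
  rw [Complex.norm_real, Real.norm_eq_abs]
  linarith [h.ls]

lemma exp_L_norm {θ : Fin 4 → ℝ} {t : ℂ} (ht : t ≠ 0) (v : ℝ) :
    ‖Complex.exp ((v : ℝ) * ((Real.log (θ 1) : ℂ) + Complex.log t))‖ = Real.exp (v * Real.log (θ 1)) * ‖t‖ ^ v := by
  rw [Complex.norm_exp, Real.rpow_def_of_pos (norm_pos_iff.2 ht), ← Real.exp_add]
  congr 1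
  rw [Complex.re_ofReal_mul, Complex.add_re, Complex.log_re, Complex.ofReal_re]; ring

lemma exp_L_bd {M Λ a1 a2 : ℝ} {θ : Fin 4 → ℝ} (h : PB M Λ a1 a2 θ) {t : ℂ} (ht : t ≠ 0) {lo v : ℝ} (h0 : 0 ≤ lo) (hv : v ∈ Icc lo 2) :
    ‖Complex.exp ((v : ℝ) * ((Real.log (θ 1) : ℂ) + Complex.log t))‖ ≤ Real.exp (2 * Λ) * (‖t‖ ^ lo + ‖t‖ ^ (2:ℝ)) := by
  rw [exp_L_norm ht]
  have hp := norm_pos_iff.2 ht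
  have h1 : ‖t‖ ^ v ≤ ‖t‖ ^ lo + ‖t‖ ^ (2:ℝ) := by
    rcases le_total ‖t‖ 1 with h | h
    · have := Real.rpow_le_rpow_of_exponent_ge hp h hv.1
      have : 0 ≤ ‖t‖ ^ (2:ℝ) := by positivity
      linarith
    · have := Real.rpow_le_rpow_of_exponent_le h hv.2
      have : 0 ≤ ‖t‖ ^ lo := by positivity
      linarith
  have h2 : v * Real.log (θ 1) ≤ 2 * Λ := by
    have : v * Real.log (θ 1) ≤ v * Λ := mul_le_mul_of_nonneg_left ((le_abs_self _).trans h.ls) (h0.trans hv.1)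
    have : 0 ≤ Λ := (abs_nonneg _).trans h.ls
    nlinarith [hv.2]
  gcongr

lemma KW_bd {A lo γ : ℝ} (hA : 0 ≤ A) (hγ : 0 < γ) (hlo : γ < lo) (hlo1 : lo ≤ 1) :
    ∃ C : ℝ, 0 ≤ C ∧ ∀ r : ℝ, 0 < r → (A + |Real.log r|) ^ 2 * (r ^ lo + r ^ (2:ℝ)) ≤ C * (r ^ γ + r ^ (3:ℝ)) := by
  set ε := (lo - γ) / 2 with hε
  have hε0 : 0 < ε := by simp only [hε]; linarith
  refine ⟨2 * (A + 1 / ε) ^ 2, by positivity, fun r hr => ?_⟩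
  have hg : 0 ≤ r ^ γ := by positivity
  have h3 : 0 ≤ r ^ (3:ℝ) := by positivity
  rcases le_total r 1 with h | h
  · have hl : |Real.log r| ≤ r ^ (-ε) / ε := by
      rw [abs_of_nonpos (Real.log_nonpos hr.le h), ← Real.log_inv, Real.rpow_neg hr.le, ← Real.inv_rpow hr.le]
      exact Real.log_le_rpow_div (by positivity) hε0
    have h1 : 1 ≤ r ^ (-ε) := Real.one_le_rpow_of_pos_of_le_one_of_nonpos hr h (by linarith)
    have hk : A + |Real.log r| ≤ (A + 1 / ε) * r ^ (-ε) := by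
      rw [add_mul, one_div_mul_eq_div]; nlinarith
    have hw : r ^ lo + r ^ (2:ℝ) ≤ 2 * r ^ lo := by
      have := Real.rpow_le_rpow_of_exponent_ge hr h (show lo ≤ 2 by linarith)
      linarith
    calc (A + |Real.log r|) ^ 2 * (r ^ lo + r ^ (2:ℝ)) ≤ ((A + 1 / ε) * r ^ (-ε)) ^ 2 * (2 * r ^ lo) := by gcongr
      _ = 2 * (A + 1 / ε) ^ 2 * (r ^ (-ε) * r ^ (-ε) * r ^ lo) := by ring
      _ = 2 * (A + 1 / ε) ^ 2 * r ^ γ := by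
        rw [← Real.rpow_add hr, ← Real.rpow_add hr]; congr 2; rw [hε]; ring
      _ ≤ _ := by gcongr; linarith
  · have hl : |Real.log r| ≤ r ^ ε / ε := by
      rw [abs_of_nonneg (Real.log_nonneg h)]
      exact Real.log_le_rpow_div (by positivity) hε0
    have h1 : 1 ≤ r ^ ε := Real.one_le_rpow h hε0.le
    have hk : A + |Real.log r| ≤ (A + 1 / ε) * r ^ ε := by
      rw [add_mul, one_div_mul_eq_div]; nlinarith
    have hw : r ^ lo + r ^ (2:ℝ) ≤ 2 * r ^ (2:ℝ) := by
      have := Real.rpow_le_rpow_of_exponent_le h (show lo ≤ 2 by linarith)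
      linarith
    calc (A + |Real.log r|) ^ 2 * (r ^ lo + r ^ (2:ℝ)) ≤ ((A + 1 / ε) * r ^ ε) ^ 2 * (2 * r ^ (2:ℝ)) := by gcongr
      _ = 2 * (A + 1 / ε) ^ 2 * (r ^ ε * r ^ ε * r ^ (2:ℝ)) := by ring
      _ = 2 * (A + 1 / ε) ^ 2 * r ^ (ε + ε + 2) := by
        rw [← Real.rpow_add hr, ← Real.rpow_add hr]
      _ ≤ 2 * (A + 1 / ε) ^ 2 * r ^ (3:ℝ) := by
        gcongr
        simp only [hε]; linarith
      _ ≤ _ := by gcongr; linarith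

lemma lin_bd {r γ : ℝ} (hr : 0 < r) (hγ1 : γ ≤ 1) : r ≤ r ^ γ + r ^ (3:ℝ) := by
  have hg : 0 ≤ r ^ γ := by positivity
  have h3 : 0 ≤ r ^ (3:ℝ) := by positivity
  rcases le_total r 1 with h | h
  · have := Real.rpow_le_rpow_of_exponent_ge hr h hγ1
    rw [Real.rpow_one] at this; linarith
  · have := Real.rpow_le_rpow_of_exponent_le h (show (1:ℝ) ≤ 3 by norm_num)
    rw [Real.rpow_one] at this; linarith

lemma psiC_bd {M Λ a1 a2 γ : ℝ} (hM : 0 ≤ M) (hΛ : 0 ≤ Λ) (h2 : a2 ≤ 2) (hγ : 0 < γ) (hγa : γ < a1) (hγ1 : γ < 1) :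
    ∃ C : ℝ, 0 ≤ C ∧ ∀ θ, PB M Λ a1 a2 θ → ∀ t : ℂ, t ≠ 0 → 0 ≤ t.re → ‖psiC θ t‖ ≤ C * (‖t‖ ^ γ + ‖t‖ ^ (3:ℝ)) := by
  obtain ⟨C, hC, hCb⟩ := KW_bd (A := Λ + 2) (lo := min a1 1) (γ := γ) (by linarith) hγ (lt_min hγa hγ1) (min_le_right _ _)
  refine ⟨M + 3 * Real.exp (2 * Λ) * C, by positivity, fun θ h t ht hre => ?_⟩
  have hp := norm_pos_iff.2 ht
  have hlo : 0 ≤ min a1 1 := (hγ.trans (lt_min hγa hγ1)).le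
  have hK1 : 1 ≤ Λ + 2 + |Real.log ‖t‖| := by linarith [abs_nonneg (Real.log ‖t‖)]
  have h1 := PsiL_bd (a := θ 2) (b := θ 3) (lo := min a1 1) (hi := 2) hlo (min_le_right _ _) (by norm_num) le_rfl ((min_le_left _ _).trans h.al)
    (h.au.trans h2) h.be hK1 (L_bd h hre) (fun v hv => exp_L_bd h ht hlo hv)
  unfold psiC
  refine (norm_add_le _ _).trans ?_
  rw [norm_mul, norm_mul, Complex.norm_I, Complex.norm_real, Real.norm_eq_abs, one_mul]
  have h3 : |θ 0| * ‖t‖ ≤ M * (‖t‖ ^ γ + ‖t‖ ^ (3:ℝ)) := by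
    have := lin_bd hp hγ1.le
    exact mul_le_mul h.mu this (norm_nonneg _) hM
  have h4 := hCb _ hp
  set K := Λ + 2 + |Real.log ‖t‖|
  have h5 : K * (‖t‖ ^ (min a1 1) + ‖t‖ ^ (2:ℝ)) ≤ K ^ 2 * (‖t‖ ^ (min a1 1) + ‖t‖ ^ (2:ℝ)) := by
    gcongr; nlinarith
  calc _ ≤ M * (‖t‖ ^ γ + ‖t‖ ^ (3:ℝ)) + 3 * K * (Real.exp (2 * Λ) * (‖t‖ ^ (min a1 1) + ‖t‖ ^ (2:ℝ))) := add_le_add h3 h1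
    _ = M * (‖t‖ ^ γ + ‖t‖ ^ (3:ℝ)) + 3 * Real.exp (2 * Λ) * (K * (‖t‖ ^ (min a1 1) + ‖t‖ ^ (2:ℝ))) := by ring
    _ ≤ M * (‖t‖ ^ γ + ‖t‖ ^ (3:ℝ)) + 3 * Real.exp (2 * Λ) * (C * (‖t‖ ^ γ + ‖t‖ ^ (3:ℝ))) := by
        gcongr (M * _ + 3 * Real.exp (2 * Λ) * ?_); exact h5.trans h4
    _ = _ := by ring

lemma psiC_diff {M Λ a1 a2 γ : ℝ} (hΛ : 0 ≤ Λ) (h2 : a2 ≤ 2) (hγ : 0 < γ) (hγa : γ < a1) (hγ1 : γ < 1) :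
    ∃ C : ℝ, 0 ≤ C ∧ ∀ θ, PB M Λ a1 a2 θ → ∀ θ', PB M Λ a1 a2 θ' → ∀ t : ℂ, t ≠ 0 → 0 ≤ t.re →
      ‖psiC θ t - psiC θ' t‖ ≤ C * dd θ θ' * (‖t‖ ^ γ + ‖t‖ ^ (3:ℝ)) := by
  obtain ⟨C, hC, hCb⟩ := KW_bd (A := Λ + 2) (lo := min a1 1) (γ := γ) (by linarith) hγ (lt_min hγa hγ1) (min_le_right _ _)
  refine ⟨1 + 16 * (2 + Real.exp Λ) * Real.exp (2 * Λ) * C, by positivity, fun θ h θ' h' t ht hre => ?_⟩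
  have hp := norm_pos_iff.2 ht
  have hlo : 0 ≤ min a1 1 := (hγ.trans (lt_min hγa hγ1)).le
  have hK1 : 1 ≤ Λ + 2 + |Real.log ‖t‖| := by linarith [abs_nonneg (Real.log ‖t‖)]
  have h1 := PsiL_diff (a := θ 2) (b := θ 3) (a' := θ' 2) (b' := θ' 3) (lo := min a1 1) (hi := 2) hlo (min_le_right _ _) (by norm_num) le_rfl ((min_le_left _ _).trans h.al)
    (h.au.trans h2) ((min_le_left _ _).trans h'.al)
    (h'.au.trans h2) h.be h'.be hK1 (L_bd h hre) (L_bd h' hre) (fun v hv => exp_L_bd h ht hlo hv) (fun v hv => exp_L_bd h' ht hlo hv)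
  have hd0 := dd_nonneg θ θ'
  have hL : ‖(Real.log (θ 1) : ℂ) + Complex.log t - ((Real.log (θ' 1) : ℂ) + Complex.log t)‖ ≤ Real.exp Λ * dd θ θ' := by
    rw [add_sub_add_right_eq_sub, ← Complex.ofReal_sub, Complex.norm_real, Real.norm_eq_abs]
    refine (log_lip h.sg h'.sg h.ls h'.ls).trans ?_
    gcongr; exact le_dd θ θ' 1
  have hs : |θ 2 - θ' 2| + |θ 3 - θ' 3| + ‖(Real.log (θ 1) : ℂ) + Complex.log t - ((Real.log (θ' 1) : ℂ) + Complex.log t)‖ ≤ (2 + Real.exp Λ) * dd θ θ' := by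
    linarith [le_dd θ θ' 2, le_dd θ θ' 3]
  have e : psiC θ t - psiC θ' t = Complex.I * ((θ 0 - θ' 0 : ℝ) : ℂ) * t + (PsiL (θ 2) (θ 3) ((Real.log (θ 1) : ℂ) + Complex.log t) - PsiL (θ' 2) (θ' 3) ((Real.log (θ' 1) : ℂ) + Complex.log t)) := by
    unfold psiC; push_cast; ring
  rw [e]
  refine (norm_add_le _ _).trans ?_
  rw [norm_mul, norm_mul, Complex.norm_I, Complex.norm_real, Real.norm_eq_abs, one_mul]
  have h3 : |θ 0 - θ' 0| * ‖t‖ ≤ dd θ θ' * (‖t‖ ^ γ + ‖t‖ ^ (3:ℝ)) := by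
    have := lin_bd hp hγ1.le
    exact mul_le_mul (le_dd θ θ' 0) this (norm_nonneg _) hd0
  have h4 := hCb _ hp
  set K := Λ + 2 + |Real.log ‖t‖|
  calc _ ≤ dd θ θ' * (‖t‖ ^ γ + ‖t‖ ^ (3:ℝ)) + 16 * K ^ 2 * (Real.exp (2 * Λ) * (‖t‖ ^ (min a1 1) + ‖t‖ ^ (2:ℝ))) * ((2 + Real.exp Λ) * dd θ θ') := by
        refine add_le_add h3 (h1.trans ?_); gcongr
    _ = dd θ θ' * (‖t‖ ^ γ + ‖t‖ ^ (3:ℝ)) + 16 * (2 + Real.exp Λ) * Real.exp (2 * Λ) * dd θ θ' * (K ^ 2 * (‖t‖ ^ (min a1 1) + ‖t‖ ^ (2:ℝ))) := by ring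
    _ ≤ dd θ θ' * (‖t‖ ^ γ + ‖t‖ ^ (3:ℝ)) + 16 * (2 + Real.exp Λ) * Real.exp (2 * Λ) * dd θ θ' * (C * (‖t‖ ^ γ + ‖t‖ ^ (3:ℝ))) := by gcongr
    _ = _ := by ring
end

noncomputable section
open MeasureTheory Filter Set

lemma PsiL_real_re (a b x : ℝ) : (PsiL a b (x : ℂ)).re = -Real.exp (a * x) := by
  have hE : EE a (x : ℂ) = ((∫ u in (0:ℝ)..1, x * Real.exp ((1 + u * (a - 1)) * x) : ℝ) : ℂ) := by
    unfold EE
    rw [← intervalIntegral.integral_ofReal]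
    congr 1; ext u; push_cast; ring_nf
  have h1 : Complex.exp (a * (x:ℂ)) = ((Real.exp (a * x) : ℝ) : ℂ) := by push_cast; rfl
  unfold PsiL
  rw [hE, h1]
  simp only [Complex.sub_re, Complex.mul_re, Complex.mul_im, Complex.neg_re, Complex.I_re, Complex.I_im, Complex.ofReal_re, Complex.ofReal_im]
  ring

lemma K_small {A lo δ : ℝ} (hlo : 0 < lo) (hδ : 0 < δ) :
    ∃ S : ℝ, 2 ≤ S ∧ ∀ s : ℝ, S ≤ s → (A + Real.log s) ^ 2 ≤ δ * s ^ lo := by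
  have h1 : (fun s : ℝ => A + Real.log s) =o[atTop] fun s : ℝ => s ^ (lo / 2) := by
    refine Asymptotics.IsLittleO.add ?_ (isLittleO_log_rpow_atTop (by linarith))
    exact Asymptotics.isLittleO_const_left.2 (Or.inr (by
      simpa [Function.comp_def] using tendsto_norm_atTop_atTop.comp (tendsto_rpow_atTop (show 0 < lo / 2 by linarith))))
  have h2 := h1.bound (Real.sqrt_pos.2 hδ)
  obtain ⟨S, hS⟩ := eventually_atTop.1 h2
  refine ⟨max S 2, le_max_right _ _, fun s hs => ?_⟩
  have h3 := hS s ((le_max_left _ _).trans hs)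
  have hs0 : 0 < s := lt_of_lt_of_le two_pos ((le_max_right _ _).trans hs)
  rw [Real.norm_eq_abs, Real.norm_eq_abs, abs_of_pos (show 0 < s ^ (lo/2) by positivity)] at h3
  calc (A + Real.log s) ^ 2 = |A + Real.log s| ^ 2 := (sq_abs _).symm
    _ ≤ (Real.sqrt δ * s ^ (lo / 2)) ^ 2 := by gcongr
    _ = (Real.sqrt δ) ^ 2 * (s ^ (lo / 2) * s ^ (lo / 2)) := by ring
    _ = δ * s ^ lo := by rw [Real.sq_sqrt hδ.le, ← Real.rpow_add hs0]; congr 2; ring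

lemma norm_qd {s y : ℝ} (hs : 0 ≤ s) (hy0 : 0 ≤ y) (hy1 : y ≤ 1) :
    s ≤ ‖(s : ℂ) - Complex.I * y‖ ∧ ‖(s : ℂ) - Complex.I * y‖ ≤ s + 1 := by
  constructor
  · have := Complex.abs_re_le_norm ((s : ℂ) - Complex.I * y)
    simp at this
    rwa [abs_of_nonneg hs] at this
  · refine (norm_sub_le _ _).trans ?_
    simp [abs_of_nonneg hs, abs_of_nonneg hy0, hy1]

lemma log_near {s y : ℝ} (hs : 2 ≤ s) (hy0 : 0 ≤ y) (hy1 : y ≤ 1) :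
    ‖Complex.log ((s : ℂ) - Complex.I * y) - Complex.log (s : ℂ)‖ ≤ 2 / s := by
  have hs0 : 0 < s := by linarith
  have hsc : (s : ℂ) ≠ 0 := by exact_mod_cast hs0.ne'
  have hn : ‖-(Complex.I * ((y / s : ℝ) : ℂ))‖ = y / s := by
    rw [norm_neg, norm_mul, Complex.norm_I, one_mul, Complex.norm_real, Real.norm_eq_abs, abs_of_nonneg (by positivity)]
  have e : (s : ℂ) - Complex.I * y = (s : ℂ) * (1 + -(Complex.I * ((y / s : ℝ) : ℂ))) := by
    push_cast; field_simp; ring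
  have hne : (1 + -(Complex.I * ((y / s : ℝ) : ℂ))) ≠ 0 := by
    intro h
    have := congrArg Complex.re h
    simp at this
  rw [e, Complex.log_ofReal_mul hs0 hne, ← Complex.ofReal_log hs0.le, add_sub_cancel_left]
  have h1 : y / s ≤ 1 / s := by gcongr
  have h2 : 1 / s ≤ 1 / 2 := one_div_le_one_div_of_le (by norm_num) hs
  have := Complex.norm_log_one_add_half_le_self (z := -(Complex.I * ((y / s : ℝ) : ℂ))) (by rw [hn]; linarith)
  rw [hn] at this
  refine this.trans ?_
  rw [show 2 / s = 2 * (1 / s) by ring]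
  have : 0 ≤ 1 / s := by positivity
  linarith

lemma psiC_decay {M Λ a1 a2 : ℝ} (hM : 0 ≤ M) (hΛ : 0 ≤ Λ) (ha1 : 0 < a1) (ha12 : a1 ≤ 2) (h2 : a2 ≤ 2) :
    ∃ c : ℝ, 0 < c ∧ ∃ C : ℝ, 0 ≤ C ∧ ∀ θ, PB M Λ a1 a2 θ → ∀ s y : ℝ, 0 ≤ s → 0 ≤ y → y ≤ 1 → (s : ℂ) - Complex.I * y ≠ 0 →
      (psiC θ ((s : ℂ) - Complex.I * y)).re ≤ - c * s ^ a1 + C := by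
  obtain ⟨C1, hC1, hb⟩ := psiC_bd (a1 := a1) (a2 := a2) (γ := min a1 1 / 2) hM hΛ h2 (by positivity)
    (by linarith [min_le_left a1 1, lt_min ha1 one_pos]) (by linarith [min_le_right a1 1])
  set lo := min a1 1 with hlo
  have hlo0 : 0 < lo := lt_min ha1 one_pos
  set e2 := Real.exp (-(2 * Λ)) with he2
  set B := 16 * Real.exp (2 * Λ) * 4 * 2 with hB
  have hB0 : 0 < B := by positivity
  obtain ⟨S, hS2, hS⟩ := K_small (A := Λ + 2 + 1) (lo := lo) (δ := e2 / 4 / B) hlo0 (by positivity)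
  refine ⟨e2 / 2, by positivity, M + C1 * ((S + 1) ^ (lo / 2) + (S + 1) ^ (3:ℝ)) + e2 / 2 * S ^ a1, by positivity, fun θ h s y hs hy0 hy1 ht => ?_⟩
  obtain ⟨hn1, hn2⟩ := norm_qd hs hy0 hy1
  set t : ℂ := (s : ℂ) - Complex.I * y with htdef
  have hre : t.re = s := by simp [htdef]
  have him : t.im = -y := by simp [htdef]
  have hp := norm_pos_iff.2 ht
  rcases le_total s S with hsS | hsS
  · have h1 := hb θ h t ht (by rw [hre]; exact hs)
    have h3 := (Complex.re_le_norm (psiC θ t)).trans h1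
    have h4 : ‖t‖ ^ (lo / 2) + ‖t‖ ^ (3:ℝ) ≤ (S + 1) ^ (lo / 2) + (S + 1) ^ (3:ℝ) := by
      have : ‖t‖ ≤ S + 1 := by linarith
      gcongr
    have h5 : C1 * (‖t‖ ^ (lo / 2) + ‖t‖ ^ (3:ℝ)) ≤ C1 * ((S + 1) ^ (lo / 2) + (S + 1) ^ (3:ℝ)) := by gcongr
    have h6 : e2 / 2 * s ^ a1 ≤ e2 / 2 * S ^ a1 := by gcongr
    linarith
  · have hs2 : 2 ≤ s := hS2.trans hsS
    have hs0 : 0 < s := by linarith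
    have hsc : (s : ℂ) ≠ 0 := by exact_mod_cast hs0.ne'
    have hK := hS s hsS
    set K := Λ + 2 + 1 + Real.log s with hKdef
    have hls : 0 ≤ Real.log s := Real.log_nonneg (by linarith)
    have hK1 : 1 ≤ K := by simp only [hKdef]; linarith
    have hlog2 : Real.log ‖t‖ ≤ Real.log s + 1 := by
      have h7 : ‖t‖ ≤ 2 * s := by linarith
      have h8 := Real.log_le_log hp h7
      rw [Real.log_mul (by norm_num) hs0.ne'] at h8
      linarith [Real.log_two_lt_d9]
    have hlog0 : 0 ≤ Real.log ‖t‖ := Real.log_nonneg (by linarith)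
    have b1 : ‖(Real.log (θ 1) : ℂ) + Complex.log t‖ ≤ K := by
      refine (L_bd h (by rw [hre]; exact hs)).trans ?_
      rw [abs_of_nonneg hlog0]; simp only [hKdef]; linarith
    have b2 : ‖(Real.log (θ 1) : ℂ) + Complex.log (s : ℂ)‖ ≤ K := by
      refine (L_bd h (by simpa using hs)).trans ?_
      rw [Complex.norm_real, Real.norm_eq_abs, abs_of_pos hs0, abs_of_nonneg hls]; simp only [hKdef]; linarith
    have hα0 : 0 < θ 2 := ha1.trans_le h.al
    have hα2 : θ 2 ≤ 2 := h.au.trans h2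
    set hi := max (θ 2) 1 with hhi
    have hhi2 : hi ≤ 2 := max_le hα2 (by norm_num)
    have hhi1 : 1 ≤ hi := le_max_right _ _
    have w : ∀ z : ℂ, z ≠ 0 → ‖z‖ ≤ 2 * s → ∀ v ∈ Icc (0:ℝ) hi, ‖Complex.exp ((v : ℝ) * ((Real.log (θ 1) : ℂ) + Complex.log z))‖ ≤ Real.exp (2 * Λ) * (4 * s ^ hi) := by
      intro z hz hz2 v hv
      rw [exp_L_norm hz]
      have h9 : v * Real.log (θ 1) ≤ 2 * Λ := by
        have : v * Real.log (θ 1) ≤ v * Λ := mul_le_mul_of_nonneg_left ((le_abs_self _).trans h.ls) hv.1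
        nlinarith [hv.2]
      have h10 : ‖z‖ ^ v ≤ 4 * s ^ hi := by
        calc ‖z‖ ^ v ≤ (2 * s) ^ v := Real.rpow_le_rpow (norm_nonneg _) hz2 hv.1
          _ ≤ (2 * s) ^ hi := Real.rpow_le_rpow_of_exponent_le (by linarith) hv.2
          _ = 2 ^ hi * s ^ hi := Real.mul_rpow (by norm_num) hs0.le
          _ ≤ 2 ^ (2:ℝ) * s ^ hi := by gcongr; norm_num
          _ = 4 * s ^ hi := by norm_num
      gcongr
    have hD := PsiL_diff (a := θ 2) (b := θ 3) (a' := θ 2) (b' := θ 3) (lo := 0) (hi := hi) le_rfl zero_le_one hhi1 hhi2 hα0.le (le_max_left _ _)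
      hα0.le (le_max_left _ _) h.be h.be hK1 b1 b2 (w t ht (by linarith)) (w s hsc (by
        rw [Complex.norm_real, Real.norm_eq_abs, abs_of_pos hs0]; linarith))
    rw [sub_self, sub_self, abs_zero, add_zero, zero_add, add_sub_add_left_eq_sub] at hD
    have hLn := log_near hs2 hy0 hy1
    have hsum : s ^ hi / s ≤ 1 + s ^ (θ 2) / s := by
      rcases le_total (θ 2) 1 with h1 | h1
      · rw [hhi, max_eq_right h1, Real.rpow_one, div_self hs0.ne']
        have : 0 ≤ s ^ (θ 2) / s := by positivity
        linarith
      · rw [hhi, max_eq_left h1]; linarith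
    have hmain : ‖PsiL (θ 2) (θ 3) ((Real.log (θ 1) : ℂ) + Complex.log t) - PsiL (θ 2) (θ 3) ((Real.log (θ 1) : ℂ) + Complex.log (s : ℂ))‖ ≤ e2 / 2 * s ^ (θ 2) := by
      calc _ ≤ 16 * K ^ 2 * (Real.exp (2 * Λ) * (4 * s ^ hi)) * ‖Complex.log t - Complex.log (s : ℂ)‖ := hD
        _ ≤ 16 * K ^ 2 * (Real.exp (2 * Λ) * (4 * s ^ hi)) * (2 / s) := by gcongr
        _ = B * K ^ 2 * (s ^ hi / s) := by rw [hB]; ring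
        _ ≤ B * (e2 / 4 / B * s ^ lo) * (1 + s ^ (θ 2) / s) := by gcongr
        _ = e2 / 4 * (s ^ lo + s ^ lo * (s ^ (θ 2) / s)) := by field_simp
        _ ≤ e2 / 4 * (s ^ (θ 2) + s * (s ^ (θ 2) / s)) := by
          gcongr
          · linarith
          · exact (min_le_left _ _).trans h.al
          · calc s ^ lo ≤ s ^ (1:ℝ) := Real.rpow_le_rpow_of_exponent_le (by linarith) (min_le_right _ _)
              _ = s := Real.rpow_one s
        _ = e2 / 2 * s ^ (θ 2) := by field_simp; ring
    have hR : (PsiL (θ 2) (θ 3) ((Real.log (θ 1) : ℂ) + Complex.log (s : ℂ))).re ≤ - e2 * s ^ (θ 2) := by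
      rw [← Complex.ofReal_log hs0.le, ← Complex.ofReal_add, PsiL_real_re, mul_add, Real.exp_add, mul_comm (θ 2) (Real.log s), ← Real.rpow_def_of_pos hs0, neg_mul, neg_le_neg_iff]
      gcongr
      rw [he2, Real.exp_le_exp]
      have h8 := (abs_le.1 h.ls).1
      nlinarith
    have hre2 : (psiC θ t).re ≤ M + (PsiL (θ 2) (θ 3) ((Real.log (θ 1) : ℂ) + Complex.log t)).re := by
      unfold psiC
      rw [Complex.add_re]
      have : (Complex.I * (θ 0 : ℂ) * t).re = θ 0 * y := by simp [him]
      rw [this]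
      have : θ 0 * y ≤ M * 1 := mul_le_mul ((le_abs_self _).trans h.mu) hy1 hy0 hM
      linarith
    have h11 := (Complex.re_le_norm _).trans hmain
    rw [Complex.sub_re] at h11
    have h12 : s ^ a1 ≤ s ^ (θ 2) := Real.rpow_le_rpow_of_exponent_le (by linarith) h.al
    have h13 : 0 ≤ C1 * ((S + 1) ^ (lo / 2) + (S + 1) ^ (3:ℝ)) + e2 / 2 * S ^ a1 := by positivity
    have h14 : e2 / 2 * s ^ a1 ≤ e2 / 2 * s ^ (θ 2) := by gcongr
    linarith
end

noncomputable section
open MeasureTheory Filter Set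

def g0 (c a s : ℝ) : ℝ := (1 + s) ^ (3:ℕ) * Real.exp (-c * s ^ a)

lemma g0_int {c a : ℝ} (hc : 0 < c) (ha : 0 < a) : IntegrableOn (g0 c a) (Ioi 0) := by
  have h3 := integrableOn_rpow_mul_exp_neg_mul_rpow (p := a) (s := 3) (b := c) (by norm_num) ha hc
  have h2 := integrableOn_rpow_mul_exp_neg_mul_rpow (p := a) (s := 2) (b := c) (by norm_num) ha hc
  have h1 := integrableOn_rpow_mul_exp_neg_mul_rpow (p := a) (s := 1) (b := c) (by norm_num) ha hc
  have h0 := integrableOn_rpow_mul_exp_neg_mul_rpow (p := a) (s := 0) (b := c) (by norm_num) ha hc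
  have := ((h3.add (h2.const_mul 3)).add (h1.const_mul 3)).add h0
  refine this.congr (Eventually.of_forall fun s => ?_)
  simp only [Pi.add_apply, g0, Real.rpow_one, Real.rpow_zero]
  rw [show (3:ℝ) = ((3:ℕ):ℝ) by norm_num, show (2:ℝ) = ((2:ℕ):ℝ) by norm_num, Real.rpow_natCast, Real.rpow_natCast]
  push_cast; ring

lemma g0_lim {c a : ℝ} (hc : 0 < c) (ha : 0 < a) : Tendsto (g0 c a) atTop (nhds 0) := by
  have h := (tendsto_rpow_mul_exp_neg_mul_atTop_nhds_zero (3 / a) c hc).comp (tendsto_rpow_atTop ha)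
  have h' := h.const_mul 8
  rw [mul_zero] at h'
  refine squeeze_zero' (f := g0 c a) ?_ ?_ h'
  · filter_upwards [eventually_ge_atTop 0] with s hs
    unfold g0; positivity
  · filter_upwards [eventually_ge_atTop 1] with s hs
    have hs0 : 0 < s := by linarith
    simp only [Function.comp_apply, g0]
    rw [← Real.rpow_mul hs0.le, mul_div_cancel₀ _ ha.ne', ← mul_assoc, show (3:ℝ) = ((3:ℕ):ℝ) by norm_num, Real.rpow_natCast]
    gcongr
    calc (1 + s) ^ 3 ≤ (2 * s) ^ 3 := by gcongr; linarith
      _ = 8 * s ^ 3 := by ring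

lemma g0_nonneg {c a s : ℝ} (hs : 0 ≤ s) : 0 ≤ g0 c a s := by unfold g0; positivity

def QQ : Set ℂ := {t | 0 ≤ t.re ∧ -1 ≤ t.im ∧ t.im ≤ 0}

lemma contour {c a G : ℝ} (hc : 0 < c) (ha : 0 < a) {Φ : ℂ → ℂ} (hcont : ContinuousOn Φ QQ)
    (hdiff : ∀ t : ℂ, 0 < t.re → DifferentiableAt ℂ Φ t)
    (hb : ∀ s y : ℝ, 0 ≤ s → 0 ≤ y → y ≤ 1 → ‖Φ ((s : ℂ) - Complex.I * y)‖ ≤ G * g0 c a s) {x : ℝ} (hx : 0 ≤ x) :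
    |(∫ s in Ioi (0:ℝ), Complex.exp (-Complex.I * (s : ℂ) * (x : ℂ)) * Φ s).re| ≤
      Real.exp (-x) * (G * ∫ s in Ioi (0:ℝ), g0 c a s) + ∫ y in (0:ℝ)..1, Real.exp (-(x * y)) * |(Φ (-(Complex.I * y))).im| := by
  set F : ℂ → ℂ := fun t => Complex.exp (-Complex.I * t * (x : ℂ)) * Φ t with hF
  have hFc : ContinuousOn F QQ := ContinuousOn.mul (by fun_prop) hcont
  have hFd : ∀ t : ℂ, 0 < t.re → DifferentiableAt ℂ F t := fun t ht =>
    DifferentiableAt.mul (by fun_prop) (hdiff t ht)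
  have hEn : ∀ s y : ℝ, ‖Complex.exp (-Complex.I * ((s : ℂ) - Complex.I * y) * (x : ℂ))‖ = Real.exp (-(x * y)) := by
    intro s y
    rw [Complex.norm_exp]; congr 1; simp; ring
  have hFn : ∀ s y : ℝ, 0 ≤ s → 0 ≤ y → y ≤ 1 → ‖F ((s : ℂ) - Complex.I * y)‖ ≤ Real.exp (-(x * y)) * (G * g0 c a s) := by
    intro s y hs hy0 hy1
    rw [hF]; simp only
    rw [norm_mul, hEn]
    gcongr
    exact hb s y hs hy0 hy1
  have hFn1 : ∀ s y : ℝ, 0 ≤ s → 0 ≤ y → y ≤ 1 → ‖F ((s : ℂ) - Complex.I * y)‖ ≤ G * g0 c a s := by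
    intro s y hs hy0 hy1
    refine (hFn s y hs hy0 hy1).trans (mul_le_of_le_one_left ((norm_nonneg _).trans (hb s y hs hy0 hy1)) ?_)
    rw [Real.exp_le_one_iff]; have := mul_nonneg hx hy0; linarith
  have hline : ∀ y : ℝ, 0 ≤ y → y ≤ 1 → ContinuousOn (fun s : ℝ => F ((s : ℂ) - Complex.I * y)) (Ici 0) := by
    intro y hy0 hy1
    refine hFc.comp (by fun_prop) ?_
    intro s hs
    exact ⟨by simpa using hs, by simpa using hy1, by simpa using hy0⟩
  have hvert : ∀ s : ℝ, 0 ≤ s → ContinuousOn (fun y : ℝ => F ((s : ℂ) - Complex.I * y)) (Icc 0 1) := by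
    intro s hs
    refine hFc.comp (by fun_prop) ?_
    intro y hy
    exact ⟨by simpa using hs, by simpa using hy.2, by simpa using hy.1⟩
  have hint : ∀ y : ℝ, 0 ≤ y → y ≤ 1 → IntegrableOn (fun s : ℝ => F ((s : ℂ) - Complex.I * y)) (Ioi 0) := by
    intro y hy0 hy1
    refine Integrable.mono' ((g0_int hc ha).const_mul G) ?_ ?_
    · exact ((hline y hy0 hy1).mono Ioi_subset_Ici_self).aestronglyMeasurable measurableSet_Ioi
    · refine (ae_restrict_iff' measurableSet_Ioi).2 (Eventually.of_forall fun s hs => ?_)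
      exact hFn1 s y (le_of_lt hs) hy0 hy1
  have hrect : ∀ B : ℝ, 0 < B → (∫ s in (0:ℝ)..B, F ((s : ℂ) - Complex.I * (1:ℝ))) - (∫ s in (0:ℝ)..B, F ((s : ℂ) - Complex.I * (0:ℝ)))
      + Complex.I * (∫ y in (0:ℝ)..1, F ((B : ℂ) - Complex.I * y)) - Complex.I * (∫ y in (0:ℝ)..1, F (((0:ℝ) : ℂ) - Complex.I * y)) = 0 := by
    intro B hB
    have h := Complex.integral_boundary_rect_eq_zero_of_continuousOn_of_differentiableOn F (-Complex.I) (B : ℂ) ?_ ?_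
    · simp only [Complex.neg_re, Complex.I_re, neg_zero, Complex.ofReal_re, Complex.neg_im, Complex.I_im, Complex.ofReal_im, smul_eq_mul] at h
      have e : ∀ s : ℝ, (∫ y in (-1:ℝ)..0, F ((s : ℂ) + y * Complex.I)) = ∫ y in (0:ℝ)..1, F ((s : ℂ) - Complex.I * y) := by
        intro s
        have := intervalIntegral.integral_comp_neg (a := (0:ℝ)) (b := 1) (fun y : ℝ => F ((s : ℂ) + y * Complex.I))
        rw [neg_zero] at this
        rw [← this]
        congr 1; ext y; congr 1; push_cast; ring
      rw [e, e] at h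
      rw [← h]
      congr 3
      congr 1
      · congr 1; ext s; congr 1; push_cast; ring
      · congr 1; ext s; congr 1; push_cast; ring
    · refine hFc.mono ?_
      intro t ht
      rw [Complex.mem_reProdIm] at ht
      simp only [Complex.neg_re, Complex.I_re, neg_zero, Complex.ofReal_re, Complex.neg_im, Complex.I_im, Complex.ofReal_im] at ht
      rw [uIcc_of_le hB.le, uIcc_of_le (by norm_num)] at ht
      exact ⟨ht.1.1, ht.2.1, ht.2.2⟩
    · intro t ht
      rw [Complex.mem_reProdIm] at ht
      simp only [Complex.neg_re, Complex.I_re, neg_zero, Complex.ofReal_re, Complex.neg_im, Complex.I_im, Complex.ofReal_im] at ht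
      rw [min_eq_left hB.le] at ht
      exact (hFd t ht.1.1).differentiableWithinAt
  have hlimV : Tendsto (fun B : ℝ => ∫ y in (0:ℝ)..1, F ((B : ℂ) - Complex.I * y)) atTop (nhds 0) := by
    have hz : Tendsto (fun B : ℝ => G * g0 c a B) atTop (nhds 0) := by
      simpa using (g0_lim hc ha).const_mul G
    refine squeeze_zero_norm' ?_ hz
    filter_upwards [eventually_ge_atTop 0] with B hB
    have := intervalIntegral.norm_integral_le_of_norm_le_const (a := (0:ℝ)) (b := 1) (f := fun y : ℝ => F ((B : ℂ) - Complex.I * y)) (C := G * g0 c a B) ?_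
    · simpa using this
    · intro y hy
      rw [uIoc_of_le zero_le_one] at hy
      exact hFn1 B y hB hy.1.le hy.2
  have hid : (∫ s in Ioi (0:ℝ), F ((s : ℂ) - Complex.I * (1:ℝ))) - (∫ s in Ioi (0:ℝ), F ((s : ℂ) - Complex.I * (0:ℝ)))
      + Complex.I * 0 - Complex.I * (∫ y in (0:ℝ)..1, F (((0:ℝ) : ℂ) - Complex.I * y)) = 0 := by
    have hl := (((intervalIntegral_tendsto_integral_Ioi 0 (hint 1 zero_le_one le_rfl) tendsto_id).sub
      (intervalIntegral_tendsto_integral_Ioi 0 (hint 0 le_rfl zero_le_one) tendsto_id)).add (hlimV.const_mul Complex.I)).sub_const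
        (Complex.I * (∫ y in (0:ℝ)..1, F (((0:ℝ) : ℂ) - Complex.I * y)))
    refine tendsto_nhds_unique hl ?_
    refine tendsto_const_nhds.congr' ?_
    filter_upwards [eventually_gt_atTop 0] with B hB
    exact (hrect B hB).symm
  have e0 : (∫ s in Ioi (0:ℝ), Complex.exp (-Complex.I * (s : ℂ) * (x : ℂ)) * Φ s) = ∫ s in Ioi (0:ℝ), F ((s : ℂ) - Complex.I * (0:ℝ)) := by
    congr 1; ext s; simp [hF]
  have e1 : (∫ s in Ioi (0:ℝ), Complex.exp (-Complex.I * (s : ℂ) * (x : ℂ)) * Φ s).re =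
      (∫ s in Ioi (0:ℝ), F ((s : ℂ) - Complex.I * (1:ℝ))).re + (∫ y in (0:ℝ)..1, F (((0:ℝ) : ℂ) - Complex.I * y)).im := by
    rw [e0]
    have := congrArg Complex.re hid
    simp only [Complex.sub_re, Complex.add_re, Complex.mul_re, Complex.I_re, Complex.I_im, Complex.zero_re, Complex.zero_im] at this
    linarith
  rw [e1]
  refine (abs_add_le _ _).trans (add_le_add ?_ ?_)
  · refine (Complex.abs_re_le_norm _).trans ?_
    rw [← integral_const_mul, ← integral_const_mul]
    refine norm_integral_le_of_norm_le (((g0_int hc ha).const_mul G).const_mul _) ?_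
    refine (ae_restrict_iff' measurableSet_Ioi).2 (Eventually.of_forall fun s hs => ?_)
    have := hFn s 1 (le_of_lt hs) zero_le_one le_rfl
    rwa [mul_one] at this
  · have hii : IntervalIntegrable (fun y : ℝ => F (((0:ℝ) : ℂ) - Complex.I * y)) volume 0 1 := by
      apply ContinuousOn.intervalIntegrable
      rw [uIcc_of_le zero_le_one]; exact hvert 0 le_rfl
    have e2 : (∫ y in (0:ℝ)..1, F (((0:ℝ) : ℂ) - Complex.I * y)).im = ∫ y in (0:ℝ)..1, (F (((0:ℝ) : ℂ) - Complex.I * y)).im := by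
      have := Complex.imCLM.intervalIntegral_comp_comm hii
      exact this.symm
    rw [e2]
    refine (intervalIntegral.abs_integral_le_integral_abs zero_le_one).trans (le_of_eq ?_)
    congr 1; ext y
    have e3 : F (((0:ℝ) : ℂ) - Complex.I * y) = ((Real.exp (-(x * y)) : ℝ) : ℂ) * Φ (-(Complex.I * y)) := by
      simp only [hF, Complex.ofReal_zero, zero_sub]
      congr 1
      rw [Complex.ofReal_exp]
      congr 1
      push_cast
      linear_combination (y:ℂ) * x * Complex.I_mul_I
    rw [e3, Complex.im_ofReal_mul, abs_mul, abs_of_pos (Real.exp_pos _)]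

lemma exp_pow_bd {γ : ℝ} (hγ : 0 < γ) : ∃ C : ℝ, 0 ≤ C ∧ ∀ x : ℝ, 0 ≤ x → Real.exp (-x) ≤ C * (1 + x) ^ (-(1 + γ)) := by
  set p := 1 + γ with hp
  have hp0 : 0 < p := by linarith
  refine ⟨Real.exp (1 - p + p * Real.log p), (Real.exp_pos _).le, fun x hx => ?_⟩
  have h1 := Real.log_le_sub_one_of_pos (show 0 < (1 + x) / p by positivity)
  rw [Real.log_div (by linarith) hp0.ne'] at h1
  have h2 : p * Real.log (1 + x) ≤ 1 + x - p + p * Real.log p := by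
    have h3 := mul_le_mul_of_nonneg_left h1 hp0.le
    have h4 : p * ((1 + x) / p - 1) = 1 + x - p := by field_simp
    rw [h4] at h3; linarith
  rw [Real.rpow_def_of_pos (by linarith), ← Real.exp_add, Real.exp_le_exp]
  linarith

lemma tail {c a γ : ℝ} (hc : 0 < c) (ha : 0 < a) (hγ : 0 < γ) :
    ∃ C : ℝ, 0 ≤ C ∧ ∀ (G D : ℝ) (Φ : ℂ → ℂ), 0 ≤ G → 0 ≤ D → ContinuousOn Φ QQ →
    (∀ t : ℂ, 0 < t.re → DifferentiableAt ℂ Φ t) →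
    (∀ s y : ℝ, 0 ≤ s → 0 ≤ y → y ≤ 1 → ‖Φ ((s : ℂ) - Complex.I * y)‖ ≤ G * g0 c a s) →
    (∀ y : ℝ, 0 < y → y ≤ 1 → |(Φ (-(Complex.I * y))).im| ≤ D * y ^ γ) → ∀ x : ℝ, 0 ≤ x →
    |(∫ s in Ioi (0:ℝ), Complex.exp (-Complex.I * (s : ℂ) * (x : ℂ)) * Φ s).re| ≤ C * (G + D) * (1 + x) ^ (-(1 + γ)) := by
  obtain ⟨C1, hC1, hexp⟩ := exp_pow_bd hγ
  set I0 := ∫ s in Ioi (0:ℝ), g0 c a s with hI0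
  have hI0n : 0 ≤ I0 := setIntegral_nonneg measurableSet_Ioi fun s hs => g0_nonneg (le_of_lt hs)
  have hΓ := Real.Gamma_pos_of_pos (show 0 < γ + 1 by linarith)
  set C2 := Real.exp 1 * Real.Gamma (γ + 1) with hC2
  refine ⟨C1 * I0 + C2, by positivity, fun G D Φ hG hD hcont hdiff hb hDb x hx => ?_⟩
  refine (contour hc ha hcont hdiff hb hx).trans ?_
  rw [← hI0]
  have hP : 0 < (1 + x) ^ (-(1 + γ)) := by positivity
  -- second integral
  have hcon : ContinuousOn (fun y : ℝ => Real.exp (-(x * y)) * |(Φ (-(Complex.I * y))).im|) (Icc 0 1) := by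
    refine ContinuousOn.mul (by fun_prop) (ContinuousOn.abs (Complex.continuous_im.comp_continuousOn (hcont.comp (by fun_prop) ?_)))
    intro y hy
    exact ⟨by simp, by simpa using hy.2, by simpa using hy.1⟩
  have hgi : IntegrableOn (fun y : ℝ => y ^ γ * Real.exp (-((1 + x) * y))) (Ioi 0) := by
    have := integrableOn_rpow_mul_exp_neg_mul_rpow (p := 1) (s := γ) (b := 1 + x) (by linarith) one_pos (by linarith)
    refine this.congr (Eventually.of_forall fun y => ?_)
    simp only [Real.rpow_one, neg_mul]
  have h2 : (∫ y in (0:ℝ)..1, Real.exp (-(x * y)) * |(Φ (-(Complex.I * y))).im|) ≤ D * C2 * (1 + x) ^ (-(1 + γ)) := by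
    rw [intervalIntegral.integral_of_le zero_le_one]
    calc (∫ y in Ioc (0:ℝ) 1, Real.exp (-(x * y)) * |(Φ (-(Complex.I * y))).im|)
        ≤ ∫ y in Ioc (0:ℝ) 1, D * Real.exp 1 * (y ^ γ * Real.exp (-((1 + x) * y))) := by
          refine setIntegral_mono_on ?_ ?_ measurableSet_Ioc fun y hy => ?_
          · exact (hcon.integrableOn_Icc).mono_set Ioc_subset_Icc_self
          · exact IntegrableOn.mono_set (Integrable.const_mul hgi _) Ioc_subset_Ioi_self
          · have := hDb y hy.1 hy.2
            have he : Real.exp (-(x * y)) ≤ Real.exp 1 * Real.exp (-((1 + x) * y)) := by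
              rw [← Real.exp_add, Real.exp_le_exp]; nlinarith [hy.2]
            calc _ ≤ (Real.exp 1 * Real.exp (-((1 + x) * y))) * (D * y ^ γ) := by gcongr
              _ = _ := by ring
      _ ≤ ∫ y in Ioi (0:ℝ), D * Real.exp 1 * (y ^ γ * Real.exp (-((1 + x) * y))) := by
          refine setIntegral_mono_set (hgi.const_mul _) ?_ (Ioc_subset_Ioi_self.eventuallyLE)
          refine (ae_restrict_iff' measurableSet_Ioi).2 (Eventually.of_forall fun y hy => ?_)
          have : 0 < y := hy
          simp only [Pi.zero_apply]
          positivity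
      _ = D * C2 * (1 + x) ^ (-(1 + γ)) := by
          rw [integral_const_mul]
          have := Real.integral_rpow_mul_exp_neg_mul_Ioi (a := γ + 1) (r := 1 + x) (by linarith) (by linarith)
          rw [add_sub_cancel_right] at this
          rw [this, hC2, one_div, Real.inv_rpow (by linarith), ← Real.rpow_neg (by linarith), show -(γ + 1) = -(1 + γ) by ring]
          ring
  have h1 : Real.exp (-x) * (G * I0) ≤ C1 * (1 + x) ^ (-(1 + γ)) * (G * I0) := by
    gcongr; exact hexp x hx
  calc _ ≤ C1 * (1 + x) ^ (-(1 + γ)) * (G * I0) + D * C2 * (1 + x) ^ (-(1 + γ)) := add_le_add h1 h2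
    _ = (C1 * I0 * G + C2 * D) * (1 + x) ^ (-(1 + γ)) := by ring
    _ ≤ _ := by
      gcongr
      have : 0 ≤ C1 * I0 * D := by positivity
      have : 0 ≤ C2 * G := by positivity
      nlinarith
end

noncomputable section
open MeasureTheory Filter Set

def FC (θ : Fin 4 → ℝ) (t : ℂ) : ℂ := if t = 0 then 1 else Complex.exp (psiC θ t)

lemma QQ_slit {t : ℂ} (h : t ∈ QQ) (h0 : t ≠ 0) : t ∈ Complex.slitPlane := by
  rw [Complex.mem_slitPlane_iff]
  by_contra hcon
  push Not at hcon
  exact h0 (Complex.ext (le_antisymm hcon.1 h.1) hcon.2)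

lemma FC_diff {θ : Fin 4 → ℝ} {t : ℂ} (ht : t ∈ Complex.slitPlane) : DifferentiableAt ℂ (FC θ) t := by
  have h0 : t ≠ 0 := Complex.slitPlane_ne_zero ht
  have h1 : DifferentiableAt ℂ (fun t => Complex.exp (psiC θ t)) t := (psiC_cont_diff ht).cexp
  refine h1.congr_of_eventuallyEq ?_
  filter_upwards [isOpen_ne.mem_nhds h0] with z hz
  simp only [FC]; rw [if_neg hz]

lemma FC_cont {M Λ a1 a2 : ℝ} (hM : 0 ≤ M) (hΛ : 0 ≤ Λ) (ha1 : 0 < a1) (h2 : a2 ≤ 2) {θ : Fin 4 → ℝ} (h : PB M Λ a1 a2 θ) :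
    ContinuousOn (FC θ) QQ := by
  intro t ht
  by_cases h0 : t = 0
  · subst h0
    set γ := min a1 1 / 2 with hγ
    have hγ0 : 0 < γ := by simp only [hγ]; positivity
    obtain ⟨C1, hC1, hb⟩ := psiC_bd (a1 := a1) (a2 := a2) (γ := γ) hM hΛ h2 hγ0
      (by linarith [min_le_left a1 1, lt_min ha1 one_pos]) (by linarith [min_le_right a1 1])
    have hlim : Tendsto (fun t : ℂ => if t = 0 then 0 else psiC θ t) (nhdsWithin 0 QQ) (nhds 0) := by
      have hz : Tendsto (fun t : ℂ => C1 * (‖t‖ ^ γ + ‖t‖ ^ (3:ℝ))) (nhdsWithin 0 QQ) (nhds 0) := by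
        have : Continuous (fun t : ℂ => C1 * (‖t‖ ^ γ + ‖t‖ ^ (3:ℝ))) := by
          refine continuous_const.mul (Continuous.add ?_ ?_)
          · exact continuous_norm.rpow_const fun _ => Or.inr hγ0.le
          · exact continuous_norm.rpow_const fun _ => Or.inr (by norm_num)
        have h3 := this.tendsto 0
        simp only [norm_zero, Real.zero_rpow hγ0.ne', Real.zero_rpow (show (3:ℝ) ≠ 0 by norm_num), add_zero, mul_zero] at h3
        exact h3.mono_left nhdsWithin_le_nhds
      refine squeeze_zero_norm' ?_ hz
      filter_upwards [self_mem_nhdsWithin] with t ht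
      by_cases h0 : t = 0
      · rw [if_pos h0, norm_zero]; positivity
      · rw [if_neg h0]; exact hb θ h t h0 ht.1
    have h4 := (Complex.continuous_exp.tendsto 0).comp hlim
    have e : FC θ = Complex.exp ∘ fun t : ℂ => if t = 0 then 0 else psiC θ t := by
      funext t; simp only [FC, Function.comp_apply]; split_ifs <;> simp
    unfold ContinuousWithinAt
    rw [e]
    simpa using h4
  · exact (FC_diff (QQ_slit ht h0)).continuousAt.continuousWithinAt

lemma FC_bds {M Λ a1 a2 : ℝ} (hM : 0 ≤ M) (hΛ : 0 ≤ Λ) (ha1 : 0 < a1) (ha12 : a1 ≤ 2) (h2 : a2 ≤ 2) :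
    ∃ c : ℝ, 0 < c ∧ ∃ G : ℝ, 0 ≤ G ∧
    (∀ θ, PB M Λ a1 a2 θ → ∀ s y : ℝ, 0 ≤ s → 0 ≤ y → y ≤ 1 → ‖FC θ ((s : ℂ) - Complex.I * y)‖ ≤ G * g0 c a1 s) ∧
    (∀ θ, PB M Λ a1 a2 θ → ∀ θ', PB M Λ a1 a2 θ' → ∀ s y : ℝ, 0 ≤ s → 0 ≤ y → y ≤ 1 →
      ‖FC θ ((s : ℂ) - Complex.I * y) - FC θ' ((s : ℂ) - Complex.I * y)‖ ≤ G * dd θ θ' * g0 c a1 s) ∧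
    (∀ θ, PB M Λ a1 a2 θ → ∀ y : ℝ, 0 < y → y ≤ 1 → Real.exp (psiC θ (-(Complex.I * y))).re ≤ G) ∧
    (∀ θ, PB M Λ a1 a2 θ → ∀ θ', PB M Λ a1 a2 θ' → ∀ y : ℝ, 0 < y → y ≤ 1 →
      |Real.exp (psiC θ (-(Complex.I * y))).re - Real.exp (psiC θ' (-(Complex.I * y))).re| ≤ G * dd θ θ') := by
  set γ := min a1 1 / 2 with hγ
  have hγ0 : 0 < γ := by simp only [hγ]; positivity
  have hγ1 : γ < 1 := by linarith [min_le_right a1 1]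
  obtain ⟨C1, hC1, hb⟩ := psiC_diff (M := M) (Λ := Λ) (a1 := a1) (a2 := a2) (γ := γ) hΛ h2 hγ0
      (by linarith [min_le_left a1 1, lt_min ha1 one_pos]) hγ1
  obtain ⟨c, hc, C, hC, hd⟩ := psiC_decay (a1 := a1) (a2 := a2) hM hΛ ha1 ha12 h2
  have hg1 : ∀ s : ℝ, 0 ≤ s → Real.exp (-c * s ^ a1) ≤ g0 c a1 s := by
    intro s hs
    unfold g0
    refine le_mul_of_one_le_left (Real.exp_pos _).le ?_
    exact one_le_pow₀ (by linarith)
  have hE : ∀ θ, PB M Λ a1 a2 θ → ∀ s y : ℝ, 0 ≤ s → 0 ≤ y → y ≤ 1 → (s : ℂ) - Complex.I * y ≠ 0 →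
      ‖Complex.exp (psiC θ ((s : ℂ) - Complex.I * y))‖ ≤ Real.exp C * Real.exp (-c * s ^ a1) := by
    intro θ h s y hs hy0 hy1 ht
    rw [Complex.norm_exp, ← Real.exp_add, Real.exp_le_exp]
    linarith [hd θ h s y hs hy0 hy1 ht]
  have hE1 : 1 ≤ Real.exp C := Real.one_le_exp hC
  have hre : ∀ s y : ℝ, ((s : ℂ) - Complex.I * y).re = s := by intro s y; simp
  have hIy : ∀ y : ℝ, -(Complex.I * (y:ℂ)) = (((0:ℝ)) : ℂ) - Complex.I * y := by intro y; simp
  have hIy0 : ∀ y : ℝ, 0 < y → (((0:ℝ)) : ℂ) - Complex.I * y ≠ 0 := by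
    intro y hy; simp [hy.ne']
  have hR : ∀ θ, PB M Λ a1 a2 θ → ∀ y : ℝ, 0 < y → y ≤ 1 → (psiC θ (-(Complex.I * y))).re ≤ C := by
    intro θ h y hy0 hy1
    rw [hIy]
    have := hd θ h 0 y le_rfl hy0.le hy1 (hIy0 y hy0)
    rwa [Real.zero_rpow ha1.ne', mul_zero, zero_add] at this
  refine ⟨c, hc, Real.exp C * (1 + 2 * C1), by positivity, ?_, ?_, ?_, ?_⟩
  · intro θ h s y hs hy0 hy1
    have hG : Real.exp C * g0 c a1 s ≤ Real.exp C * (1 + 2 * C1) * g0 c a1 s := by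
      have := g0_nonneg (c := c) (a := a1) hs
      gcongr
      exact le_mul_of_one_le_right (Real.exp_pos _).le (by linarith)
    by_cases ht : (s : ℂ) - Complex.I * y = 0
    · rw [ht, FC, if_pos rfl, norm_one]
      have hs0 : s = 0 := by rw [← hre s y, ht]; rfl
      refine le_trans ?_ hG
      subst hs0
      simp [g0, Real.zero_rpow ha1.ne', hE1, hC]
    · rw [FC, if_neg ht]
      refine ((hE θ h s y hs hy0 hy1 ht).trans ?_).trans hG
      have := hg1 s hs
      gcongr
  · intro θ h θ' h' s y hs hy0 hy1
    have hdn := dd_nonneg θ θ'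
    have hgn := g0_nonneg (c := c) (a := a1) hs
    by_cases ht : (s : ℂ) - Complex.I * y = 0
    · rw [ht, FC, FC, if_pos rfl, if_pos rfl, sub_self, norm_zero]; positivity
    · rw [FC, FC, if_neg ht, if_neg ht]
      refine (exp_diff (hE θ h s y hs hy0 hy1 ht) (hE θ' h' s y hs hy0 hy1 ht)).trans ?_
      have h3 := hb θ h θ' h' _ ht (by rw [hre]; exact hs)
      have hn := (norm_qd hs hy0 hy1).2
      have h4 : ‖(s : ℂ) - Complex.I * y‖ ^ γ + ‖(s : ℂ) - Complex.I * y‖ ^ (3:ℝ) ≤ 2 * (1 + s) ^ 3 := by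
        have h5 : ‖(s : ℂ) - Complex.I * y‖ ^ γ ≤ (1 + s) ^ (3:ℝ) := by
          calc _ ≤ (1 + s) ^ γ := by gcongr; linarith
            _ ≤ _ := Real.rpow_le_rpow_of_exponent_le (by linarith) (by linarith)
        have h6 : ‖(s : ℂ) - Complex.I * y‖ ^ (3:ℝ) ≤ (1 + s) ^ (3:ℝ) := by gcongr; linarith
        have h7 : (1 + s) ^ (3:ℝ) = (1 + s) ^ 3 := by
          rw [show (3:ℝ) = ((3:ℕ):ℝ) by norm_num, Real.rpow_natCast]
        rw [← h7]; linarith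
      calc _ ≤ Real.exp C * Real.exp (-c * s ^ a1) * (C1 * dd θ θ' * (2 * (1 + s) ^ 3)) := by
            gcongr; exact h3.trans (by gcongr)
        _ = Real.exp C * (2 * C1) * dd θ θ' * g0 c a1 s := by unfold g0; ring
        _ ≤ _ := by gcongr; linarith
  · intro θ h y hy0 hy1
    calc _ ≤ Real.exp C := Real.exp_le_exp.2 (hR θ h y hy0 hy1)
      _ ≤ _ := le_mul_of_one_le_right (Real.exp_pos _).le (by linarith)
  · intro θ h θ' h' y hy0 hy1
    have hdn := dd_nonneg θ θ'
    have key := exp_diff (z := (((psiC θ (-(Complex.I * y))).re : ℝ) : ℂ)) (w := (((psiC θ' (-(Complex.I * y))).re : ℝ) : ℂ)) (W := Real.exp C)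
      (by rw [Complex.norm_exp, Complex.ofReal_re, Real.exp_le_exp]; exact hR θ h y hy0 hy1)
      (by rw [Complex.norm_exp, Complex.ofReal_re, Real.exp_le_exp]; exact hR θ' h' y hy0 hy1)
    rw [← Complex.ofReal_exp, ← Complex.ofReal_exp, ← Complex.ofReal_sub, ← Complex.ofReal_sub, Complex.norm_real, Complex.norm_real, Real.norm_eq_abs, Real.norm_eq_abs, ← Complex.sub_re] at key
    refine key.trans ?_
    have h3 := hb θ h θ' h' (-(Complex.I * y)) (by rw [hIy]; exact hIy0 y hy0) (by simp)
    have hn : ‖-(Complex.I * (y:ℂ))‖ = y := by simp [abs_of_pos hy0]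
    rw [hn] at h3
    have h4 : y ^ γ + y ^ (3:ℝ) ≤ 2 := by
      linarith [Real.rpow_le_one hy0.le hy1 hγ0.le, Real.rpow_le_one hy0.le hy1 (show (0:ℝ) ≤ 3 by norm_num)]
    have h5 := (Complex.abs_re_le_norm _).trans h3
    calc _ ≤ Real.exp C * (C1 * dd θ θ' * 2) := by gcongr; exact h5.trans (by gcongr)
      _ = Real.exp C * (2 * C1) * dd θ θ' := by ring
      _ ≤ _ := by gcongr; linarith
end

noncomputable section
open MeasureTheory Filter Set

lemma rexp_diff {u v W : ℝ} (hu : Real.exp u ≤ W) (hv : Real.exp v ≤ W) : |Real.exp u - Real.exp v| ≤ W * |u - v| := by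
  have key : ∀ u v : ℝ, Real.exp u ≤ W → Real.exp u - Real.exp v ≤ W * |u - v| := by
    intro u v hu
    have h1 := Real.add_one_le_exp (v - u)
    have h2 : Real.exp v = Real.exp u * Real.exp (v - u) := by rw [← Real.exp_add]; congr 1; ring
    have h3 := Real.exp_pos u
    calc Real.exp u - Real.exp v = Real.exp u * (1 - Real.exp (v - u)) := by rw [h2]; ring
      _ ≤ Real.exp u * |u - v| := by
          apply mul_le_mul_of_nonneg_left _ h3.le
          linarith [le_abs_self (u - v)]
      _ ≤ W * |u - v| := mul_le_mul_of_nonneg_right hu (abs_nonneg _)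
  rw [abs_le]
  constructor
  · have := key v u hv; rw [abs_sub_comm] at this; linarith
  · exact key u v hu

lemma pw_bd {M Λ a1 a2 γ : ℝ} (hΛ : 0 ≤ Λ) (h2 : a2 < 2) (hγa : γ ≤ a1) (h0 : 0 < a1) {θ : Fin 4 → ℝ} (h : PB M Λ a1 a2 θ)
    {y : ℝ} (hy : 0 < y) (hy1 : y ≤ 1) :
    (θ 1 * y) ^ (θ 2) = Real.exp (θ 2 * (Real.log (θ 1) + Real.log y)) ∧ 
    Real.exp (θ 2 * (Real.log (θ 1) + Real.log y)) ≤ Real.exp (2 * Λ) * y ^ γ := by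
  constructor
  · rw [Real.rpow_def_of_pos (mul_pos h.sg hy), Real.log_mul h.sg.ne' hy.ne', mul_comm]
  · rw [Real.rpow_def_of_pos hy, ← Real.exp_add]
    apply Real.exp_le_exp.2
    have hl : Real.log y ≤ 0 := Real.log_nonpos hy.le hy1
    have h1 := abs_le.1 h.ls
    have h3 := h.al
    have h4 := h.au
    have : θ 2 * Real.log (θ 1) ≤ 2 * Λ := by
      calc θ 2 * Real.log (θ 1) ≤ θ 2 * Λ := mul_le_mul_of_nonneg_left h1.2 (by linarith)
        _ ≤ 2 * Λ := mul_le_mul_of_nonneg_right (by linarith) hΛ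
    nlinarith

lemma J_bd {M Λ a1 a2 γ : ℝ} (hΛ : 0 ≤ Λ) (h2 : a2 < 2) (hγa : γ ≤ a1) (h0 : 0 < a1) {θ : Fin 4 → ℝ} (h : PB M Λ a1 a2 θ)
    {y : ℝ} (hy : 0 < y) (hy1 : y ≤ 1) : |(psiC θ (-(Complex.I * y))).im| ≤ 2 * Real.exp (2 * Λ) * y ^ γ := by
  obtain ⟨e1, e2⟩ := pw_bd hΛ h2 hγa h0 h hy hy1
  rw [psiC_im h.sg (by linarith [h.al]) (by linarith [h.au]) hy, e1, abs_mul, abs_mul, abs_of_pos (Real.exp_pos _)]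
  have hb := abs_le.1 h.be
  have h3 : |1 + θ 3| ≤ 2 := by rw [abs_le]; constructor <;> linarith
  calc |1 + θ 3| * |Real.sin (Real.pi * θ 2 / 2)| * Real.exp (θ 2 * (Real.log (θ 1) + Real.log y))
      ≤ 2 * 1 * (Real.exp (2 * Λ) * y ^ γ) := by
        gcongr
        exact Real.abs_sin_le_one _
    _ = _ := by ring

lemma sin_lip (a b : ℝ) : |Real.sin a - Real.sin b| ≤ |a - b| := by
  have := Real.sin_sub_sin a b
  rw [this, abs_mul, abs_mul, abs_two]
  have h1 := Real.abs_sin_le_one ((a-b)/2)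
  have h2 := Real.abs_cos_le_one ((a+b)/2)
  have h3 : |Real.sin ((a-b)/2)| ≤ |(a-b)/2| := Real.abs_sin_le_abs
  rw [abs_div, abs_two] at h3
  have := abs_nonneg (Real.sin ((a-b)/2))
  nlinarith [abs_nonneg (Real.cos ((a+b)/2))]

lemma J_diff {M Λ a1 a2 γ : ℝ} (hΛ : 0 ≤ Λ) (h2 : a2 < 2) (hγ : 0 < γ) (hγa : γ < a1) :
    ∃ C : ℝ, 0 ≤ C ∧ ∀ θ, PB M Λ a1 a2 θ → ∀ θ', PB M Λ a1 a2 θ' → ∀ y : ℝ, 0 < y → y ≤ 1 →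
    |(psiC θ (-(Complex.I * y))).im - (psiC θ' (-(Complex.I * y))).im| ≤ C * dd θ θ' * y ^ γ := by
  have h0 : 0 < a1 := by linarith
  have hε : 0 < a1 - γ := by linarith
  refine ⟨5 * Real.exp (2*Λ) + 2 * (Real.exp (2*Λ) * (2 * Real.exp Λ + Λ + 1 / (a1 - γ))), by positivity, ?_⟩
  intro θ h θ' h' y hy hy1
  obtain ⟨e1, e2⟩ := pw_bd hΛ h2 le_rfl h0 h hy hy1
  obtain ⟨e1', e2'⟩ := pw_bd hΛ h2 le_rfl h0 h' hy hy1
  obtain ⟨-, e3⟩ := pw_bd hΛ h2 hγa.le h0 h hy hy1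
  rw [psiC_im h.sg (by linarith [h.al]) (by linarith [h.au]) hy, psiC_im h'.sg (by linarith [h'.al]) (by linarith [h'.au]) hy, e1, e1']
  set l := Real.log (θ 1) + Real.log y with hl
  set l' := Real.log (θ' 1) + Real.log y with hl'
  set d := dd θ θ' with hd
  have hd0 : 0 ≤ d := dd_nonneg _ _
  have d1 : |θ 1 - θ' 1| ≤ d := le_dd θ θ' 1
  have d2 : |θ 2 - θ' 2| ≤ d := le_dd θ θ' 2
  have d3 : |θ 3 - θ' 3| ≤ d := le_dd θ θ' 3
  have hb := abs_le.1 h.be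
  have hb' := abs_le.1 h'.be
  set s := Real.sin (Real.pi * θ 2 / 2) with hs
  set s' := Real.sin (Real.pi * θ' 2 / 2) with hs'
  have hs1 : |s| ≤ 1 := Real.abs_sin_le_one _
  have hs1' : |s'| ≤ 1 := Real.abs_sin_le_one _
  have hss : |s - s'| ≤ 2 * d := by
    refine (sin_lip _ _).trans ?_
    rw [show Real.pi * θ 2 / 2 - Real.pi * θ' 2 / 2 = (Real.pi/2) * (θ 2 - θ' 2) by ring, abs_mul, abs_of_pos (by positivity)]
    nlinarith [Real.pi_le_four, Real.pi_pos, abs_nonneg (θ 2 - θ' 2)]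
  have hw : |(1 + θ 3) * s - (1 + θ' 3) * s'| ≤ 5 * d := by
    rw [show (1 + θ 3) * s - (1 + θ' 3) * s' = (θ 3 - θ' 3) * s + (1 + θ' 3) * (s - s') by ring]
    refine (abs_add_le _ _).trans ?_
    rw [abs_mul, abs_mul]
    have h3 : |1 + θ' 3| ≤ 2 := by rw [abs_le]; constructor <;> linarith
    nlinarith [abs_nonneg (θ 3 - θ' 3), abs_nonneg (s - s'), abs_nonneg s]
  have hw' : |(1 + θ' 3) * s'| ≤ 2 := by
    rw [abs_mul]
    have h3 : |1 + θ' 3| ≤ 2 := by rw [abs_le]; constructor <;> linarith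
    nlinarith [abs_nonneg (1 + θ' 3)]
  have hlog : |l - l'| ≤ Real.exp Λ * d := by
    rw [hl, hl', add_sub_add_right_eq_sub]
    exact (log_lip h.sg h'.sg h.ls h'.ls).trans (by gcongr)
  have hl1 : |l'| ≤ Λ + |Real.log y| := (abs_add_le _ _).trans (by linarith [h'.ls])
  have hal : |θ 2 * l - θ' 2 * l'| ≤ d * (2 * Real.exp Λ + Λ + |Real.log y|) := by
    rw [show θ 2 * l - θ' 2 * l' = θ 2 * (l - l') + (θ 2 - θ' 2) * l' by ring]
    refine (abs_add_le _ _).trans ?_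
    rw [abs_mul, abs_mul, abs_of_pos (show 0 < θ 2 by linarith [h.al])]
    have t1 : θ 2 * |l - l'| ≤ 2 * (Real.exp Λ * d) := by
      apply mul_le_mul (by linarith [h.au]) hlog (abs_nonneg _) (by norm_num)
    have t2 : |θ 2 - θ' 2| * |l'| ≤ d * (Λ + |Real.log y|) := by gcongr
    linarith
  have hE := rexp_diff e2 e2'
  have hyl := Real.abs_log_mul_self_rpow_lt y (a1 - γ) hy hy1 hε
  have hya : y ^ a1 = y ^ γ * y ^ (a1 - γ) := by rw [← Real.rpow_add hy]; congr 1; ring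
  have hyp : 0 < y ^ (a1 - γ) := Real.rpow_pos_of_pos hy _
  have hyp1 : y ^ (a1 - γ) ≤ 1 := Real.rpow_le_one hy.le hy1 hε.le
  rw [abs_mul, abs_of_pos hyp] at hyl
  have hE2 : |Real.exp (θ 2 * l) - Real.exp (θ' 2 * l')| ≤ Real.exp (2*Λ) * (2 * Real.exp Λ + Λ + 1 / (a1 - γ)) * d * y ^ γ := by
    refine hE.trans ?_
    calc Real.exp (2 * Λ) * y ^ a1 * |θ 2 * l - θ' 2 * l'| 
        ≤ Real.exp (2 * Λ) * y ^ a1 * (d * (2 * Real.exp Λ + Λ + |Real.log y|)) := by gcongr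
      _ = Real.exp (2 * Λ) * (d * y ^ γ) * ((2 * Real.exp Λ + Λ) * y ^ (a1-γ) + |Real.log y| * y ^ (a1-γ)) := by rw [hya]; ring
      _ ≤ Real.exp (2 * Λ) * (d * y ^ γ) * ((2 * Real.exp Λ + Λ) * 1 + 1 / (a1 - γ)) := by gcongr
      _ = _ := by ring
  rw [show (1 + θ 3) * s * Real.exp (θ 2 * l) - (1 + θ' 3) * s' * Real.exp (θ' 2 * l') = 
    ((1 + θ 3) * s - (1 + θ' 3) * s') * Real.exp (θ 2 * l) + (1 + θ' 3) * s' * (Real.exp (θ 2 * l) - Real.exp (θ' 2 * l')) by ring]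
  refine (abs_add_le _ _).trans ?_
  rw [abs_mul, abs_mul _ (Real.exp (θ 2 * l) - _), abs_of_pos (Real.exp_pos _)]
  calc _ ≤ 5 * d * (Real.exp (2*Λ) * y ^ γ) + 2 * (Real.exp (2*Λ) * (2 * Real.exp Λ + Λ + 1 / (a1 - γ)) * d * y ^ γ) := by
        gcongr
    _ = _ := by ring

lemma FC_im {θ : Fin 4 → ℝ} {y : ℝ} (hy : 0 < y) : (FC θ (-(Complex.I * y))).im = 
    Real.exp (psiC θ (-(Complex.I * y))).re * Real.sin (psiC θ (-(Complex.I * y))).im := by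
  have : -(Complex.I * (y:ℂ)) ≠ 0 := by
    simp [hy.ne']
  simp only [FC]; rw [if_neg this, Complex.exp_im]

/-- half-line bounds -/
lemma half_bds {M Λ a1 a2 γ : ℝ} (hM : 0 ≤ M) (hΛ : 0 ≤ Λ) (h2 : a2 < 2) (ha : a1 ≤ 2) (hγ : 0 < γ) (hγa : γ < a1) :
    ∃ C : ℝ, 0 ≤ C ∧ 
    (∀ θ, PB M Λ a1 a2 θ → ∀ x : ℝ, 0 ≤ x → |(∫ s in Ioi (0:ℝ), Complex.exp (-Complex.I * s * x) * FC θ s).re| ≤ C * (1 + x) ^ (-(1 + γ))) ∧ 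
    (∀ θ, PB M Λ a1 a2 θ → ∀ θ', PB M Λ a1 a2 θ' → ∀ x : ℝ, 0 ≤ x → 
      |(∫ s in Ioi (0:ℝ), Complex.exp (-Complex.I * s * x) * (FC θ s - FC θ' s)).re| ≤ C * dd θ θ' * (1 + x) ^ (-(1 + γ))) := by
  have h0 : 0 < a1 := by linarith
  obtain ⟨c, hc, G, hG, b1, b2, b3, b4⟩ := FC_bds (M := M) (Λ := Λ) (a1 := a1) (a2 := a2) hM hΛ h0 ha h2.le
  obtain ⟨C1, hC1, hJ⟩ := J_diff (M := M) (Λ := Λ) (a1 := a1) (a2 := a2) (γ := γ) hΛ h2 hγ hγa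
  obtain ⟨C, hC, ht⟩ := tail hc h0 hγ
  have hE := Real.exp_pos (2 * Λ)
  refine ⟨C * (G + (G * C1 + G * (2 * Real.exp (2 * Λ)))), by positivity, ?_, ?_⟩
  · intro θ h x hx
    refine (ht G (G * (2 * Real.exp (2 * Λ))) (FC θ) hG (by positivity) (FC_cont hM hΛ h0 h2.le h) ?_ (b1 θ h) ?_ x hx).trans ?_
    · intro t ht
      exact FC_diff (Or.inl ht)
    · intro y hy hy1
      rw [FC_im hy, abs_mul, abs_of_pos (Real.exp_pos _), mul_assoc]
      exact mul_le_mul (b3 θ h y hy hy1) (Real.abs_sin_le_abs.trans (J_bd hΛ h2 hγa.le h0 h hy hy1)) (abs_nonneg _) hG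
    · have : 0 ≤ G * C1 := by positivity
      gcongr
      linarith
  · intro θ h θ' h' x hx
    have hd0 := dd_nonneg θ θ'
    refine (ht (G * dd θ θ') ((G * C1 + G * (2 * Real.exp (2 * Λ))) * dd θ θ') (fun t => FC θ t - FC θ' t) (by positivity) (by positivity) 
      ((FC_cont hM hΛ h0 h2.le h).sub (FC_cont hM hΛ h0 h2.le h')) ?_ (b2 θ h θ' h') ?_ x hx).trans (le_of_eq (by ring))
    · intro t ht
      exact (FC_diff (Or.inl ht)).sub (FC_diff (Or.inl ht))
    · intro y hy hy1
      rw [Complex.sub_im, FC_im hy, FC_im hy]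
      have k1 := hJ θ h θ' h' y hy hy1
      have k2 := b4 θ h θ' h' y hy hy1
      have k3 := b3 θ h y hy hy1
      have k4 := Real.abs_sin_le_abs.trans (J_bd (γ := γ) hΛ h2 hγa.le h0 h' hy hy1)
      have k5 := (sin_lip _ _).trans k1
      set R := Real.exp (psiC θ (-(Complex.I * y))).re
      set R' := Real.exp (psiC θ' (-(Complex.I * y))).re
      set S := Real.sin (psiC θ (-(Complex.I * y))).im
      set S' := Real.sin (psiC θ' (-(Complex.I * y))).im
      rw [show R * S - R' * S' = R * (S - S') + (R - R') * S' by ring]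
      refine (abs_add_le _ _).trans ?_
      rw [abs_mul, abs_mul, abs_of_pos (show 0 < R from Real.exp_pos _)]
      calc _ ≤ G * (C1 * dd θ θ' * y ^ γ) + (G * dd θ θ') * (2 * Real.exp (2 * Λ) * y ^ γ) := by gcongr
        _ = _ := by ring
end

noncomputable section
open MeasureTheory Filter Set

def rfl4 (θ : Fin 4 → ℝ) : Fin 4 → ℝ := ![-θ 0, θ 1, θ 2, -θ 3]

lemma phiM_rfl (θ : Fin 4 → ℝ) (t : ℝ) : phiM (rfl4 θ) t = phiM θ (-t) := by
  have h0 : rfl4 θ 0 = -θ 0 := rfl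
  have h1 : rfl4 θ 1 = θ 1 := rfl
  have h2 : rfl4 θ 2 = θ 2 := rfl
  have h3 : rfl4 θ 3 = -θ 3 := rfl
  unfold phiM psiM
  rw [h0, h1, h2, h3, mul_neg (θ 1), abs_neg, Real.sign_neg]
  congr 1
  split_ifs
  · push_cast; ring
  · push_cast; ring

lemma phiM_neg (θ : Fin 4 → ℝ) (t : ℝ) : phiM θ (-t) = (starRingEnd ℂ) (phiM θ t) := by
  unfold phiM psiM
  rw [mul_neg, abs_neg, Real.sign_neg, ← Complex.exp_conj]
  congr 1
  split_ifs
  · simp only [map_add, map_sub, map_mul, Complex.conj_I, Complex.conj_ofReal]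
    push_cast; ring
  · simp only [map_add, map_sub, map_mul, Complex.conj_I, Complex.conj_ofReal, map_one]
    push_cast; ring

lemma rfl_PB {M Λ a1 a2 : ℝ} {θ : Fin 4 → ℝ} (h : PB M Λ a1 a2 θ) : PB M Λ a1 a2 (rfl4 θ) := by
  refine ⟨?_, h.sg, h.ls, h.al, h.au, ?_⟩
  · show |-θ 0| ≤ M
    rw [abs_neg]; exact h.mu
  · show |-θ 3| ≤ 1
    rw [abs_neg]; exact h.be

lemma rfl_dd (θ θ' : Fin 4 → ℝ) : dd (rfl4 θ) (rfl4 θ') = dd θ θ' := by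
  unfold dd
  simp only [Fin.sum_univ_four]
  show √((-θ 0 - -θ' 0)^2 + (θ 1 - θ' 1)^2 + (θ 2 - θ' 2)^2 + (-θ 3 - -θ' 3)^2) = _
  congr 1; ring

lemma fM_rfl (θ : Fin 4 → ℝ) (x : ℝ) : fM (rfl4 θ) (-x) = fM θ x := by
  unfold fM
  congr 2
  rw [← integral_neg_eq_self]
  congr 1; funext t
  rw [phiM_rfl, neg_neg]
  congr 2
  push_cast; ring

lemma phiM_FC {θ : Fin 4 → ℝ} (hσ : 0 < θ 1) (hα : 0 < θ 2) {t : ℝ} (ht : 0 ≤ t) : phiM θ t = FC θ t := by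
  rcases ht.eq_or_lt with rfl | ht
  · simp only [FC, phiM, psiM, Complex.ofReal_zero, if_true]
    simp [Real.zero_rpow hα.ne']
  · have : (t:ℂ) ≠ 0 := by exact_mod_cast ht.ne'
    simp only [FC, phiM]
    rw [if_neg this, psiC_real hσ ht]

lemma phiM_cont {M Λ a1 a2 : ℝ} (hM : 0 ≤ M) (hΛ : 0 ≤ Λ) (ha1 : 0 < a1) (h2 : a2 ≤ 2) {θ : Fin 4 → ℝ} (h : PB M Λ a1 a2 θ) :
    Continuous (phiM θ) := by
  have hα : 0 < θ 2 := by linarith [h.al]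
  have hc := FC_cont hM hΛ ha1 h2 h
  have hp : Continuous fun t : ℝ => FC θ ((max t 0 : ℝ) : ℂ) := by
    refine hc.comp_continuous (by fun_prop) ?_
    intro t
    simp [QQ]
  have e : phiM θ = fun t => if 0 ≤ t then FC θ ((max t 0 : ℝ) : ℂ) else (starRingEnd ℂ) (FC θ ((max (-t) 0 : ℝ) : ℂ)) := by
    funext t
    split_ifs with h0
    · rw [max_eq_left h0, phiM_FC h.sg hα h0]
    · push Not at h0
      rw [max_eq_left (by linarith), ← phiM_FC h.sg hα (by linarith), ← phiM_neg, neg_neg]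
  rw [e]
  refine Continuous.if_le hp (Complex.continuous_conj.comp (hp.comp continuous_neg)) continuous_const continuous_id ?_
  intro t ht
  subst ht
  simp [FC]

lemma g0_abs_int {c a : ℝ} (hc : 0 < c) (ha : 0 < a) : Integrable (fun t : ℝ => g0 c a |t|) := by
  have hf : IntegrableOn (fun t : ℝ => g0 c a |t|) (Ioi 0) := by
    refine (g0_int hc ha).congr_fun (fun t ht => ?_) measurableSet_Ioi
    rw [abs_of_pos ht]
  have int_Iic : IntegrableOn (fun t : ℝ => g0 c a |t|) (Iic 0) := by
    rw [← Measure.map_neg_eq_self (volume : Measure ℝ)]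
    let m : MeasurableEmbedding fun x : ℝ => -x := (Homeomorph.neg ℝ).measurableEmbedding
    rw [m.integrableOn_map_iff]
    simp_rw [Function.comp_def, abs_neg, neg_preimage, neg_Iic, neg_zero]
    exact Iff.mpr integrableOn_Ici_iff_integrableOn_Ioi hf
  have := int_Iic.union hf
  rwa [Iic_union_Ioi, integrableOn_univ] at this

lemma phiM_bds {M Λ a1 a2 : ℝ} (hM : 0 ≤ M) (hΛ : 0 ≤ Λ) (ha1 : 0 < a1) (ha12 : a1 ≤ 2) (h2 : a2 ≤ 2) :
    ∃ g : ℝ → ℝ, Integrable g ∧ (∀ t, 0 ≤ g t) ∧ 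
    (∀ θ, PB M Λ a1 a2 θ → ∀ t, ‖phiM θ t‖ ≤ g t) ∧
    (∀ θ, PB M Λ a1 a2 θ → ∀ θ', PB M Λ a1 a2 θ' → ∀ t, ‖phiM θ t - phiM θ' t‖ ≤ dd θ θ' * g t) := by
  obtain ⟨c, hc, G, hG, b1, b2, -, -⟩ := FC_bds (M := M) (Λ := Λ) (a1 := a1) (a2 := a2) hM hΛ ha1 ha12 h2
  refine ⟨fun t => G * g0 c a1 |t|, (g0_abs_int hc ha1).const_mul G, ?_, ?_, ?_⟩
  · intro t; exact mul_nonneg hG (g0_nonneg (abs_nonneg _))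
  · intro θ h t
    have hα : 0 < θ 2 := by linarith [h.al]
    have e : ‖phiM θ t‖ = ‖phiM θ |t|‖ := by
      rcases abs_choice t with h | h <;> rw [h]
      rw [phiM_neg, RCLike.norm_conj]
    rw [e, phiM_FC h.sg hα (abs_nonneg _)]
    have := b1 θ h |t| 0 (abs_nonneg _) le_rfl zero_le_one
    simpa using this
  · intro θ h θ' h' t
    have hα : 0 < θ 2 := by linarith [h.al]
    have hα' : 0 < θ' 2 := by linarith [h'.al]
    have e : ‖phiM θ t - phiM θ' t‖ = ‖phiM θ |t| - phiM θ' |t|‖ := by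
      rcases abs_choice t with h | h <;> rw [h]
      rw [phiM_neg, phiM_neg, ← map_sub, RCLike.norm_conj]
    rw [e, phiM_FC h.sg hα (abs_nonneg _), phiM_FC h'.sg hα' (abs_nonneg _)]
    have := b2 θ h θ' h' |t| 0 (abs_nonneg _) le_rfl zero_le_one
    simp only [Complex.ofReal_zero, mul_zero, sub_zero] at this
    linarith

lemma phiM_int {M Λ a1 a2 : ℝ} (hM : 0 ≤ M) (hΛ : 0 ≤ Λ) (ha1 : 0 < a1) (ha12 : a1 ≤ 2) (h2 : a2 ≤ 2) {θ : Fin 4 → ℝ} (h : PB M Λ a1 a2 θ) :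
    Integrable (phiM θ) := by
  obtain ⟨g, gi, -, hb, -⟩ := phiM_bds (M := M) (Λ := Λ) (a1 := a1) (a2 := a2) hM hΛ ha1 ha12 h2
  exact gi.mono' (phiM_cont hM hΛ ha1 h2 h).aestronglyMeasurable (Eventually.of_forall (hb θ h))

lemma herm_half {k : ℝ → ℂ} (hk : Integrable k) (hs : ∀ t, k (-t) = (starRingEnd ℂ) (k t)) (x : ℝ) :
    (∫ t : ℝ, Complex.exp (-Complex.I * t * x) * k t).re = 2 * (∫ t in Ioi (0:ℝ), Complex.exp (-Complex.I * t * x) * k t).re := by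
  have hi := kern_int hk x
  have e1 : (∫ t : ℝ, Complex.exp (-Complex.I * t * x) * k t).re = ∫ t : ℝ, (Complex.exp (-Complex.I * t * x) * k t).re :=
    (Complex.reCLM.integral_comp_comm hi).symm
  have e2 : (∫ t in Ioi (0:ℝ), Complex.exp (-Complex.I * t * x) * k t).re = ∫ t in Ioi (0:ℝ), (Complex.exp (-Complex.I * t * x) * k t).re :=
    (Complex.reCLM.integral_comp_comm hi.integrableOn).symm
  rw [e1, e2, ← integral_comp_abs (f := fun t : ℝ => (Complex.exp (-Complex.I * t * x) * k t).re)]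
  congr 1; funext t
  rcases abs_choice t with h | h <;> rw [h]
  rw [hs, ← Complex.conj_re]
  congr 1
  rw [map_mul, ← Complex.exp_conj]
  congr 2
  simp only [map_mul, map_neg, Complex.conj_I, Complex.conj_ofReal, neg_neg]
  push_cast; ring

lemma fM_bds {M Λ a1 a2 γ : ℝ} (hM : 0 ≤ M) (hΛ : 0 ≤ Λ) (h2 : a2 < 2) (ha : a1 ≤ 2) (hγ : 0 < γ) (hγa : γ < a1) :
    ∃ C : ℝ, 0 ≤ C ∧ 
    (∀ θ, PB M Λ a1 a2 θ → ∀ x : ℝ, |fM θ x| ≤ C * (1 + |x|) ^ (-(1 + γ))) ∧ 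
    (∀ θ, PB M Λ a1 a2 θ → ∀ θ', PB M Λ a1 a2 θ' → ∀ x : ℝ, 
      |fM θ x - fM θ' x| ≤ C * dd θ θ' * (1 + |x|) ^ (-(1 + γ))) := by
  have ha1 : 0 < a1 := by linarith
  obtain ⟨C, hC, k1, k2⟩ := half_bds (M := M) (Λ := Λ) (a1 := a1) (a2 := a2) (γ := γ) hM hΛ h2 ha hγ hγa
  have hp : |1 / (2 * Real.pi)| * 2 ≤ 1 := by
    rw [abs_of_pos (by positivity)]
    rw [div_mul_eq_mul_div, div_le_one (by positivity)]
    linarith [Real.pi_gt_three]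
  have m1 : ∀ θ, PB M Λ a1 a2 θ → ∀ x : ℝ, 0 ≤ x → |fM θ x| ≤ C * (1 + |x|) ^ (-(1 + γ)) := by
    intro θ h x hx
    have hα : 0 < θ 2 := by linarith [h.al]
    unfold fM
    rw [herm_half (phiM_int hM hΛ ha1 ha h2.le h) (phiM_neg θ), abs_of_nonneg hx, abs_mul, abs_mul, abs_two, ← mul_assoc]
    have e : ∫ t in Ioi (0:ℝ), Complex.exp (-Complex.I * t * x) * phiM θ t = ∫ s in Ioi (0:ℝ), Complex.exp (-Complex.I * s * x) * FC θ s := by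
      refine setIntegral_congr_fun measurableSet_Ioi fun t ht => ?_
      rw [phiM_FC h.sg hα (le_of_lt ht)]
    rw [e]
    exact (mul_le_of_le_one_left (abs_nonneg _) hp).trans (k1 θ h x hx)
  have m2 : ∀ θ, PB M Λ a1 a2 θ → ∀ θ', PB M Λ a1 a2 θ' → ∀ x : ℝ, 0 ≤ x →
      |fM θ x - fM θ' x| ≤ C * dd θ θ' * (1 + |x|) ^ (-(1 + γ)) := by
    intro θ h θ' h' x hx
    have hα : 0 < θ 2 := by linarith [h.al]
    have hα' : 0 < θ' 2 := by linarith [h'.al]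
    have i1 := phiM_int hM hΛ ha1 ha h2.le h
    have i2 := phiM_int hM hΛ ha1 ha h2.le h'
    unfold fM
    rw [herm_half i1 (phiM_neg θ), herm_half i2 (phiM_neg θ'), abs_of_nonneg hx, ← mul_sub, ← mul_sub, ← Complex.sub_re,
      ← integral_sub (kern_int i1 x).integrableOn (kern_int i2 x).integrableOn, abs_mul, abs_mul, abs_two, ← mul_assoc]
    have e : ∫ t in Ioi (0:ℝ), (Complex.exp (-Complex.I * t * x) * phiM θ t - Complex.exp (-Complex.I * t * x) * phiM θ' t)
        = ∫ s in Ioi (0:ℝ), Complex.exp (-Complex.I * s * x) * (FC θ s - FC θ' s) := by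
      refine setIntegral_congr_fun measurableSet_Ioi fun t ht => ?_
      rw [phiM_FC h.sg hα (le_of_lt ht), phiM_FC h'.sg hα' (le_of_lt ht), mul_sub]
    rw [e]
    exact (mul_le_of_le_one_left (abs_nonneg _) hp).trans (k2 θ h θ' h' x hx)
  refine ⟨C, hC, ?_, ?_⟩
  · intro θ h x
    rcases le_total 0 x with hx | hx
    · exact m1 θ h x hx
    · rw [← fM_rfl, ← abs_neg x]; exact m1 _ (rfl_PB h) _ (by linarith)
  · intro θ h θ' h' x
    rcases le_total 0 x with hx | hx
    · exact m2 θ h θ' h' x hx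
    · rw [← fM_rfl, ← fM_rfl θ', ← abs_neg x, ← rfl_dd]; exact m2 _ (rfl_PB h) _ (rfl_PB h') _ (by linarith)
end

noncomputable section
open MeasureTheory Filter Set

lemma neg_I_cpow {α : ℝ} (h0 : 0 < α) (t : ℝ) : (-Complex.I * (t:ℂ)) ^ (α : ℂ) = 
    ((|t| ^ α : ℝ) : ℂ) * ((Real.cos (Real.pi * α / 2) : ℝ) - Complex.I * ((Real.sign t * Real.sin (Real.pi * α / 2) : ℝ) : ℂ)) := by
  rcases lt_trichotomy t 0 with ht | rfl | ht
  · have hn : 0 < -t := by linarith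
    have e : -Complex.I * (t:ℂ) = ((-t : ℝ) : ℂ) * Complex.I := by push_cast; ring
    rw [e, Complex.cpow_def_of_ne_zero (by simp [ht.ne]), Complex.log_ofReal_mul hn Complex.I_ne_zero, Complex.log_I,
      abs_of_neg ht, Real.sign_of_neg ht, Real.rpow_def_of_pos hn, add_mul, Complex.exp_add]
    push_cast
    congr 1
    rw [show (Real.pi:ℂ) / 2 * Complex.I * α = (Real.pi * α / 2 : ℂ) * Complex.I by ring, Complex.exp_mul_I]
    ring
  · simp [Real.zero_rpow h0.ne', h0.ne']
  · have e : -Complex.I * (t:ℂ) = (t : ℂ) * (-Complex.I) := by ring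
    rw [e, Complex.cpow_def_of_ne_zero (by simp [ht.ne']), Complex.log_ofReal_mul ht (by simp), Complex.log_neg_I,
      abs_of_pos ht, Real.sign_of_pos ht, Real.rpow_def_of_pos ht, add_mul, Complex.exp_add]
    push_cast
    congr 1
    rw [show -((Real.pi:ℂ) / 2) * Complex.I * α = (-(Real.pi * α / 2 : ℂ)) * Complex.I by ring, Complex.exp_mul_I,
      Complex.cos_neg, Complex.sin_neg]
    ring

def kap (α : ℝ) : ℝ := α * (1 - α) / (Real.Gamma (2 - α) * Real.cos (Real.pi * α / 2))

def kl (α : ℝ) : ℝ := 2 * α / (Real.pi * Real.Gamma (2 - α))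

lemma cos_eq (α : ℝ) : Real.cos (Real.pi * α / 2) = Real.sin (Real.pi * (1 - α) / 2) := by
  rw [← Real.cos_pi_div_two_sub]; congr 1; ring

lemma cos_ratio {α : ℝ} (h0 : 0 < α) (h2 : α < 2) (hne : α ≠ 1) : 
    Real.cos (Real.pi * α / 2) ≠ 0 ∧ 2 / Real.pi ≤ (1 - α) / Real.cos (Real.pi * α / 2) := by
  have hp := Real.pi_pos
  rw [cos_eq]
  rcases lt_or_gt_of_ne hne with h | h
  · have hs : 0 < Real.sin (Real.pi * (1 - α) / 2) := Real.sin_pos_of_pos_of_lt_pi (by nlinarith) (by nlinarith)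
    refine ⟨hs.ne', ?_⟩
    rw [div_le_div_iff₀ hp hs]
    have := Real.sin_le (x := Real.pi * (1 - α) / 2) (by nlinarith)
    nlinarith
  · have e : Real.sin (Real.pi * (1 - α) / 2) = -Real.sin (Real.pi * (α - 1) / 2) := by
      rw [← Real.sin_neg]; congr 1; ring
    have hs : 0 < Real.sin (Real.pi * (α - 1) / 2) := Real.sin_pos_of_pos_of_lt_pi (by nlinarith) (by nlinarith)
    rw [e]
    refine ⟨by linarith, ?_⟩
    rw [show (1 - α) / -Real.sin (Real.pi * (α - 1) / 2) = (α - 1) / Real.sin (Real.pi * (α - 1) / 2) by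
      rw [div_neg, ← neg_div]; congr 1; ring]
    rw [div_le_div_iff₀ hp hs]
    have := Real.sin_le (x := Real.pi * (α - 1) / 2) (by nlinarith)
    nlinarith

lemma kl_pos {α : ℝ} (h0 : 0 < α) (h2 : α < 2) : 0 < kl α := by
  have := Real.Gamma_pos_of_pos (show 0 < 2 - α by linarith)
  unfold kl; positivity

lemma kl_le {α : ℝ} (h0 : 0 < α) (h2 : α < 2) (hne : α ≠ 1) : kl α ≤ kap α := by
  have hG := Real.Gamma_pos_of_pos (show 0 < 2 - α by linarith)
  obtain ⟨hc, h⟩ := cos_ratio h0 h2 hne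
  have e1 : kl α = α / Real.Gamma (2 - α) * (2 / Real.pi) := by
    unfold kl; field_simp
  have e2 : kap α = α / Real.Gamma (2 - α) * ((1 - α) / Real.cos (Real.pi * α / 2)) := by
    unfold kap; field_simp
  rw [e1, e2]
  gcongr

lemma FT_split {p : ℝ → ℝ} (hp : Integrable p) (he : ∀ y, p (-y) = p y) (t : ℝ) : 
    FT p t = FT (indicator (Ioi 0) p) t + FT (indicator (Ioi 0) p) (-t) := by
  have e : ∀ t, FT (indicator (Ioi 0) p) t = ∫ y in Ioi (0:ℝ), (p y : ℂ) * Complex.exp (Complex.I * (y : ℂ) * (t : ℂ)) := by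
    intro t
    unfold FT
    rw [← integral_indicator measurableSet_Ioi]
    congr 1; funext y
    by_cases hy : y ∈ Ioi (0:ℝ) <;> simp [hy]
  rw [e, e]
  have h1 := integral_comp_neg_Ioi 0 (fun y : ℝ => (p y : ℂ) * Complex.exp (Complex.I * (y : ℂ) * (t : ℂ)))
  have h2 : ∫ y in Ioi (0:ℝ), (p y : ℂ) * Complex.exp (Complex.I * (y : ℂ) * ((-t:ℝ) : ℂ)) = 
     ∫ y in Ioi (0:ℝ), (p (-y) : ℂ) * Complex.exp (Complex.I * ((-y : ℝ) : ℂ) * (t : ℂ)) := by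
    congr 1; funext y
    rw [he]; congr 2; push_cast; ring
  rw [h2, h1, neg_zero, add_comm, intervalIntegral.integral_Iic_add_Ioi (FT_int hp t).integrableOn (FT_int hp t).integrableOn]
  rfl

lemma psiM_dec {θ : Fin 4 → ℝ} (hσ : 0 < θ 1) (h0 : 0 < θ 2) (h2 : θ 2 < 2) (hne : θ 2 ≠ 1) (t : ℝ) :
    psiM θ t = Complex.I * ((θ 0 - θ 3 * Real.tan (Real.pi * θ 2 / 2) * θ 1 : ℝ) : ℂ) * (t : ℂ)
      + (((θ 1 ^ θ 2 * (1 + θ 3) / 2 * kap (θ 2)) * (Real.Gamma (2 - θ 2) / (θ 2 * (θ 2 - 1))) : ℝ) : ℂ) * (- Complex.I * t) ^ (θ 2 : ℂ)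
      + (((θ 1 ^ θ 2 * (1 - θ 3) / 2 * kap (θ 2)) * (Real.Gamma (2 - θ 2) / (θ 2 * (θ 2 - 1))) : ℝ) : ℂ) * (- Complex.I * (-t : ℝ)) ^ (θ 2 : ℂ) := by
  obtain ⟨hc, -⟩ := cos_ratio h0 h2 hne
  have hG := (Real.Gamma_pos_of_pos (show 0 < 2 - θ 2 by linarith)).ne'
  have hm : θ 2 - 1 ≠ 0 := sub_ne_zero.2 hne
  have e : ∀ w : ℝ, (w * kap (θ 2)) * (Real.Gamma (2 - θ 2) / (θ 2 * (θ 2 - 1))) = - w / Real.cos (Real.pi * θ 2 / 2) := by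
    intro w
    unfold kap
    field_simp
    ring
  rw [e, e, neg_I_cpow h0, neg_I_cpow h0, abs_neg, Real.sign_neg]
  unfold psiM
  rw [if_neg hne, abs_mul, abs_of_pos hσ]
  have hx : (θ 1 * |t|) ^ (θ 2) = θ 1 ^ θ 2 * |t| ^ θ 2 := Real.mul_rpow hσ.le (abs_nonneg _)
  have hy : (θ 1 * |t|) ^ (θ 2) * (θ 1 * |t|) ^ (1 - θ 2) * Real.sign t = θ 1 * t := by
    rcases eq_or_ne t 0 with rfl | ht
    · simp
    · rw [← Real.rpow_add (mul_pos hσ (abs_pos.2 ht)), add_sub_cancel, Real.rpow_one]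
      rcases lt_or_gt_of_ne ht with h | h
      · rw [Real.sign_of_neg h, abs_of_neg h]; ring
      · rw [Real.sign_of_pos h, abs_of_pos h]; ring
  have ht : Real.tan (Real.pi * θ 2 / 2) = Real.sin (Real.pi * θ 2 / 2) / Real.cos (Real.pi * θ 2 / 2) := Real.tan_eq_sin_div_cos _
  rw [ht]
  rw [hx] at hy ⊢
  generalize Real.sin (Real.pi * θ 2 / 2) = S at *
  generalize Real.cos (Real.pi * θ 2 / 2) = K at *
  generalize θ 1 ^ θ 2 = a at *
  generalize |t| ^ θ 2 = b at *
  generalize (θ 1 * |t|) ^ (1 - θ 2) = d at *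
  generalize Real.sign t = s at *
  apply Complex.ext
  · simp only [Complex.add_re, Complex.sub_re, Complex.mul_re, Complex.ofReal_re, Complex.ofReal_im, Complex.I_re, Complex.I_im,
      Complex.one_re, Complex.one_im, Complex.add_im, Complex.sub_im, Complex.mul_im]
    field_simp; ring
  · simp only [Complex.add_re, Complex.sub_re, Complex.mul_re, Complex.ofReal_re, Complex.ofReal_im, Complex.I_re, Complex.I_im,
      Complex.one_re, Complex.one_im, Complex.add_im, Complex.sub_im, Complex.mul_im]
    have h9 : θ 3 * S / K * (a * b * d * s) = θ 3 * S / K * (θ 1 * t) := by rw [hy]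
    field_simp
    field_simp at h9
    linear_combination (-2) * h9

lemma AA_small1 {θ : Fin 4 → ℝ} (hσ : 0 < θ 1) (h0 : 0 < θ 2) (h2 : θ 2 < 2) (hne : θ 2 ≠ 1) {p : ℝ → ℝ} {c : ℝ} (hc : 0 ≤ c)
    (hm : Measurable p) (hp : Integrable p) (hp0 : ∀ y, 0 ≤ p y) (he : ∀ y, p (-y) = p y)
    (hpc : ∀ y, 0 < y → p y ≤ c * y ^ (-1 - θ 2)) 
    (hb1 : c ≤ θ 1 ^ θ 2 * (1 + θ 3) / 2 * kl (θ 2)) (hb2 : c ≤ θ 1 ^ θ 2 * (1 - θ 3) / 2 * kl (θ 2)) :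
    AA fun t => phiM θ t * Complex.exp (-FT p t) := by
  have hk := kl_pos h0 h2
  have hkl := kl_le h0 h2 hne
  have main : ∀ w, c ≤ w * kl (θ 2) → AA fun t : ℝ => Complex.exp (((w * kap (θ 2)) * (Real.Gamma (2 - θ 2) / (θ 2 * (θ 2 - 1))) : ℝ) * (- Complex.I * t) ^ (θ 2 : ℂ)
      - FT (indicator (Ioi 0) p) t) := by
    intro w hw
    have hw0 : 0 ≤ w := by
      by_contra hcon
      push Not at hcon
      nlinarith
    have hcw : c ≤ w * kap (θ 2) := hw.trans (by gcongr)
    refine os2 h0 h2 hne (hc.trans hcw) hm hp hp0 fun y hy => (hpc y hy).trans ?_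
    gcongr
  have := AA_mul (AA_mul (AA_exp (θ 0 - θ 3 * Real.tan (Real.pi * θ 2 / 2) * θ 1)) (main _ hb1)) (AA_refl (main _ hb2))
  refine (congrArg AA ?_).mp this
  funext t
  rw [← Complex.exp_add, ← Complex.exp_add]
  unfold phiM
  rw [← Complex.exp_add, psiM_dec hσ h0 h2 hne, FT_split hp he]
  congr 1
  push_cast
  ring
end

noncomputable section
open MeasureTheory Filter Set

def pb (c a : ℝ) (y : ℝ) : ℝ := c * (1 + |y|) ^ (-(1 + a))

lemma pb_cont (c a : ℝ) : Continuous (pb c a) := by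
  unfold pb
  refine continuous_const.mul (Continuous.rpow_const (by fun_prop) fun y => Or.inl ?_)
  positivity

lemma pb_int {c a : ℝ} (ha : 0 < a) : Integrable (pb c a) := by
  have := integrable_one_add_norm (E := ℝ) (μ := volume) (r := 1 + a) (by simp [ha])
  exact this.const_mul c

lemma pb_nonneg {c a : ℝ} (hc : 0 ≤ c) (y : ℝ) : 0 ≤ pb c a y := by unfold pb; positivity

lemma pb_even (c a y : ℝ) : pb c a (-y) = pb c a y := by unfold pb; rw [abs_neg]

lemma pb_le {c a α : ℝ} (hc : 0 ≤ c) (h0 : 0 < α) (hα : α ≤ a) {y : ℝ} (hy : 0 < y) : pb c a y ≤ c * y ^ (-1 - α) := by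
  unfold pb
  rw [abs_of_pos hy]
  refine mul_le_mul_of_nonneg_left ?_ hc
  calc (1 + y) ^ (-(1 + a)) ≤ (1 + y) ^ (-1 - α) := Real.rpow_le_rpow_of_exponent_le (by linarith) (by linarith)
    _ ≤ y ^ (-1 - α) := Real.rpow_le_rpow_of_nonpos hy (by linarith) (by linarith)

lemma kl_cont {α : ℝ} (h2 : α < 2) : ContinuousAt kl α := by
  unfold kl
  have hG := Real.Gamma_pos_of_pos (show 0 < 2 - α by linarith)
  have h1 : ContinuousAt (fun α : ℝ => Real.Gamma (2 - α)) α := by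
    have : ContinuousAt Real.Gamma (2 - α) := (Real.differentiableAt_Gamma fun m => by
      have : (0:ℝ) ≤ m := Nat.cast_nonneg m
      linarith).continuousAt
    exact ContinuousAt.comp (g := Real.Gamma) this (by fun_prop)
  exact ContinuousAt.div (by fun_prop) (continuousAt_const.mul h1) (by positivity)

lemma wkl_cont {θ : Fin 4 → ℝ} (hσ : 0 < θ 1) (h2 : θ 2 < 2) (e : ℝ) : 
    ContinuousAt (fun θ : Fin 4 → ℝ => θ 1 ^ θ 2 * (1 + e * θ 3) / 2 * kl (θ 2)) θ := by
  have h1 : ContinuousAt (fun θ : Fin 4 → ℝ => θ 1 ^ θ 2) θ := 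
    ContinuousAt.rpow (continuous_apply 1).continuousAt (continuous_apply 2).continuousAt (Or.inl hσ.ne')
  have h3 : ContinuousAt (fun θ : Fin 4 → ℝ => kl (θ 2)) θ := 
    ContinuousAt.comp (g := kl) (f := fun θ : Fin 4 → ℝ => θ 2) (kl_cont h2) (continuous_apply 2).continuousAt
  have h4 : ContinuousAt (fun θ : Fin 4 → ℝ => (1 + e * θ 3)) θ := continuousAt_const.add (continuousAt_const.mul (continuous_apply 3).continuousAt)
  exact ((h1.mul h4).div_const 2).mul h3

lemma dd_cont (θ : Fin 4 → ℝ) : Continuous (fun θ' => dd θ' θ) := by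
  unfold dd; fun_prop

lemma dd_self (θ : Fin 4 → ℝ) : dd θ θ = 0 := by simp [dd]

lemma AA_small {θ : Fin 4 → ℝ} (hθ : θ ∈ ThetaInt) {a c : ℝ} (hc : 0 ≤ c) (ha : θ 2 ≤ a)
    (hb : ∀ e : ℝ, (e = 1 ∨ e = -1) → c < θ 1 ^ θ 2 * (1 + e * θ 3) / 2 * kl (θ 2)) :
    AA fun t => phiM θ t * Complex.exp (-FT (pb c a) t) := by
  obtain ⟨hσ, ⟨h0, h2⟩, hβ1, hβ2⟩ := hθ
  have ha0 : 0 < a := by linarith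
  by_cases hne : θ 2 = 1
  · set T : ℕ → Fin 4 → ℝ := fun n => Function.update θ 2 (1 - 1 / ((n:ℝ) + 2)) with hT
    have hTl : Tendsto T atTop (nhds θ) := by
      have hf : Continuous fun s : ℝ => Function.update θ 2 s := continuous_const.update 2 continuous_id
      have e : θ = Function.update θ 2 (1 - 0 : ℝ) := by rw [sub_zero, ← hne, Function.update_eq_self]
      have h1 : Tendsto (fun n : ℕ => 1 - 1 / ((n:ℝ) + 2)) atTop (nhds (1 - 0)) := by
        refine tendsto_const_nhds.sub ?_
        have := (tendsto_one_div_add_atTop_nhds_zero_nat (𝕜 := ℝ)).comp (tendsto_add_atTop_nat 1)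
        refine this.congr fun n => ?_
        simp only [Function.comp_apply]; push_cast; congr 1; ring
      have h3 := (hf.tendsto (1 - 0)).comp h1
      rw [← e] at h3
      exact h3
    have T1 : ∀ n, T n 1 = θ 1 := fun n => by simp [hT]
    have T0 : ∀ n, T n 0 = θ 0 := fun n => by simp [hT]
    have T3 : ∀ n, T n 3 = θ 3 := fun n => by simp [hT]
    have T2 : ∀ n, T n 2 = 1 - 1 / ((n:ℝ) + 2) := fun n => by simp [hT]
    have Tp : ∀ n : ℕ, 0 < 1 / ((n:ℝ) + 2) ∧ 1 / ((n:ℝ) + 2) ≤ 1 / 2 := fun n => by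
      constructor
      · positivity
      · apply one_div_le_one_div_of_le (by norm_num)
        have : (0:ℝ) ≤ n := Nat.cast_nonneg n
        linarith
    have PT : ∀ n, PB |θ 0| |Real.log (θ 1)| (1/2) 1 (T n) := fun n => by
      obtain ⟨p1, p2⟩ := Tp n
      refine ⟨by rw [T0], by rw [T1]; exact hσ, by rw [T1], by rw [T2]; linarith, by rw [T2]; linarith, ?_⟩
      rw [T3, abs_le]; constructor <;> linarith
    have Pθ : PB |θ 0| |Real.log (θ 1)| (1/2) 1 θ := by
      refine ⟨le_rfl, hσ, le_rfl, by rw [hne]; norm_num, hne.le, ?_⟩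
      rw [abs_le]; constructor <;> linarith
    have ev : ∀ᶠ n in atTop, c < T n 1 ^ T n 2 * (1 + 1 * T n 3) / 2 * kl (T n 2) ∧ c < T n 1 ^ T n 2 * (1 + (-1) * T n 3) / 2 * kl (T n 2) := by
      refine Eventually.and ?_ ?_
      · exact ((wkl_cont hσ h2 1).tendsto.comp hTl).eventually_const_lt (hb 1 (Or.inl rfl))
      · exact ((wkl_cont hσ h2 (-1)).tendsto.comp hTl).eventually_const_lt (hb (-1) (Or.inr rfl))
    obtain ⟨N, hN⟩ := eventually_atTop.1 ev
    obtain ⟨g, -, -, -, hg⟩ := phiM_bds (M := |θ 0|) (Λ := |Real.log (θ 1)|) (a1 := 1/2) (a2 := 1) (abs_nonneg _) (abs_nonneg _) (by norm_num) (by norm_num) (by norm_num)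
    refine AA_lim (f := fun n t => phiM (T (n + N)) t * Complex.exp (-FT (pb c a) t)) ?_ ?_
    · intro n
      obtain ⟨b1, b2⟩ := hN (n + N) (by omega)
      obtain ⟨p1, p2⟩ := Tp (n + N)
      have q2 := T2 (n + N)
      refine AA_small1 (PT _).sg (by linarith) (by linarith) (by linarith) hc (pb_cont c a).measurable (pb_int ha0) (pb_nonneg hc) (pb_even c a) 
        (fun y hy => pb_le hc (by linarith) (by linarith) hy) ?_ ?_
      · rw [one_mul] at b1; exact b1.le
      · rw [neg_one_mul, ← sub_eq_add_neg] at b2; exact b2.le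
    · intro t
      refine Tendsto.mul_const _ ?_
      have hT' : Tendsto (fun n => T (n + N)) atTop (nhds θ) := hTl.comp (tendsto_add_atTop_nat N)
      have hz : Tendsto (fun n => dd (T (n + N)) θ * g t) atTop (nhds 0) := by
        have := ((dd_cont θ).tendsto θ).comp hT'
        rw [dd_self] at this
        simpa using this.mul_const (g t)
      rw [tendsto_iff_norm_sub_tendsto_zero]
      exact squeeze_zero (fun n => norm_nonneg _) (fun n => hg _ (PT _) _ Pθ t) hz
  · refine AA_small1 hσ h0 h2 hne hc (pb_cont c a).measurable (pb_int ha0) (pb_nonneg hc) (pb_even c a) 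
        (fun y hy => pb_le hc h0 ha hy) ?_ ?_
    · have := hb 1 (Or.inl rfl)
      rw [one_mul] at this; exact this.le
    · have := hb (-1) (Or.inr rfl)
      rw [neg_one_mul, ← sub_eq_add_neg] at this; exact this.le

/-- Fourier kernel transform -/
def RT (k : ℝ → ℂ) (x : ℝ) : ℝ := (∫ t : ℝ, Complex.exp (-Complex.I * (t : ℂ) * (x : ℂ)) * k t).re

lemma RT_cont0 {k : ℝ → ℂ} (hk : Integrable k) : Continuous fun x : ℝ => ∫ t : ℝ, Complex.exp (-Complex.I * (t : ℂ) * (x : ℂ)) * k t := by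
  refine continuous_of_dominated (bound := fun t => ‖k t‖) (fun x => (kern_int hk x).aestronglyMeasurable) ?_ hk.norm ?_
  · intro x; refine Eventually.of_forall fun t => ?_
    rw [norm_mul, norm_kern, one_mul]
  · refine Eventually.of_forall fun t => ?_
    fun_prop

lemma RT_cont {k : ℝ → ℂ} (hk : Integrable k) : Continuous (RT k) := Complex.continuous_re.comp (RT_cont0 hk)

lemma kern_norm_le {k : ℝ → ℂ} (x : ℝ) : ‖∫ t : ℝ, Complex.exp (-Complex.I * (t : ℂ) * (x : ℂ)) * k t‖ ≤ ∫ t, ‖k t‖ := by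
  refine (norm_integral_le_integral_norm _).trans (le_of_eq ?_)
  congr 1; funext t; rw [norm_mul, norm_kern, one_mul]

lemma RT_diff {k k' : ℝ → ℂ} (hk : Integrable k) (hk' : Integrable k') (x : ℝ) : |RT k x - RT k' x| ≤ ∫ t, ‖k t - k' t‖ := by
  unfold RT
  rw [← Complex.sub_re, ← integral_sub (kern_int hk x) (kern_int hk' x)]
  refine (Complex.abs_re_le_norm _).trans ?_
  simp_rw [← mul_sub]
  exact kern_norm_le x

lemma KK_pos {k : ℝ → ℂ} (hk : KK k) (hc : Continuous k) (hs : ∀ t, k (-t) = (starRingEnd ℂ) (k t)) (h0 : k 0 ≠ 0) :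
    ∃ y, 0 < RT k y := by
  by_contra hcon
  push Not at hcon
  have hz : ∀ x : ℝ, ∫ t : ℝ, Complex.exp (-Complex.I * (t : ℂ) * (x : ℂ)) * k t = 0 := by
    intro x
    apply Complex.ext
    · exact le_antisymm (hcon x) (hk.2 x)
    · have : (starRingEnd ℂ) (∫ t : ℝ, Complex.exp (-Complex.I * (t : ℂ) * (x : ℂ)) * k t) = ∫ t : ℝ, Complex.exp (-Complex.I * (t : ℂ) * (x : ℂ)) * k t := by
        rw [← integral_conj, ← integral_neg_eq_self]
        congr 1; funext t
        rw [map_mul, hs, Complex.conj_conj, ← Complex.exp_conj]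
        congr 2
        simp only [map_mul, map_neg, Complex.conj_I, Complex.conj_ofReal]
        push_cast; ring
      have := congrArg Complex.im this
      rw [Complex.conj_im] at this
      simp only [Complex.zero_im]; linarith
  have hF : FourierTransform.fourier k = fun _ : ℝ => (0:ℂ) := by
    funext w
    rw [Real.fourier_eq']
    rw [← hz (2 * Real.pi * w)]
    congr 1; funext t
    rw [smul_eq_mul]
    congr 2
    simp only [RCLike.inner_apply, conj_trivial]
    push_cast; ring
  have := hc.fourierInv_fourier_eq hk.1 (by rw [hF]; exact integrable_zero _ _ _)
  rw [hF] at this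
  have h1 := congrFun this 0
  rw [Real.fourierInv_eq'] at h1
  simp at h1
  exact h0 h1.symm
end

noncomputable section
open MeasureTheory Filter Set

def ks (c a : ℝ) (θ : Fin 4 → ℝ) (t : ℝ) : ℂ := phiM θ t * Complex.exp (-FT (pb c a) t)

lemma eFT_bd {c a : ℝ} (t : ℝ) : ‖Complex.exp (-FT (pb c a) t)‖ ≤ Real.exp (∫ y, |pb c a y|) := by
  rw [Complex.norm_exp]
  apply Real.exp_le_exp.2
  refine (Complex.re_le_norm _).trans ?_
  rw [norm_neg]
  exact FT_norm t

lemma ks_cont {c a : ℝ} (ha : 0 < a) {θ : Fin 4 → ℝ} (hc : Continuous (phiM θ)) : Continuous (ks c a θ) := 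
  hc.mul (Complex.continuous_exp.comp (FT_cont (pb_int ha)).neg)

lemma ks_int {c a : ℝ} (ha : 0 < a) {θ : Fin 4 → ℝ} (hi : Integrable (phiM θ)) : Integrable (ks c a θ) :=
  hi.mul_bdd (c := Real.exp (∫ y, |pb c a y|)) (Complex.continuous_exp.comp (FT_cont (pb_int ha)).neg).aestronglyMeasurable
    (Eventually.of_forall fun t => eFT_bd t)

lemma FT_neg {p : ℝ → ℝ} (t : ℝ) : FT p (-t) = (starRingEnd ℂ) (FT p t) := by
  unfold FT
  rw [← integral_conj]
  congr 1; funext y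
  rw [map_mul, Complex.conj_ofReal, ← Complex.exp_conj]
  congr 2
  simp only [map_mul, Complex.conj_I, Complex.conj_ofReal]
  push_cast; ring

lemma ks_herm {c a : ℝ} {θ : Fin 4 → ℝ} (t : ℝ) : ks c a θ (-t) = (starRingEnd ℂ) (ks c a θ t) := by
  unfold ks
  rw [map_mul, phiM_neg, FT_neg, ← Complex.exp_conj, map_neg]

lemma RT_conv_int {c a : ℝ} (ha : 0 < a) {k : ℝ → ℂ} (hk : Integrable k) (x : ℝ) :
    Integrable fun y : ℝ => (pb c a y : ℂ) * ∫ t : ℝ, Complex.exp (-Complex.I * (t : ℂ) * ((x - y : ℝ) : ℂ)) * k t := by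
  refine (pb_int ha).ofReal.mul_bdd (c := ∫ t, ‖k t‖) ?_ (Eventually.of_forall fun y => kern_norm_le _)
  exact ((RT_cont0 hk).comp (continuous_const.sub continuous_id)).aestronglyMeasurable

lemma lower1 {c a : ℝ} (hc : 0 ≤ c) (ha : 0 < a) {θ : Fin 4 → ℝ} (hi : Integrable (phiM θ)) 
    (hA : AA (ks c a θ)) (x : ℝ) : 
    (Integrable fun y => pb c a y * RT (ks c a θ) (x - y)) ∧ ∫ y, pb c a y * RT (ks c a θ) (x - y) ≤ RT (phiM θ) x := by
  have hki := ks_int (c := c) ha hi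
  have hK : KK (ks c a θ) := KK_of_AA hA hki
  have h1 := (AA_cexp_sub (AA_FT (pb_int (c := c) ha) (pb_nonneg hc))).2.2.2 _ hK
  have e : (fun t => (Complex.exp (FT (pb c a) t) - FT (pb c a) t) * ks c a θ t) = fun t => phiM θ t - FT (pb c a) t * ks c a θ t := by
    funext t
    have : Complex.exp (FT (pb c a) t) * Complex.exp (-FT (pb c a) t) = 1 := by rw [← Complex.exp_add]; simp
    unfold ks
    linear_combination phiM θ t * this
  rw [e] at h1
  have hi2 : Integrable fun t => FT (pb c a) t * ks c a θ t := by
    have := hi.sub h1.1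
    refine this.congr (Eventually.of_forall fun t => ?_)
    simp
  have h2 := h1.2 x
  simp_rw [mul_sub] at h2
  rw [integral_sub (kern_int hi x) (kern_int hi2 x), Complex.sub_re, FT_conv (pb_int ha) hki] at h2
  have hci := RT_conv_int (c := c) ha hki x
  have e2 : ∀ y : ℝ, ((pb c a y : ℂ) * ∫ t : ℝ, Complex.exp (-Complex.I * (t : ℂ) * ((x - y : ℝ) : ℂ)) * ks c a θ t).re = pb c a y * RT (ks c a θ) (x - y) := by
    intro y
    rw [Complex.re_ofReal_mul]; rfl
  have e3 : (∫ y : ℝ, (pb c a y : ℂ) * ∫ t : ℝ, Complex.exp (-Complex.I * (t : ℂ) * ((x - y : ℝ) : ℂ)) * ks c a θ t).re = ∫ y, pb c a y * RT (ks c a θ) (x - y) := by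
    rw [← Complex.reCLM_apply, ← Complex.reCLM.integral_comp_comm hci]
    congr 1; funext y; exact e2 y
  constructor
  · have := Complex.reCLM.integrable_comp hci
    exact this.congr (Eventually.of_forall fun y => e2 y)
  · rw [e3] at h2
    unfold RT at h2 ⊢
    linarith

lemma lower2 {c a δ r y0 : ℝ} (hc : 0 ≤ c) (ha : 0 < a) (hr : 0 ≤ r) (hδ : 0 ≤ δ) {K : ℝ → ℝ} (hK : ∀ x, 0 ≤ K x) (hKδ : ∀ y, |y - y0| ≤ r → δ ≤ K y) (x : ℝ)
    (hi : Integrable fun y => pb c a y * K (x - y)) : 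
    (c * (1 + |y0| + r) ^ (-(1 + a)) * δ * (2 * r)) * (1 + |x|) ^ (-(1 + a)) ≤ ∫ y, pb c a y * K (x - y) := by
  have h1 : ∫ y in Icc (x - y0 - r) (x - y0 + r), pb c a y * K (x - y) ≤ ∫ y, pb c a y * K (x - y) :=
    setIntegral_le_integral hi (Eventually.of_forall fun y => mul_nonneg (pb_nonneg hc y) (hK _))
  refine le_trans ?_ h1
  have h2 : ∫ y in Icc (x - y0 - r) (x - y0 + r), (c * ((1 + |y0| + r) ^ (-(1 + a)) * (1 + |x|) ^ (-(1 + a)))) * δ ≤ ∫ y in Icc (x - y0 - r) (x - y0 + r), pb c a y * K (x - y) := by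
    refine setIntegral_mono_on (integrableOn_const (by simp)) hi.integrableOn measurableSet_Icc ?_
    intro y hy
    refine mul_le_mul ?_ (hKδ _ ?_) hδ (pb_nonneg hc y)
    · unfold pb
      refine mul_le_mul_of_nonneg_left ?_ hc
      rw [← Real.mul_rpow (by positivity) (by positivity)]
      refine Real.rpow_le_rpow_of_nonpos (by positivity) ?_ (by linarith)
      have : |y| ≤ |x| + |y0| + r := by
        have := hy.1
        have := hy.2
        rw [abs_le]
        constructor <;> linarith [neg_abs_le x, le_abs_self x, neg_abs_le y0, le_abs_self y0]
      nlinarith [abs_nonneg x, abs_nonneg y0, mul_nonneg (abs_nonneg x) (abs_nonneg y0), mul_nonneg (abs_nonneg x) hr]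
    · rw [abs_le]; constructor <;> linarith [hy.1, hy.2]
  refine le_trans (le_of_eq ?_) h2
  rw [setIntegral_const]
  simp only [Measure.real, Real.volume_Icc, smul_eq_mul]
  rw [ENNReal.toReal_ofReal (by linarith)]
  ring

lemma ThetaInt_open : IsOpen ThetaInt := by
  have h1 : IsOpen {θ : Fin 4 → ℝ | 0 < θ 1} := isOpen_lt continuous_const (continuous_apply 1)
  have h2 : IsOpen {θ : Fin 4 → ℝ | θ 2 ∈ Ioo (0:ℝ) 2} := isOpen_Ioo.preimage (continuous_apply 2)
  have h3 : IsOpen {θ : Fin 4 → ℝ | θ 3 ∈ Ioo (-1:ℝ) 1} := isOpen_Ioo.preimage (continuous_apply 3)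
  exact h1.inter (h2.inter h3)

lemma PB_ev {θ0 : Fin 4 → ℝ} (h : θ0 ∈ ThetaInt) {a1 a2 : ℝ} (h1 : a1 < θ0 2) (h2 : θ0 2 < a2) :
    ∀ᶠ θ in nhds θ0, PB (|θ0 0| + 1) (|Real.log (θ0 1)| + 1) a1 a2 θ := by
  have c0 : ContinuousAt (fun θ : Fin 4 → ℝ => |θ 0|) θ0 := (continuous_apply 0).abs.continuousAt
  have c1 : ContinuousAt (fun θ : Fin 4 → ℝ => |Real.log (θ 1)|) θ0 := 
    (ContinuousAt.log (f := fun θ : Fin 4 → ℝ => θ 1) (continuous_apply 1).continuousAt h.1.ne').abs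
  have c2 : ContinuousAt (fun θ : Fin 4 → ℝ => θ 2) θ0 := (continuous_apply 2).continuousAt
  filter_upwards [ThetaInt_open.mem_nhds h, c0.tendsto.eventually_lt_const (lt_add_one _), c1.tendsto.eventually_lt_const (lt_add_one _), 
    c2.tendsto.eventually_lt_const h2, c2.tendsto.eventually_const_lt h1] with θ k1 k2 k3 k4 k5
  refine ⟨k2.le, k1.1, k3.le, k5.le, k4.le, ?_⟩
  rw [abs_le]; constructor <;> linarith [k1.2.2.1, k1.2.2.2]

lemma lower {θ0 : Fin 4 → ℝ} (hθ0 : θ0 ∈ ThetaInt) {a : ℝ} (ha : θ0 2 < a) (ha2 : a ≤ 2) :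
    ∃ m : ℝ, 0 < m ∧ ∀ᶠ θ in nhds θ0, ∀ x, m * (1 + |x|) ^ (-(1 + a)) ≤ fM θ x := by
  obtain ⟨hσ, ⟨h0, h2⟩, hβ1, hβ2⟩ := id hθ0
  have ha0 : 0 < a := by linarith
  set W : ℝ → (Fin 4 → ℝ) → ℝ := fun e θ => θ 1 ^ θ 2 * (1 + e * θ 3) / 2 * kl (θ 2) with hW
  have hk := kl_pos h0 h2
  have hs : 0 < θ0 1 ^ θ0 2 := Real.rpow_pos_of_pos hσ _
  have W1 : 0 < W 1 θ0 := by
    have : 0 < 1 + 1 * θ0 3 := by linarith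
    simp only [hW]; positivity
  have W2 : 0 < W (-1) θ0 := by
    have : 0 < 1 + (-1) * θ0 3 := by linarith
    simp only [hW]; positivity
  set c := min (W 1 θ0) (W (-1) θ0) / 2 with hc
  have hc0 : 0 < c := by simp only [hc]; positivity
  have hc1 : c < W 1 θ0 := by have := min_le_left (W 1 θ0) (W (-1) θ0); linarith
  have hc2 : c < W (-1) θ0 := by have := min_le_right (W 1 θ0) (W (-1) θ0); linarith
  set M := |θ0 0| + 1 with hM
  set Λ := |Real.log (θ0 1)| + 1 with hΛ
  set a1 := θ0 2 / 2 with ha1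
  have M0 : 0 ≤ M := by positivity
  have Λ0 : 0 ≤ Λ := by positivity
  have evA := PB_ev hθ0 (a1 := a1) (a2 := a) (by linarith) ha
  have P0 := evA.self_of_nhds
  have a10 : 0 < a1 := by linarith
  have a12 : a1 ≤ 2 := by linarith
  obtain ⟨g, gi, g0, -, hg⟩ := phiM_bds (M := M) (Λ := Λ) (a1 := a1) (a2 := a) M0 Λ0 a10 a12 ha2
  have hAA : ∀ θ ∈ ThetaInt, θ 2 ≤ a → c < W 1 θ → c < W (-1) θ → AA (ks c a θ) := by
    intro θ h1 h2 h3 h4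
    refine AA_small h1 hc0.le h2 ?_
    rintro e (rfl | rfl)
    · exact h3
    · exact h4
  have i0 := phiM_int M0 Λ0 a10 a12 ha2 P0
  have K0 : KK (ks c a θ0) := KK_of_AA (hAA θ0 hθ0 ha.le hc1 hc2) (ks_int ha0 i0)
  obtain ⟨y0, hy0⟩ := KK_pos K0 (ks_cont ha0 (phiM_cont M0 Λ0 a10 ha2 P0)) ks_herm (by unfold ks phiM; exact mul_ne_zero (Complex.exp_ne_zero _) (Complex.exp_ne_zero _))
  set δ := RT (ks c a θ0) y0 / 3 with hδ
  have hδ0 : 0 < δ := by positivity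
  have hcont := (RT_cont K0.1).tendsto y0
  have hev := hcont.eventually_const_lt (show 2 * δ < RT (ks c a θ0) y0 by linarith)
  obtain ⟨r, hr, hball⟩ := Metric.eventually_nhds_iff.1 hev
  set E := Real.exp (∫ y, |pb c a y|) with hE
  have hE0 : 0 < E := Real.exp_pos _
  refine ⟨(1 / (2 * Real.pi)) * (c * (1 + |y0| + r / 2) ^ (-(1 + a)) * δ * (2 * (r / 2))), by positivity, ?_⟩
  have evd : ∀ᶠ θ in nhds θ0, dd θ θ0 * (E * ∫ t, g t) < δ := by
    have := ((dd_cont θ0).tendsto θ0).mul_const (E * ∫ t, g t)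
    rw [dd_self, zero_mul] at this
    exact this.eventually_lt_const hδ0
  filter_upwards [evA, ThetaInt_open.mem_nhds hθ0, evd, (wkl_cont hσ h2 1).tendsto.eventually_const_lt hc1,
    (wkl_cont hσ h2 (-1)).tendsto.eventually_const_lt hc2] with θ k1 k2 k3 k4 k5 x
  have iθ := phiM_int M0 Λ0 a10 a12 ha2 k1
  have Aθ := hAA θ k2 k1.au k4 k5
  have kiθ := ks_int (c := c) ha0 iθ
  have hdiff : ∀ y, |RT (ks c a θ) y - RT (ks c a θ0) y| < δ := by
    intro y
    refine (RT_diff kiθ K0.1 y).trans_lt (lt_of_le_of_lt ?_ k3)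
    rw [← integral_const_mul, ← integral_const_mul]
    refine integral_mono (kiθ.sub K0.1).norm ((gi.const_mul E).const_mul _) fun t => ?_
    simp only [ks]
    rw [← sub_mul, norm_mul]
    calc _ ≤ (dd θ θ0 * g t) * E := mul_le_mul (hg θ k1 θ0 P0 t) (eFT_bd t) (norm_nonneg _) (mul_nonneg (dd_nonneg _ _) (g0 t))
      _ = _ := by ring
  obtain ⟨li, ll⟩ := lower1 hc0.le ha0 iθ Aθ x
  have l2 := lower2 (δ := δ) (r := r / 2) (y0 := y0) hc0.le ha0 (by linarith) hδ0.le (fun x => (KK_of_AA Aθ kiθ).2 x) (fun y hy => by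
    have q1 := hball (y := y) (by rw [Real.dist_eq]; linarith)
    have q2 := abs_lt.1 (hdiff y)
    show δ ≤ RT (ks c a θ) y
    linarith [q2.1]) x li
  show _ ≤ (1 / (2 * Real.pi)) * RT (phiM θ) x
  rw [mul_assoc]
  refine mul_le_mul_of_nonneg_left (l2.trans ll) (by positivity)
end

noncomputable section
open MeasureTheory Filter Set

lemma log_diff {u v L : ℝ} (hL : 0 < L) (hu : L ≤ u) (hv : L ≤ v) : |Real.log u - Real.log v| ≤ |u - v| / L := by
  have key : ∀ u v : ℝ, L ≤ u → L ≤ v → Real.log u - Real.log v ≤ |u - v| / L := by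
    intro u v hu hv
    have hu0 : 0 < u := by linarith
    have hv0 : 0 < v := by linarith
    rw [← Real.log_div hu0.ne' hv0.ne']
    have := Real.log_le_sub_one_of_pos (div_pos hu0 hv0)
    calc _ ≤ u / v - 1 := this
      _ = (u - v) / v := by field_simp
      _ ≤ |u - v| / v := by gcongr; exact le_abs_self _
      _ ≤ |u - v| / L := by gcongr
  rw [abs_le]
  constructor
  · have := key v u hv hu; rw [abs_sub_comm] at this; linarith
  · exact key u v hu hv

lemma main_aux (θ0 : Fin 4 → ℝ) (hθ0 : θ0 ∈ ThetaInt) :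
    ∃ U : Set (Fin 4 → ℝ), U ⊆ ThetaInt ∧ U ∈ nhds θ0 ∧
      ∃ η : ℝ → ℝ, Measurable η ∧ (∀ x, 0 ≤ η x) ∧
        MeasureTheory.Integrable (fun x : ℝ => η x ^ 2 * fM θ0 x) ∧
        ∀ θ' ∈ U, ∀ θ'' ∈ U, ∀ x : ℝ,
          |Real.log (fM θ' x) - Real.log (fM θ'' x)| ≤
            η x * Real.sqrt (∑ i : Fin 4, (θ' i - θ'' i) ^ 2) := by
  obtain ⟨hσ, ⟨h0, h2⟩, hβ1, hβ2⟩ := id hθ0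
  obtain ⟨a, ha, hal, ha2⟩ : ∃ a : ℝ, θ0 2 < a ∧ a < 1.2 * θ0 2 ∧ a < 2 := by
    refine ⟨min (1.1 * θ0 2) (1 + θ0 2 / 2), lt_min (by linarith) (by linarith), ?_, ?_⟩
    · exact (min_le_left _ _).trans_lt (by linarith)
    · exact (min_le_right _ _).trans_lt (by linarith)
  set γ := 0.8 * θ0 2 with hγ
  set a1 := 0.9 * θ0 2 with ha1
  have M0 : 0 ≤ |θ0 0| + 1 := by positivity
  have Λ0 : 0 ≤ |Real.log (θ0 1)| + 1 := by positivity
  obtain ⟨C, hC, b1, b2⟩ := fM_bds (M := |θ0 0| + 1) (Λ := |Real.log (θ0 1)| + 1) (a1 := a1) (a2 := a) (γ := γ) M0 Λ0 ha2 (by linarith) (by linarith) (by linarith)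
  obtain ⟨m, hm, evm⟩ := lower hθ0 ha ha2.le
  have evP := PB_ev hθ0 (a1 := a1) (a2 := a) (by linarith) ha
  have P0 := evP.self_of_nhds
  have hpos : ∀ x : ℝ, 0 < 1 + |x| := fun x => by positivity
  have hηc : Continuous fun x : ℝ => C / m * (1 + |x|) ^ (a - γ) :=
    continuous_const.mul (Continuous.rpow_const (by fun_prop) fun y => Or.inl (hpos y).ne')
  refine ⟨{θ | θ ∈ ThetaInt ∧ PB (|θ0 0| + 1) (|Real.log (θ0 1)| + 1) a1 a θ ∧ ∀ x, m * (1 + |x|) ^ (-(1 + a)) ≤ fM θ x}, fun θ h => h.1, 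
    (ThetaInt_open.eventually_mem hθ0).and (evP.and evm), fun x => C / m * (1 + |x|) ^ (a - γ), hηc.measurable, fun x => by positivity, ?_, ?_⟩
  · have fc : Continuous (fM θ0) := continuous_const.mul (RT_cont (phiM_int M0 Λ0 (by linarith) (by linarith) ha2.le P0))
    refine (pb_int (c := (C / m) ^ 2 * C) (a := 3 * γ - 2 * a) (by linarith)).mono' ((hηc.pow 2).mul fc).aestronglyMeasurable ?_
    refine Eventually.of_forall fun x => ?_
    rw [Real.norm_eq_abs, abs_mul, abs_of_nonneg (by positivity)]
    calc _ ≤ (C / m * (1 + |x|) ^ (a - γ)) ^ 2 * (C * (1 + |x|) ^ (-(1 + γ))) := by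
          gcongr
          exact b1 θ0 P0 x
      _ = (C / m) ^ 2 * C * (((1 + |x|) ^ (a - γ) * (1 + |x|) ^ (a - γ)) * (1 + |x|) ^ (-(1 + γ))) := by ring
      _ = _ := by
          unfold pb
          rw [← Real.rpow_add (hpos x), ← Real.rpow_add (hpos x)]
          congr 2; ring
  · rintro θ' ⟨-, p', l'⟩ θ'' ⟨-, p'', l''⟩ x
    have hL : 0 < m * (1 + |x|) ^ (-(1 + a)) := mul_pos hm (Real.rpow_pos_of_pos (hpos x) _)
    refine (log_diff hL (l' x) (l'' x)).trans ?_
    rw [div_le_iff₀ hL]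
    refine (b2 θ' p' θ'' p'' x).trans (le_of_eq ?_)
    show C * dd θ' θ'' * _ = C / m * (1 + |x|) ^ (a - γ) * dd θ' θ'' * (m * (1 + |x|) ^ (-(1 + a)))
    have e : (1 + |x|) ^ (-(1 + γ)) = (1 + |x|) ^ (a - γ) * (1 + |x|) ^ (-(1 + a)) := by
      rw [← Real.rpow_add (hpos x)]; congr 1; ring
    rw [e]
    field_simp
end

/-- Local Lipschitz property of the log-density with square-integrable
envelope: around any `θ0 ∈ Θ_M°` there are a neighborhood `U ⊆ Θ_M°` and a measurable
`η̇ ≥ 0` with `∫ η̇² f(·;θ0) < ∞` such that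
`|log f(x;θ') − log f(x;θ'')| ≤ η̇(x) ‖θ' − θ''‖` (Euclidean norm) for `θ', θ'' ∈ U`. -/
theorem log_density_locally_lipschitz (θ0 : Fin 4 → ℝ) (hθ0 : θ0 ∈ ThetaInt) :
    ∃ U : Set (Fin 4 → ℝ), U ⊆ ThetaInt ∧ U ∈ nhds θ0 ∧
      ∃ η : ℝ → ℝ, Measurable η ∧ (∀ x, 0 ≤ η x) ∧
        MeasureTheory.Integrable (fun x : ℝ => η x ^ 2 * fM θ0 x) ∧
        ∀ θ' ∈ U, ∀ θ'' ∈ U, ∀ x : ℝ,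
          |Real.log (fM θ' x) - Real.log (fM θ'' x)| ≤
            η x * Real.sqrt (∑ i : Fin 4, (θ' i - θ'' i) ^ 2) :=
  main_aux θ0 hθ0
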